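/- Let d ∈ {1,2}, s ≥ 0 and μ ∈ (0,1]. There is a constant C = C(s,d), independent of μ, such that for all Schwartz functions f, g on ℝ^d, the commutator [J^s T_μ^{−1/2}(D), f] g = J^s T_μ^{−1/2}(D)(f g) − f · (J^s T_μ^{−1/2}(D) g) satisfies ‖[J^s T_μ^{−1/2}(D), f] g‖_{L^2} ≤ C ( ‖∇f‖_{L^∞} ‖J^{s−1} J_μ^{1/2} g‖_{L^2} + ‖J^s J_μ^{1/2} f‖_{L^2} ‖g‖_{L^∞} ). -/

import Mathlib

noncomputable section

open MeasureTheory SchwartzMap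
open scoped FourierTransform ENNReal

/-- The Japanese bracket `⟨x⟩ = (1 + x²)^{1/2}`. -/
def jap (x : ℝ) : ℝ := (1 + x ^ 2) ^ ((1 : ℝ) / 2)

/-- The radial symbol `T_μ(ξ) = tanh(√μ |ξ|)/(√μ |ξ|)` for `ξ ≠ 0`, with value `1` at `0`,
expressed through `r = |ξ|`. -/
def Tsymb (μ r : ℝ) : ℝ :=
  if r = 0 then 1 else Real.tanh (Real.sqrt μ * r) / (Real.sqrt μ * r)

/-- Generic Fourier multiplier `a(D) g = (a(ξ) ĝ(ξ))^∨` with real symbol `a` on `ℝ^d`. -/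
def fmulD (d : ℕ) (a : EuclideanSpace ℝ (Fin d) → ℝ) (g : EuclideanSpace ℝ (Fin d) → ℂ) :
    EuclideanSpace ℝ (Fin d) → ℂ :=
  𝓕⁻ (fun ξ => ((a ξ : ℝ) : ℂ) * 𝓕 g ξ)

/-- The operator `J^s T_μ^{−1/2}(D)`, with symbol `⟨ξ⟩^s T_μ(ξ)^{−1/2}`. -/
def JTinv (d : ℕ) (μ s : ℝ) (g : EuclideanSpace ℝ (Fin d) → ℂ) :
    EuclideanSpace ℝ (Fin d) → ℂ :=
  fmulD d (fun ξ => jap ‖ξ‖ ^ s * Tsymb μ ‖ξ‖ ^ (-(1 : ℝ) / 2)) g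

/-- The operator `J^a J_μ^b`, with symbol `⟨ξ⟩^a ⟨√μ ξ⟩^b`. -/
def JJmu (d : ℕ) (μ a b : ℝ) (g : EuclideanSpace ℝ (Fin d) → ℂ) :
    EuclideanSpace ℝ (Fin d) → ℂ :=
  fmulD d (fun ξ => jap ‖ξ‖ ^ a * jap (Real.sqrt μ * ‖ξ‖) ^ b) g

/-!
On the annulus `|ξ| ∼ 2ʲ` the symbol `w = ⟨ξ⟩^s T_μ^{-1/2}` has size `W_j = 2^{js} ⟨√μ 2ʲ⟩^{1/2}`,
and its rescaled Littlewood–Paley pieces form a compact family of Schwartz functions, with parameter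
`√μ 2ʲ` or its inverse, whichever is at most `1`. Hence the kernels of the pieces have mass `≲ W_j`
and first moment `≲ 2⁻ʲ W_j`, uniformly in `μ`.

When `f` has lower frequency than `g`, the first moment gains the factor `2⁻ʲ W_j ‖∇f‖_∞`, and the
pieces of the commutator are almost orthogonal. When `f` has the higher frequency, no cancellation
is needed: the geometric growth of `W_j` handles everything but the diagonal terms, which are
paraproducts. These are bounded in terms of `‖g‖_∞` by duality with a Carleson estimate, which
follows, without maximal functions or `BMO`, by telescoping an energy of Gaussian averages.

For `s = 0` and small `√μ 2ʲ` the weights `W_j` do not grow, so `w` is replaced by `w - 1`, which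
has the same commutators.
-/

namespace KatoPonce

section Multipliers

variable {V : Type*} [NormedAddCommGroup V] [InnerProductSpace ℝ V]

/-- The pointwise product of Schwartz functions, as a bilinear map. -/
def pmul : 𝓢(V, ℂ) →ₗ[ℂ] 𝓢(V, ℂ) →ₗ[ℂ] 𝓢(V, ℂ) :=
  LinearMap.mk₂ ℂ (fun f g => pairing (ContinuousLinearMap.mul ℂ ℂ) f g)
    (by simp) (by simp) (by simp) (by simp)

@[simp]
lemma pmul_apply (f g : 𝓢(V, ℂ)) (x : V) : pmul f g x = f x * g x := rfl

lemma pmul_comm (f g : 𝓢(V, ℂ)) : pmul f g = pmul g f := by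
  ext x
  exact mul_comm _ _

variable [FiniteDimensional ℝ V] [MeasurableSpace V] [BorelSpace V]

/-- The Fourier multiplier `a(D) f = 𝓕⁻¹ (a 𝓕 f)` with a Schwartz symbol `a`, bilinear in the
symbol and the function (Mathlib's `fourierMultiplierCLM` is only linear in the latter). -/
def multiplier : 𝓢(V, ℂ) →ₗ[ℂ] 𝓢(V, ℂ) →ₗ[ℂ] 𝓢(V, ℂ) :=
  (pmul.compl₁₂ LinearMap.id (FourierTransform.fourierEquiv ℂ 𝓢(V, ℂ)).toLinearMap).compr₂
    (FourierTransform.fourierEquiv ℂ 𝓢(V, ℂ)).symm.toLinearMap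

lemma multiplier_eq (a f : 𝓢(V, ℂ)) : multiplier a f = 𝓕⁻ (pmul a (𝓕 f)) := rfl

lemma fourier_multiplier (a f : 𝓢(V, ℂ)) : 𝓕 (multiplier a f) = pmul a (𝓕 f) :=
  FourierTransform.fourier_fourierInv_eq _

lemma fourier_multiplier_apply (a f : 𝓢(V, ℂ)) (ξ : V) :
    𝓕 (multiplier a f) ξ = a ξ * 𝓕 f ξ := by
  rw [fourier_multiplier, pmul_apply]

lemma fourier_sub (f g : 𝓢(V, ℂ)) : 𝓕 (f - g) = 𝓕 f - 𝓕 g :=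
  map_sub (FourierTransform.fourierEquiv ℂ 𝓢(V, ℂ)) f g

lemma ext_fourier {f g : 𝓢(V, ℂ)} (h : ∀ ξ, 𝓕 f ξ = 𝓕 g ξ) : f = g :=
  (FourierTransform.fourierEquiv ℂ 𝓢(V, ℂ)).injective (SchwartzMap.ext h)

lemma multiplier_multiplier (a b f : 𝓢(V, ℂ)) :
    multiplier a (multiplier b f) = multiplier (pmul a b) f := by
  refine ext_fourier fun ξ => ?_
  simp only [fourier_multiplier_apply, pmul_apply, mul_assoc]

lemma coe_multiplier (a f : 𝓢(V, ℂ)) : ⇑(multiplier a f) = 𝓕⁻ (fun ξ => a ξ * 𝓕 f ξ) := by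
  rw [multiplier_eq, fourierInv_coe]
  rfl

/-- The convolution kernel of the multiplier with symbol `a`. -/
def kernel (a : 𝓢(V, ℂ)) : 𝓢(V, ℂ) := 𝓕⁻ a

lemma fourier_kernel (a : 𝓢(V, ℂ)) : 𝓕 (kernel a) = a :=
  FourierTransform.fourier_fourierInv_eq a

lemma kernel_add (a b : 𝓢(V, ℂ)) : kernel (a + b) = kernel a + kernel b :=
  FourierTransform.fourierInv_add a b

lemma kernel_sub (a b : 𝓢(V, ℂ)) : kernel (a - b) = kernel a - kernel b :=
  map_sub (FourierTransform.fourierEquiv ℂ 𝓢(V, ℂ)).symm a b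

lemma kernel_smul (c : ℂ) (a : 𝓢(V, ℂ)) : kernel (c • a) = c • kernel a :=
  FourierTransform.fourierInv_smul c a

lemma kernel_pmul (a b : 𝓢(V, ℂ)) : kernel (pmul a b) = multiplier a (kernel b) := by
  rw [multiplier_eq, fourier_kernel, kernel]

lemma multiplier_apply (a f : 𝓢(V, ℂ)) (x : V) :
    multiplier a f x = ∫ y, kernel a y * f (x - y) := by
  have hconv : multiplier a f = convolution (ContinuousLinearMap.mul ℂ ℂ) (kernel a) f := by
    refine ext_fourier fun ξ => ?_
    rw [fourier_multiplier, fourier_convolution, fourier_kernel]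
    rfl
  rw [hconv, convolution_apply, convolution_def]
  rfl

lemma fourier_pmul (f g : 𝓢(V, ℂ)) (ζ : V) :
    𝓕 (pmul f g) ζ = ∫ η, 𝓕 f η * 𝓕 g (ζ - η) := by
  have hneg (h : 𝓢(V, ℂ)) (z : V) : (𝓕⁻ h : 𝓢(V, ℂ)) z = 𝓕 h (-z) := by
    rw [fourierInv_apply_eq]
    rfl
  have hinv : multiplier f (𝓕⁻ g) = 𝓕⁻ (pmul f g) := by
    rw [multiplier_eq, FourierTransform.fourier_fourierInv_eq]
  have happly := multiplier_apply f (𝓕⁻ g) (-ζ)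
  rw [hinv, hneg, neg_neg] at happly
  rw [happly, ← integral_neg_eq_self]
  refine integral_congr_ae (ae_of_all _ fun η => ?_)
  simp only [kernel, hneg]
  congr 2 <;> abel_nf

lemma fourier_pmul_eq_zero {f g : 𝓢(V, ℂ)} {ζ : V}
    (h : ∀ η, 𝓕 f η ≠ 0 → 𝓕 g (ζ - η) = 0) : 𝓕 (pmul f g) ζ = 0 := by
  rw [fourier_pmul, ← integral_zero V ℂ]
  refine integral_congr_ae (ae_of_all _ fun η => ?_)
  by_cases hη : 𝓕 f η = 0
  · simp only [hη, zero_mul]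
  · simp only [h η hη, mul_zero]

end Multipliers

section L2

variable {V : Type*} [NormedAddCommGroup V] [InnerProductSpace ℝ V] [FiniteDimensional ℝ V]
  [MeasurableSpace V] [BorelSpace V]

/-- The squared `L²` norm of a Schwartz function. -/
def l2Sq (f : 𝓢(V, ℂ)) : ℝ := ∫ x, ‖f x‖ ^ 2

lemma l2Sq_nonneg (f : 𝓢(V, ℂ)) : 0 ≤ l2Sq f := integral_nonneg fun _ => by positivity

lemma l2Sq_fourier (f : 𝓢(V, ℂ)) : l2Sq (𝓕 f) = l2Sq f := integral_norm_sq_fourier f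

lemma integrable_norm_sq (f : 𝓢(V, ℂ)) : Integrable fun x => ‖f x‖ ^ 2 :=
  (memLp_two_iff_integrable_sq_norm (f.memLp 2).1).1 (f.memLp 2)

lemma ofReal_l2Sq (f : 𝓢(V, ℂ)) : ENNReal.ofReal (l2Sq f) = ∫⁻ x, ‖f x‖ₑ ^ 2 := by
  rw [l2Sq, ofReal_integral_eq_lintegral_ofReal (integrable_norm_sq f)
    (ae_of_all _ fun _ => by positivity)]
  refine lintegral_congr fun x => ?_
  rw [ENNReal.ofReal_pow (norm_nonneg _), ofReal_norm]

lemma lintegral_enorm_sq_comp_sub (g : 𝓢(V, ℂ)) (y : V) :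
    ∫⁻ x, ‖g (x - y)‖ₑ ^ 2 = ENNReal.ofReal (l2Sq g) := by
  rw [ofReal_l2Sq]
  exact lintegral_sub_right_eq_self (fun x => ‖g x‖ₑ ^ 2) y

lemma l2Sq_neg (f : 𝓢(V, ℂ)) : l2Sq (-f) = l2Sq f := by simp only [l2Sq, neg_apply, norm_neg]

lemma l2Sq_smul (c : ℂ) (f : 𝓢(V, ℂ)) : l2Sq (c • f) = ‖c‖ ^ 2 * l2Sq f := by
  simp only [l2Sq, ← integral_const_mul, smul_apply, norm_smul, mul_pow]

lemma l2Sq_le_of_norm_le {f g : 𝓢(V, ℂ)} {M : ℝ} (h : ∀ x, ‖f x‖ ≤ M * ‖g x‖) :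
    l2Sq f ≤ M ^ 2 * l2Sq g := by
  rw [l2Sq, l2Sq, ← integral_const_mul]
  refine integral_mono (integrable_norm_sq _) ((integrable_norm_sq _).const_mul _) fun x => ?_
  simp only [← mul_pow]
  exact pow_le_pow_left₀ (norm_nonneg _) (h x) 2

lemma l2Sq_multiplier_le {a : 𝓢(V, ℂ)} {M : ℝ} (h : ∀ ξ, ‖a ξ‖ ≤ M) (f : 𝓢(V, ℂ)) :
    l2Sq (multiplier a f) ≤ M ^ 2 * l2Sq f := by
  rw [← l2Sq_fourier, ← l2Sq_fourier f]
  refine l2Sq_le_of_norm_le fun ξ => ?_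
  rw [fourier_multiplier_apply, norm_mul]
  exact mul_le_mul_of_nonneg_right (h ξ) (norm_nonneg _)

lemma l2Sq_pmul_le {g : 𝓢(V, ℂ)} {M : ℝ} (h : ∀ x, ‖g x‖ ≤ M) (f : 𝓢(V, ℂ)) :
    l2Sq (pmul f g) ≤ M ^ 2 * l2Sq f := by
  refine l2Sq_le_of_norm_le fun x => ?_
  rw [pmul_apply, norm_mul, mul_comm]
  exact mul_le_mul_of_nonneg_right (h x) (norm_nonneg _)

/-- Almost orthogonality: the weights `σ i` encode the overlap of the Fourier supports. -/
lemma l2Sq_le_sum_of_fourier_le {ι : Type*} (s : Finset ι) (σ : ι → V → ℝ) (p : ι → 𝓢(V, ℂ))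
    (h : 𝓢(V, ℂ)) {M : ℝ} (hM : ∀ ζ, ∑ i ∈ s, σ i ζ ^ 2 ≤ M)
    (hh : ∀ ζ, ‖𝓕 h ζ‖ ≤ ∑ i ∈ s, σ i ζ * ‖𝓕 (p i) ζ‖) :
    l2Sq h ≤ M * ∑ i ∈ s, l2Sq (p i) := by
  have hsum : ∑ i ∈ s, l2Sq (p i) = ∫ ζ, ∑ i ∈ s, ‖𝓕 (p i) ζ‖ ^ 2 := by
    rw [integral_finsetSum _ fun i _ => integrable_norm_sq _]
    exact Finset.sum_congr rfl fun i _ => (l2Sq_fourier (p i)).symm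
  rw [hsum, ← l2Sq_fourier, l2Sq, ← integral_const_mul]
  refine integral_mono (integrable_norm_sq _)
    ((integrable_finsetSum _ fun i _ => integrable_norm_sq _).const_mul _) fun ζ => ?_
  calc ‖𝓕 h ζ‖ ^ 2 ≤ (∑ i ∈ s, σ i ζ * ‖𝓕 (p i) ζ‖) ^ 2 :=
        pow_le_pow_left₀ (norm_nonneg _) (hh ζ) 2
    _ ≤ (∑ i ∈ s, σ i ζ ^ 2) * ∑ i ∈ s, ‖𝓕 (p i) ζ‖ ^ 2 := Finset.sum_mul_sq_le_sq_mul_sq _ _ _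
    _ ≤ M * ∑ i ∈ s, ‖𝓕 (p i) ζ‖ ^ 2 := by gcongr; exact hM ζ

lemma l2Sq_sum_le_card {ι : Type*} (s : Finset ι) (p : ι → 𝓢(V, ℂ)) :
    l2Sq (∑ i ∈ s, p i) ≤ s.card * ∑ i ∈ s, l2Sq (p i) := by
  refine l2Sq_le_sum_of_fourier_le s (fun _ _ => 1) p _ (fun _ => by simp) fun ζ => ?_
  rw [FourierTransform.fourier_sum, sum_apply]
  simpa only [one_mul] using norm_sum_le s fun i => 𝓕 (p i) ζ

lemma l2Sq_add_le (f g : 𝓢(V, ℂ)) : l2Sq (f + g) ≤ 2 * l2Sq f + 2 * l2Sq g := by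
  have h := l2Sq_sum_le_card Finset.univ ![f, g]
  simp only [Fin.sum_univ_two, Finset.card_fin, Matrix.cons_val_zero, Matrix.cons_val_one] at h
  push_cast at h
  linarith

lemma l2Sq_sub_le (f g : 𝓢(V, ℂ)) : l2Sq (f - g) ≤ 2 * l2Sq f + 2 * l2Sq g := by
  rw [sub_eq_add_neg, ← l2Sq_neg g]
  exact l2Sq_add_le _ _

end L2

section SchurTest

lemma ennreal_add_sq_le (a b : ℝ≥0∞) : (a + b) ^ 2 ≤ 2 * a ^ 2 + 2 * b ^ 2 := by
  have h := ENNReal.rpow_add_le_mul_rpow_add_rpow a b (p := 2) (by norm_num)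
  norm_num at h
  rwa [mul_add] at h

lemma sq_lintegral_mul_le {α : Type*} [MeasurableSpace α] (μ : Measure α) {k D : α → ℝ≥0∞}
    (hk : Measurable k) (hD : Measurable D) :
    (∫⁻ y, k y * D y ∂μ) ^ 2 ≤ (∫⁻ y, k y ∂μ) * ∫⁻ y, k y * D y ^ 2 ∂μ := by
  have holder := ENNReal.lintegral_mul_le_Lp_mul_Lq (μ.withDensity k)
    Real.HolderConjugate.two_two (f := fun _ => 1) (g := D) aemeasurable_const hD.aemeasurable
  simp only [Pi.mul_apply, one_mul, ENNReal.rpow_two] at holder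
  rw [lintegral_withDensity_eq_lintegral_mul _ hk hD,
    lintegral_withDensity_eq_lintegral_mul _ hk measurable_const,
    lintegral_withDensity_eq_lintegral_mul _ hk (hD.pow_const 2)] at holder
  have sq_rpow_half (z : ℝ≥0∞) : (z ^ ((1 : ℝ) / 2)) ^ 2 = z := by
    rw [← ENNReal.rpow_natCast, ← ENNReal.rpow_mul]
    norm_num
  have h := pow_le_pow_left₀ zero_le holder 2
  simpa only [Pi.mul_apply, one_pow, mul_one, mul_pow, sq_rpow_half] using h

/-- Minkowski's integral inequality in the squared form produced by Cauchy–Schwarz. -/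
lemma lintegral_sq_le_of_le_lintegral_mul {α β : Type*} [MeasurableSpace α] [MeasurableSpace β]
    {μ : Measure α} {ν : Measure β} [SFinite μ] [SFinite ν]
    {F : α → ℝ≥0∞} {k M : β → ℝ≥0∞} {D : α → β → ℝ≥0∞} (hk : Measurable k)
    (hD : Measurable (Function.uncurry D)) (hF : ∀ x, F x ≤ ∫⁻ y, k y * D x y ∂ν)
    (hM : ∀ y, ∫⁻ x, D x y ^ 2 ∂μ ≤ M y) :
    ∫⁻ x, F x ^ 2 ∂μ ≤ (∫⁻ y, k y ∂ν) * ∫⁻ y, k y * M y ∂ν := by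
  have hDx (x : α) : Measurable (D x) := hD.comp measurable_prodMk_left
  have hDy (y : β) : Measurable fun x => D x y := hD.comp measurable_prodMk_right
  have hkD : Measurable (Function.uncurry fun x y => k y * D x y ^ 2) :=
    (hk.comp measurable_snd).mul (hD.pow_const 2)
  calc ∫⁻ x, F x ^ 2 ∂μ ≤ ∫⁻ x, (∫⁻ y, k y ∂ν) * ∫⁻ y, k y * D x y ^ 2 ∂ν ∂μ :=
        lintegral_mono fun x =>
          (pow_le_pow_left₀ zero_le (hF x) 2).trans (sq_lintegral_mul_le ν hk (hDx x))
    _ = (∫⁻ y, k y ∂ν) * ∫⁻ x, ∫⁻ y, k y * D x y ^ 2 ∂ν ∂μ :=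
        lintegral_const_mul _ hkD.lintegral_prod_right
    _ = (∫⁻ y, k y ∂ν) * ∫⁻ y, ∫⁻ x, k y * D x y ^ 2 ∂μ ∂ν := by
        rw [lintegral_lintegral_swap hkD.aemeasurable]
    _ ≤ (∫⁻ y, k y ∂ν) * ∫⁻ y, k y * M y ∂ν := by
        gcongr with y
        rw [lintegral_const_mul _ ((hDy y).pow_const 2)]
        gcongr
        exact hM y

end SchurTest

section KernelMoments

variable {V : Type*} [NormedAddCommGroup V] [InnerProductSpace ℝ V] [FiniteDimensional ℝ V]
  [MeasurableSpace V] [BorelSpace V]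

/-- The absolute moment `∫ |y|ⁿ |k(y)| dy` of the convolution kernel `k` of the symbol `a`. -/
def kernelMoment (n : ℕ) (a : 𝓢(V, ℂ)) : ℝ := ∫ y, ‖y‖ ^ n * ‖kernel a y‖

lemma kernelMoment_zero_eq (a : 𝓢(V, ℂ)) : kernelMoment 0 a = ∫ y, ‖kernel a y‖ := by
  simp only [kernelMoment, pow_zero, one_mul]

lemma kernelMoment_nonneg (n : ℕ) (a : 𝓢(V, ℂ)) : 0 ≤ kernelMoment n a :=
  integral_nonneg fun _ => by positivity

lemma ofReal_kernelMoment (n : ℕ) (a : 𝓢(V, ℂ)) :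
    ENNReal.ofReal (kernelMoment n a) = ∫⁻ y, ‖y‖ₑ ^ n * ‖kernel a y‖ₑ := by
  rw [kernelMoment, ofReal_integral_eq_lintegral_ofReal ((kernel a).integrable_pow_mul volume n)
    (ae_of_all _ fun _ => by positivity)]
  refine lintegral_congr fun y => ?_
  rw [ENNReal.ofReal_mul (by positivity), ENNReal.ofReal_pow (norm_nonneg _), ofReal_norm,
    ofReal_norm]

lemma measurable_enorm_kernel (a : 𝓢(V, ℂ)) : Measurable fun y => ‖kernel a y‖ₑ :=
  (kernel a).continuous.measurable.enorm

lemma kernelMoment_smul (n : ℕ) (c : ℂ) (a : 𝓢(V, ℂ)) :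
    kernelMoment n (c • a) = ‖c‖ * kernelMoment n a := by
  simp only [kernelMoment, kernel_smul, smul_apply, norm_smul, ← integral_const_mul,
    mul_left_comm]

lemma kernelMoment_zero (n : ℕ) : kernelMoment n (0 : 𝓢(V, ℂ)) = 0 := by
  simpa only [zero_smul, norm_zero, zero_mul] using kernelMoment_smul n 0 (0 : 𝓢(V, ℂ))

lemma kernelMoment_neg (n : ℕ) (a : 𝓢(V, ℂ)) : kernelMoment n (-a) = kernelMoment n a := by
  simpa only [neg_smul, one_smul, norm_neg, norm_one, one_mul] using kernelMoment_smul n (-1) a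

lemma kernelMoment_add_le (n : ℕ) (a b : 𝓢(V, ℂ)) :
    kernelMoment n (a + b) ≤ kernelMoment n a + kernelMoment n b := by
  have hint (c : 𝓢(V, ℂ)) := (kernel c).integrable_pow_mul volume n
  rw [kernelMoment, kernelMoment, kernelMoment, ← integral_add (hint a) (hint b)]
  refine integral_mono (hint _) ((hint a).add (hint b)) fun y => ?_
  rw [← mul_add, kernel_add]
  exact mul_le_mul_of_nonneg_left (norm_add_le _ _) (by positivity)

lemma kernelMoment_sub_le (n : ℕ) (a b : 𝓢(V, ℂ)) :
    kernelMoment n (a - b) ≤ kernelMoment n a + kernelMoment n b := by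
  rw [sub_eq_add_neg, ← kernelMoment_neg n b]
  exact kernelMoment_add_le n _ _

lemma kernelMoment_sum_le {ι : Type*} (n : ℕ) (s : Finset ι) (a : ι → 𝓢(V, ℂ)) :
    kernelMoment n (∑ i ∈ s, a i) ≤ ∑ i ∈ s, kernelMoment n (a i) :=
  Finset.le_sum_of_subadditive _ (kernelMoment_zero n).le (kernelMoment_add_le n) s a

lemma norm_le_kernelMoment_zero (a : 𝓢(V, ℂ)) (ξ : V) : ‖a ξ‖ ≤ kernelMoment 0 a := by
  rw [kernelMoment_zero_eq]
  conv_lhs => rw [← fourier_kernel a, fourier_coe]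
  exact VectorFourier.norm_fourierIntegral_le_integral_norm _ _ _ _ _

lemma integrable_mul_comp_sub (k f : 𝓢(V, ℂ)) (x : V) :
    Integrable fun y => k y * f (x - y) :=
  k.integrable.mul_bdd (c := SchwartzMap.seminorm ℝ 0 0 f)
    (f.continuous.comp (continuous_const.sub continuous_id)).aestronglyMeasurable
    (ae_of_all _ fun _ => f.norm_le_seminorm ℝ _)

lemma norm_multiplier_le {a g : 𝓢(V, ℂ)} {U : ℝ} (h : ∀ x, ‖g x‖ ≤ U) (x : V) :
    ‖multiplier a g x‖ ≤ kernelMoment 0 a * U := by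
  rw [multiplier_apply, kernelMoment_zero_eq, ← integral_mul_const]
  refine (norm_integral_le_integral_norm _).trans ?_
  refine integral_mono (integrable_mul_comp_sub _ _ _).norm
    ((kernel a).integrable.norm.mul_const _) fun y => ?_
  rw [norm_mul]
  exact mul_le_mul_of_nonneg_left (h _) (norm_nonneg _)

lemma norm_multiplier_sub_le {a f : 𝓢(V, ℂ)} {L : ℝ} (h : ∀ x y, ‖f x - f y‖ ≤ L * ‖x - y‖)
    (x y : V) : ‖multiplier a f x - multiplier a f y‖ ≤ kernelMoment 0 a * L * ‖x - y‖ := by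
  have hint := (integrable_mul_comp_sub (kernel a) f x).sub (integrable_mul_comp_sub (kernel a) f y)
  rw [multiplier_apply, multiplier_apply, ← integral_sub (integrable_mul_comp_sub _ _ _)
    (integrable_mul_comp_sub _ _ _), mul_assoc, kernelMoment_zero_eq, ← integral_mul_const]
  refine (norm_integral_le_integral_norm _).trans ?_
  refine integral_mono hint.norm ((kernel a).integrable.norm.mul_const _) fun z => ?_
  rw [← mul_sub, norm_mul]
  refine mul_le_mul_of_nonneg_left ((h _ _).trans_eq ?_) (norm_nonneg _)
  rw [sub_sub_sub_cancel_right]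

lemma enorm_multiplier_le (a f : 𝓢(V, ℂ)) (x : V) :
    ‖multiplier a f x‖ₑ ≤ ∫⁻ y, ‖kernel a y‖ₑ * ‖f (x - y)‖ₑ := by
  rw [multiplier_apply]
  exact (enorm_integral_le_lintegral_enorm _).trans_eq (by simp only [enorm_mul])

lemma lintegral_mul_convolution_le {w p q : V → ℝ≥0∞} (hw : Measurable w) (hp : Measurable p)
    (hq : Measurable q) (hsub : ∀ x y, w x ≤ w y + w (x - y)) :
    ∫⁻ x, w x * ∫⁻ y, p y * q (x - y) ≤
      (∫⁻ y, w y * p y) * (∫⁻ y, q y) + (∫⁻ y, p y) * ∫⁻ y, w y * q y := by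
  have hmeas : Measurable (Function.uncurry fun x y : V => w x * (p y * q (x - y))) := by
    refine (hw.comp measurable_fst).mul ?_
    exact (hp.comp measurable_snd).mul (hq.comp (measurable_fst.sub measurable_snd))
  have hwp : Measurable fun x => w x * p x := hw.mul hp
  calc ∫⁻ x, w x * ∫⁻ y, p y * q (x - y) = ∫⁻ x, ∫⁻ y, w x * (p y * q (x - y)) :=
        lintegral_congr fun x => (lintegral_const_mul _
          (hp.mul (hq.comp (measurable_const.sub measurable_id)))).symm
    _ = ∫⁻ y, ∫⁻ x, w x * (p y * q (x - y)) := lintegral_lintegral_swap hmeas.aemeasurable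
    _ ≤ ∫⁻ y, ∫⁻ x, ((w y * p y) * q (x - y) + p y * (w (x - y) * q (x - y))) := by
        gcongr with y x
        calc w x * (p y * q (x - y)) ≤ (w y + w (x - y)) * (p y * q (x - y)) := by
              gcongr
              exact hsub x y
          _ = _ := by ring
    _ = ∫⁻ y, ((w y * p y) * (∫⁻ z, q z) + p y * ∫⁻ z, w z * q z) := by
        refine lintegral_congr fun y => ?_
        have hq' : Measurable fun x => q (x - y) := hq.comp (measurable_id.sub_const y)
        have hwq' : Measurable fun x => w (x - y) * q (x - y) :=
          (hw.comp (measurable_id.sub_const y)).mul hq'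
        rw [lintegral_add_left (hq'.const_mul _), lintegral_const_mul _ hq',
          lintegral_const_mul _ hwq', lintegral_sub_right_eq_self q y,
          lintegral_sub_right_eq_self (fun x => w x * q x) y]
    _ = _ := by
        rw [lintegral_add_left (hwp.mul_const _), lintegral_mul_const _ hwp,
          lintegral_mul_const _ hp]

lemma kernelMoment_zero_pmul_le (a b : 𝓢(V, ℂ)) :
    kernelMoment 0 (pmul a b) ≤ kernelMoment 0 a * kernelMoment 0 b := by
  have ha := kernelMoment_nonneg 0 a
  have hb := kernelMoment_nonneg 0 b
  have hmeas : Measurable (Function.uncurry fun x y : V => ‖kernel a y‖ₑ * ‖kernel b (x - y)‖ₑ) :=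
    ((measurable_enorm_kernel a).comp measurable_snd).mul
      ((measurable_enorm_kernel b).comp (measurable_fst.sub measurable_snd))
  rw [← ENNReal.ofReal_le_ofReal_iff (by positivity), ENNReal.ofReal_mul ha, ofReal_kernelMoment,
    ofReal_kernelMoment, ofReal_kernelMoment, kernel_pmul]
  simp only [pow_zero, one_mul]
  calc ∫⁻ x, ‖multiplier a (kernel b) x‖ₑ ≤ ∫⁻ x, ∫⁻ y, ‖kernel a y‖ₑ * ‖kernel b (x - y)‖ₑ :=
        lintegral_mono fun x => enorm_multiplier_le _ _ _
    _ = ∫⁻ y, ∫⁻ x, ‖kernel a y‖ₑ * ‖kernel b (x - y)‖ₑ :=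
        lintegral_lintegral_swap hmeas.aemeasurable
    _ = ∫⁻ y, ‖kernel a y‖ₑ * ∫⁻ x, ‖kernel b x‖ₑ := by
        refine lintegral_congr fun y => ?_
        rw [lintegral_const_mul' _ _ enorm_ne_top,
          lintegral_sub_right_eq_self (fun x => ‖kernel b x‖ₑ) y]
    _ = _ := lintegral_mul_const _ (measurable_enorm_kernel a)

lemma kernelMoment_one_pmul_le (a b : 𝓢(V, ℂ)) :
    kernelMoment 1 (pmul a b)
      ≤ kernelMoment 1 a * kernelMoment 0 b + kernelMoment 0 a * kernelMoment 1 b := by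
  have ha0 := kernelMoment_nonneg 0 a
  have hb0 := kernelMoment_nonneg 0 b
  have ha1 := kernelMoment_nonneg 1 a
  have hb1 := kernelMoment_nonneg 1 b
  have hconv := lintegral_mul_convolution_le measurable_enorm (measurable_enorm_kernel a)
    (measurable_enorm_kernel b) fun x y => by
      simpa only [add_sub_cancel] using enorm_add_le y (x - y)
  rw [← ENNReal.ofReal_le_ofReal_iff (by positivity), ENNReal.ofReal_add (by positivity)
    (by positivity), ENNReal.ofReal_mul ha1, ENNReal.ofReal_mul ha0]
  simp only [ofReal_kernelMoment, pow_zero, pow_one, one_mul, kernel_pmul]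
  refine le_trans (lintegral_mono fun x => ?_) hconv
  exact mul_le_mul_right (enorm_multiplier_le _ _ _) _

end KernelMoments

section Commutator

variable {V : Type*} [NormedAddCommGroup V] [InnerProductSpace ℝ V] [FiniteDimensional ℝ V]
  [MeasurableSpace V] [BorelSpace V]

/-- The commutator `[a(D), f] g = a(D)(f g) - f a(D) g`, bilinear in `f` and `g`. -/
def commutator (a : 𝓢(V, ℂ)) : 𝓢(V, ℂ) →ₗ[ℂ] 𝓢(V, ℂ) →ₗ[ℂ] 𝓢(V, ℂ) :=
  pmul.compr₂ (multiplier a) - pmul.compl₂ (multiplier a)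

lemma commutator_eq (a f g : 𝓢(V, ℂ)) :
    commutator a f g = multiplier a (pmul f g) - pmul f (multiplier a g) := rfl

lemma enorm_commutator_le {a f : 𝓢(V, ℂ)} {L : ℝ} (hL : 0 ≤ L)
    (hf : ∀ x y, ‖f x - f y‖ ≤ L * ‖x - y‖) (g : 𝓢(V, ℂ)) (x : V) :
    ‖commutator a f g x‖ₑ
      ≤ ∫⁻ y, (‖y‖ₑ * ‖kernel a y‖ₑ) * (ENNReal.ofReal L * ‖g (x - y)‖ₑ) := by
  have hlip (y : V) : ‖f (x - y) - f x‖ₑ ≤ ENNReal.ofReal L * ‖y‖ₑ := by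
    rw [← ofReal_norm, ← ofReal_norm, ← ENNReal.ofReal_mul hL]
    refine ENNReal.ofReal_le_ofReal ((hf _ _).trans_eq ?_)
    rw [sub_sub_cancel_left, norm_neg]
  have hcomm : commutator a f g x = ∫ y, (f (x - y) - f x) * (kernel a y * g (x - y)) := by
    rw [commutator_eq, sub_apply, pmul_apply, multiplier_apply, multiplier_apply,
      ← integral_const_mul, ← integral_sub (integrable_mul_comp_sub _ _ _)
        ((integrable_mul_comp_sub _ _ _).const_mul _)]
    refine integral_congr_ae (ae_of_all _ fun y => ?_)
    simp only [pmul_apply]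
    ring
  rw [hcomm]
  refine (enorm_integral_le_lintegral_enorm _).trans (lintegral_mono fun y => ?_)
  rw [enorm_mul, enorm_mul]
  calc ‖f (x - y) - f x‖ₑ * (‖kernel a y‖ₑ * ‖g (x - y)‖ₑ)
      ≤ (ENNReal.ofReal L * ‖y‖ₑ) * (‖kernel a y‖ₑ * ‖g (x - y)‖ₑ) := by
        gcongr
        exact hlip y
    _ = _ := by ring

lemma l2Sq_commutator_le {a f : 𝓢(V, ℂ)} {L : ℝ} (hL : 0 ≤ L)
    (hf : ∀ x y, ‖f x - f y‖ ≤ L * ‖x - y‖) (g : 𝓢(V, ℂ)) :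
    l2Sq (commutator a f g) ≤ (L * kernelMoment 1 a) ^ 2 * l2Sq g := by
  have hk := kernelMoment_nonneg 1 a
  have hg := l2Sq_nonneg g
  have hmeas : Measurable fun y : V => ‖y‖ₑ * ‖kernel a y‖ₑ :=
    measurable_enorm.mul (measurable_enorm_kernel a)
  have hgmeas : Measurable fun p : V × V => ENNReal.ofReal L * ‖g (p.1 - p.2)‖ₑ :=
    measurable_const.mul
      (g.continuous.comp (continuous_fst.sub continuous_snd)).measurable.enorm
  have hschur := lintegral_sq_le_of_le_lintegral_mul (μ := volume) (ν := volume)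
    (M := fun _ => ENNReal.ofReal L ^ 2 * ENNReal.ofReal (l2Sq g)) hmeas hgmeas
    (enorm_commutator_le hL hf g) fun y => by
      simp only [mul_pow]
      rw [lintegral_const_mul' _ _ (ENNReal.pow_ne_top ENNReal.ofReal_ne_top),
        lintegral_enorm_sq_comp_sub]
  rw [← ENNReal.ofReal_le_ofReal_iff (by positivity), ofReal_l2Sq]
  refine hschur.trans_eq ?_
  have hmoment := ofReal_kernelMoment 1 a
  simp only [pow_one] at hmoment
  rw [lintegral_mul_const _ hmeas, ← hmoment, ENNReal.ofReal_mul (by positivity),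
    ENNReal.ofReal_pow (by positivity), ENNReal.ofReal_mul hL]
  ring

end Commutator

section Dilation

variable {V : Type*} [NormedAddCommGroup V] [InnerProductSpace ℝ V]

/-- The dilated symbol `a(t ·)`. -/
def dilate (t : ℝˣ) (a : 𝓢(V, ℂ)) : 𝓢(V, ℂ) :=
  compCLMOfContinuousLinearEquiv ℂ (ContinuousLinearEquiv.smulLeft (R₁ := ℝ) (M₁ := V) t) a

lemma dilate_apply (t : ℝˣ) (a : 𝓢(V, ℂ)) (x : V) : dilate t a x = a ((t : ℝ) • x) := rfl

variable [FiniteDimensional ℝ V] [MeasurableSpace V] [BorelSpace V]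

lemma kernel_dilate (t : ℝˣ) (a : 𝓢(V, ℂ)) (x : V) :
    kernel (dilate t a) x
      = |((t : ℝ) ^ Module.finrank ℝ V)⁻¹| • kernel a ((t : ℝ)⁻¹ • x) := by
  rw [kernel, kernel, fourierInv_coe, fourierInv_coe, Real.fourierInv_eq', Real.fourierInv_eq',
    ← Measure.integral_comp_smul]
  refine integral_congr_ae (ae_of_all _ fun v => ?_)
  simp only [dilate_apply, inner_smul_left, inner_smul_right, conj_trivial,
    inv_mul_cancel_left₀ t.ne_zero]

lemma kernelMoment_dilate (n : ℕ) (t : ℝˣ) (a : 𝓢(V, ℂ)) :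
    kernelMoment n (dilate t a) = |(t : ℝ)| ^ n * kernelMoment n a := by
  have ht : |(t : ℝ)| ≠ 0 := abs_ne_zero.2 t.ne_zero
  have hpow : |(t : ℝ)| ^ n * |(t : ℝ)|⁻¹ ^ n = 1 := by
    rw [← mul_pow, mul_inv_cancel₀ ht, one_pow]
  have hscale (y : V) : ‖y‖ ^ n * ‖kernel (dilate t a) y‖
      = (|(t : ℝ)| ^ n * |((t : ℝ) ^ Module.finrank ℝ V)⁻¹|)
        * (fun x => ‖x‖ ^ n * ‖kernel a x‖) ((t : ℝ)⁻¹ • y) := by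
    simp only [kernel_dilate, norm_smul, norm_abs_eq_norm, Real.norm_eq_abs, norm_inv, mul_pow,
      abs_inv]
    linear_combination
      (-|(t : ℝ) ^ Module.finrank ℝ V|⁻¹ * ‖y‖ ^ n * ‖kernel a ((t : ℝ)⁻¹ • y)‖) * hpow
  simp only [kernelMoment, hscale]
  rw [integral_const_mul, Measure.integral_comp_smul (μ := volume)
    (fun x => ‖x‖ ^ n * ‖kernel a x‖)]
  have hcancel :
      |((t : ℝ) ^ Module.finrank ℝ V)⁻¹| * |(((t : ℝ)⁻¹) ^ Module.finrank ℝ V)⁻¹| = 1 := by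
    rw [inv_pow, inv_inv, ← abs_mul, inv_mul_cancel₀ (pow_ne_zero _ t.ne_zero), abs_one]
  rw [smul_eq_mul, mul_assoc, ← mul_assoc |((t : ℝ) ^ _)⁻¹|, hcancel, one_mul]

end Dilation

section HalfDerivative

variable {V : Type*} [NormedAddCommGroup V] [InnerProductSpace ℝ V] [FiniteDimensional ℝ V]
  [MeasurableSpace V] [BorelSpace V]

/-- The homogeneous `Ḣ^{1/2}` energy `∫ |ξ| |𝓕 v (ξ)|² dξ`. -/
def halfEnergy (v : 𝓢(V, ℂ)) : ℝ := ∫ ξ, ‖ξ‖ * ‖𝓕 v ξ‖ ^ 2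

lemma integrable_halfEnergy (v : 𝓢(V, ℂ)) : Integrable fun ξ => ‖ξ‖ * ‖𝓕 v ξ‖ ^ 2 := by
  have hmoment : Integrable fun ξ => ‖ξ‖ * ‖𝓕 v ξ‖ := by
    have h := (𝓕 v).integrable_pow_mul volume 1
    simpa only [pow_one] using h
  have h : Integrable fun ξ => (‖ξ‖ * ‖𝓕 v ξ‖) * ‖𝓕 v ξ‖ :=
    hmoment.mul_bdd (c := SchwartzMap.seminorm ℝ 0 0 (𝓕 v))
      (𝓕 v).continuous.norm.aestronglyMeasurable
      (ae_of_all _ fun ξ => by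
        rw [norm_norm]
        exact (𝓕 v).norm_le_seminorm ℝ ξ)
  simpa only [mul_assoc, ← sq] using h

lemma halfEnergy_nonneg (v : 𝓢(V, ℂ)) : 0 ≤ halfEnergy v :=
  integral_nonneg fun _ => by positivity

lemma fourier_compSubConst (v : 𝓢(V, ℂ)) (y ξ : V) :
    𝓕 (v.compSubConstCLM ℂ y) ξ
      = Complex.exp (Complex.I * (-(2 * Real.pi * inner ℝ y ξ) : ℝ)) * 𝓕 v ξ := by
  have h := congrFun (VectorFourier.fourierIntegral_comp_add_right Real.fourierChar volume
    (innerₗ V) (⇑v) (-y)) ξ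
  have hcoe : (⇑v ∘ fun x => x + -y) = ⇑(v.compSubConstCLM ℂ y) := by
    ext x
    simp only [Function.comp_apply, compSubConstCLM_apply, sub_eq_add_neg]
  rw [hcoe] at h
  rw [fourier_coe, fourier_coe]
  refine h.trans ?_
  rw [Circle.smul_def, Real.fourierChar_apply, smul_eq_mul]
  congr 2
  simp only [map_neg, LinearMap.neg_apply, innerₗ_apply_apply]
  push_cast
  ring

lemma sq_norm_exp_I_mul_sub_one_le (θ : ℝ) : ‖Complex.exp (Complex.I * θ) - 1‖ ^ 2 ≤ 2 * |θ| := by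
  have hsmall : ‖Complex.exp (Complex.I * θ) - 1‖ ≤ |θ| :=
    Real.norm_exp_I_mul_ofReal_sub_one_le
  have hlarge : ‖Complex.exp (Complex.I * θ) - 1‖ ≤ 2 := by
    refine (norm_sub_le _ _).trans ?_
    rw [mul_comm, Complex.norm_exp_ofReal_mul_I]
    norm_num
  rw [sq]
  exact mul_le_mul hlarge hsmall (norm_nonneg _) zero_le_two

lemma lintegral_enorm_sub_comp_sub_sq_le (v : 𝓢(V, ℂ)) (y : V) :
    ∫⁻ x, ‖v x - v (x - y)‖ₑ ^ 2 ≤ ‖y‖ₑ * ENNReal.ofReal (4 * Real.pi * halfEnergy v) := by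
  have hl2 : ∫⁻ x, ‖v x - v (x - y)‖ₑ ^ 2
      = ENNReal.ofReal (l2Sq (v - v.compSubConstCLM ℂ y)) := by
    rw [ofReal_l2Sq]
    rfl
  rw [hl2, ← ofReal_norm, ← ENNReal.ofReal_mul (norm_nonneg _)]
  refine ENNReal.ofReal_le_ofReal ?_
  rw [← l2Sq_fourier, l2Sq, halfEnergy, ← integral_const_mul, ← integral_const_mul]
  refine integral_mono (integrable_norm_sq _)
    (((integrable_halfEnergy v).const_mul _).const_mul _) fun ξ => ?_
  simp only [fourier_sub, sub_apply, fourier_compSubConst]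
  set θ : ℝ := -(2 * Real.pi * inner ℝ y ξ)
  have hθ : |θ| ≤ 2 * Real.pi * (‖y‖ * ‖ξ‖) := by
    simp only [θ, abs_neg, abs_mul, abs_two, abs_of_pos Real.pi_pos]
    gcongr
    exact abs_real_inner_le_norm y ξ
  have hfactor : 𝓕 v ξ - Complex.exp (Complex.I * (θ : ℝ)) * 𝓕 v ξ
      = -(Complex.exp (Complex.I * (θ : ℝ)) - 1) * 𝓕 v ξ := by ring
  rw [hfactor, norm_mul, norm_neg, mul_pow]
  calc ‖Complex.exp (Complex.I * (θ : ℝ)) - 1‖ ^ 2 * ‖𝓕 v ξ‖ ^ 2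
      ≤ 2 * (2 * Real.pi * (‖y‖ * ‖ξ‖)) * ‖𝓕 v ξ‖ ^ 2 := by
        gcongr
        exact (sq_norm_exp_I_mul_sub_one_le θ).trans (by gcongr)
    _ = _ := by ring

lemma enorm_pmul_multiplier_le {K q v : 𝓢(V, ℂ)} {Q : ℝ} (hQ : ∀ x, ‖q x‖ ≤ Q) (x : V) :
    ‖pmul (multiplier K q) v x‖ₑ
      ≤ ∫⁻ y, ‖kernel K y‖ₑ
        * (‖pmul q v (x - y)‖ₑ + ENNReal.ofReal Q * ‖v x - v (x - y)‖ₑ) := by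
  rw [pmul_apply, multiplier_apply, ← integral_mul_const]
  refine (enorm_integral_le_lintegral_enorm _).trans (lintegral_mono fun y => ?_)
  have hsplit : q (x - y) * v x = pmul q v (x - y) + q (x - y) * (v x - v (x - y)) := by
    rw [pmul_apply]
    ring
  rw [mul_assoc, enorm_mul, hsplit]
  gcongr
  refine (enorm_add_le _ _).trans ?_
  rw [enorm_mul]
  gcongr
  rw [← ofReal_norm]
  exact ENNReal.ofReal_le_ofReal (hQ _)

lemma lintegral_sq_enorm_add_le {q v : 𝓢(V, ℂ)} (Q : ℝ≥0∞) (y : V) :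
    ∫⁻ x, (‖pmul q v (x - y)‖ₑ + Q * ‖v x - v (x - y)‖ₑ) ^ 2
      ≤ 2 * ENNReal.ofReal (l2Sq (pmul q v))
        + ‖y‖ₑ * (2 * Q ^ 2 * ENNReal.ofReal (4 * Real.pi * halfEnergy v)) := by
  have hqv : Measurable fun x : V => ‖pmul q v (x - y)‖ₑ ^ 2 :=
    ((pmul q v).continuous.comp (continuous_id.sub continuous_const)).measurable.enorm.pow_const 2
  have hv : Measurable fun x : V => ‖v x - v (x - y)‖ₑ ^ 2 :=
    (v.continuous.sub (v.continuous.comp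
      (continuous_id.sub continuous_const))).measurable.enorm.pow_const 2
  calc ∫⁻ x, (‖pmul q v (x - y)‖ₑ + Q * ‖v x - v (x - y)‖ₑ) ^ 2
      ≤ ∫⁻ x, (2 * ‖pmul q v (x - y)‖ₑ ^ 2 + 2 * Q ^ 2 * ‖v x - v (x - y)‖ₑ ^ 2) :=
        lintegral_mono fun x => (ennreal_add_sq_le _ _).trans_eq (by ring)
    _ = 2 * (∫⁻ x, ‖pmul q v (x - y)‖ₑ ^ 2) + 2 * Q ^ 2 * ∫⁻ x, ‖v x - v (x - y)‖ₑ ^ 2 := by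
        rw [lintegral_add_left (hqv.const_mul _), lintegral_const_mul _ hqv,
          lintegral_const_mul _ hv]
    _ ≤ 2 * ENNReal.ofReal (l2Sq (pmul q v))
        + 2 * Q ^ 2 * (‖y‖ₑ * ENNReal.ofReal (4 * Real.pi * halfEnergy v)) := by
        rw [lintegral_enorm_sq_comp_sub]
        gcongr
        exact lintegral_enorm_sub_comp_sub_sq_le v y
    _ = _ := by ring

/-- Replacing `q` by a mollification costs only the half-derivative energy of the other factor;
this is what lets a Carleson-type estimate pass from Gaussian to general band multipliers. -/
lemma l2Sq_pmul_multiplier_le {K q v : 𝓢(V, ℂ)} {Q : ℝ} (hQ : ∀ x, ‖q x‖ ≤ Q) :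
    l2Sq (pmul (multiplier K q) v) ≤ 2 * kernelMoment 0 K ^ 2 * l2Sq (pmul q v)
      + 8 * Real.pi * Q ^ 2 * kernelMoment 0 K * kernelMoment 1 K * halfEnergy v := by
  have hQ0 : 0 ≤ Q := (norm_nonneg _).trans (hQ 0)
  have hv := halfEnergy_nonneg v
  have hK0 := kernelMoment_nonneg 0 K
  have hK1 := kernelMoment_nonneg 1 K
  have hqv := l2Sq_nonneg (pmul q v)
  have hqvmeas : Measurable fun p : V × V => ‖pmul q v (p.1 - p.2)‖ₑ :=
    ((pmul q v).continuous.comp (continuous_fst.sub continuous_snd)).measurable.enorm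
  have hvmeas : Measurable fun p : V × V => ENNReal.ofReal Q * ‖v p.1 - v (p.1 - p.2)‖ₑ :=
    measurable_const.mul ((v.continuous.comp continuous_fst).sub
      (v.continuous.comp (continuous_fst.sub continuous_snd))).measurable.enorm
  have hkmeas := measurable_enorm_kernel K
  have hmeas1 : Measurable fun y : V => ‖y‖ₑ * ‖kernel K y‖ₑ := measurable_enorm.mul hkmeas
  have hschur := lintegral_sq_le_of_le_lintegral_mul (μ := volume) (ν := volume) hkmeas
    (hqvmeas.add hvmeas) (enorm_pmul_multiplier_le hQ)
    (lintegral_sq_enorm_add_le (ENNReal.ofReal Q))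
  have hm0 := ofReal_kernelMoment 0 K
  have hm1 := ofReal_kernelMoment 1 K
  simp only [pow_zero, pow_one, one_mul] at hm0 hm1
  simp only [mul_add, ← mul_assoc ‖kernel K _‖ₑ ‖_‖ₑ, mul_comm ‖kernel K _‖ₑ ‖_‖ₑ] at hschur
  rw [lintegral_add_left (hkmeas.mul_const _), lintegral_mul_const _ hkmeas,
    lintegral_mul_const _ hmeas1, ← hm0, ← hm1, ← ofReal_l2Sq, ← ENNReal.ofReal_pow hQ0,
    show (2 : ℝ≥0∞) = ENNReal.ofReal 2 by simp] at hschur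
  repeat rw [← ENNReal.ofReal_mul (by positivity)] at hschur
  rw [← ENNReal.ofReal_add (by positivity) (by positivity), ← ENNReal.ofReal_mul hK0,
    ENNReal.ofReal_le_ofReal_iff (by positivity)] at hschur
  linarith

end HalfDerivative

section Gaussian

variable {V : Type*} [NormedAddCommGroup V] [InnerProductSpace ℝ V]

lemma one_add_pow_mul_exp_neg_sq_le {c : ℝ} (hc : 0 < c) (m : ℕ) {r : ℝ} (hr : 0 ≤ r) :
    (1 + r) ^ m * Real.exp (-c * r ^ 2) ≤ (2 / c) ^ m * m.factorial * Real.exp c := by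
  have hbase : 1 + r ≤ 2 / c * (c + c * r ^ 2) := by
    have h : 2 / c * (c + c * r ^ 2) = 2 * (1 + r ^ 2) := by field_simp
    rw [h]
    nlinarith [sq_nonneg (r - 1)]
  have hexp : (c + c * r ^ 2) ^ m ≤ m.factorial * Real.exp (c + c * r ^ 2) := by
    have h := Real.pow_div_factorial_le_exp (c + c * r ^ 2) (by positivity) m
    rwa [div_le_iff₀' (by positivity)] at h
  calc (1 + r) ^ m * Real.exp (-c * r ^ 2)
      ≤ (2 / c) ^ m * (m.factorial * Real.exp (c + c * r ^ 2)) * Real.exp (-c * r ^ 2) := by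
        gcongr
        refine (pow_le_pow_left₀ (by positivity) hbase m).trans ?_
        rw [mul_pow]
        gcongr
    _ = (2 / c) ^ m * m.factorial * (Real.exp (c + c * r ^ 2) * Real.exp (-c * r ^ 2)) := by ring
    _ = (2 / c) ^ m * m.factorial * Real.exp c := by
        rw [← Real.exp_add]
        congr 2
        ring

lemma contDiff_neg_mul_norm_sq (c : ℝ) {n : WithTop ℕ∞} :
    ContDiff ℝ n fun x : V => -c * ‖x‖ ^ 2 :=
  contDiff_const.mul (contDiff_norm_sq ℝ)

lemma exists_norm_iteratedFDeriv_gaussian_le (V : Type*) [NormedAddCommGroup V]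
    [InnerProductSpace ℝ V] (c : ℝ) (n : ℕ) :
    ∃ (m : ℕ) (C : ℝ), 0 ≤ C ∧ ∀ x : V,
      ‖iteratedFDeriv ℝ n (fun x : V => Real.exp (-c * ‖x‖ ^ 2)) x‖
        ≤ C * (1 + ‖x‖) ^ m * Real.exp (-c * ‖x‖ ^ 2) := by
  have hgrowth : (fun x : V => -c * ‖x‖ ^ 2).HasTemperateGrowth :=
    (Function.HasTemperateGrowth.const (-c)).mul (Function.hasTemperateGrowth_norm_sq V)
  obtain ⟨m, C, _, hbound⟩ := hgrowth.norm_iteratedFDeriv_le_uniform n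
  refine ⟨m * n, n.factorial * max C 1 ^ n, by positivity, fun x => ?_⟩
  have hbase : 1 ≤ max C 1 * (1 + ‖x‖) ^ m :=
    one_le_mul_of_one_le_of_one_le (le_max_right _ _)
      (one_le_pow₀ (by linarith [norm_nonneg x]))
  have hcomp := norm_iteratedFDeriv_comp_le (𝕜 := ℝ) (g := Real.exp)
    (f := fun x : V => -c * ‖x‖ ^ 2) (N := ⊤) Real.contDiff_exp (contDiff_neg_mul_norm_sq c)
    (by exact_mod_cast le_top) x (C := Real.exp (-c * ‖x‖ ^ 2))
    (D := max C 1 * (1 + ‖x‖) ^ m)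
    (fun i _ => by
      rw [norm_iteratedFDeriv_eq_norm_iteratedDeriv]
      have h := congrFun (iteratedDeriv_exp_const_mul i 1) (-c * ‖x‖ ^ 2)
      simp only [one_mul, one_pow] at h
      rw [h, Real.norm_of_nonneg (Real.exp_pos _).le])
    (fun i hi hin => (hbound i hin x).trans <| by
      refine le_trans ?_ (le_self_pow₀ hbase (by omega))
      gcongr
      exact le_max_left _ _)
  refine hcomp.trans_eq ?_
  rw [mul_pow, ← pow_mul]
  ring

/-- The real Gaussian `x ↦ exp (-c |x|²)`. -/
def realGaussian {c : ℝ} (hc : 0 < c) : 𝓢(V, ℝ) where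
  toFun x := Real.exp (-c * ‖x‖ ^ 2)
  smooth' := Real.contDiff_exp.comp (contDiff_neg_mul_norm_sq c)
  decay' k n := by
    obtain ⟨m, C, hC, hbound⟩ := exists_norm_iteratedFDeriv_gaussian_le V c n
    refine ⟨C * ((2 / c) ^ (k + m) * (k + m).factorial * Real.exp c), fun x => ?_⟩
    have hx := norm_nonneg x
    calc ‖x‖ ^ k * ‖iteratedFDeriv ℝ n (fun x : V => Real.exp (-c * ‖x‖ ^ 2)) x‖
        ≤ (1 + ‖x‖) ^ k * (C * (1 + ‖x‖) ^ m * Real.exp (-c * ‖x‖ ^ 2)) := by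
          gcongr
          · linarith
          · exact hbound x
      _ = C * ((1 + ‖x‖) ^ (k + m) * Real.exp (-c * ‖x‖ ^ 2)) := by ring
      _ ≤ _ := mul_le_mul_of_nonneg_left (one_add_pow_mul_exp_neg_sq_le hc _ hx) hC

/-- The Gaussian `x ↦ exp (-c |x|²)` as a complex-valued symbol. -/
def gaussian {c : ℝ} (hc : 0 < c) : 𝓢(V, ℂ) := postcompCLM Complex.ofRealCLM (realGaussian hc)

lemma gaussian_apply {c : ℝ} (hc : 0 < c) (x : V) :
    (gaussian hc : 𝓢(V, ℂ)) x = ((Real.exp (-c * ‖x‖ ^ 2) : ℝ) : ℂ) := rfl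

/-- The heat kernel, normalised so that its Fourier transform is `exp (-c |ξ|²)`. -/
def heatKernel (c : ℝ) (y : V) : ℝ :=
  (Real.pi / c) ^ (Module.finrank ℝ V / 2 : ℝ) * Real.exp (-Real.pi ^ 2 * ‖y‖ ^ 2 / c)

lemma heatKernel_pos {c : ℝ} (hc : 0 < c) (y : V) : 0 < heatKernel c y := by
  have := Real.pi_pos
  unfold heatKernel
  positivity

lemma continuous_heatKernel (c : ℝ) : Continuous (heatKernel c : V → ℝ) := by
  unfold heatKernel
  fun_prop

lemma heatKernel_le {c c' : ℝ} (hc' : 0 < c') (h : c' ≤ c) (y : V) :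
    heatKernel c' y ≤ (c / c') ^ (Module.finrank ℝ V / 2 : ℝ) * heatKernel c y := by
  have hc : 0 < c := hc'.trans_le h
  have := Real.pi_pos
  have hratio : c / c' * (Real.pi / c) = Real.pi / c' := by field_simp
  rw [heatKernel, heatKernel, ← mul_assoc, ← Real.mul_rpow (by positivity) (by positivity), hratio]
  gcongr ?_ * Real.exp ?_
  rw [div_le_div_iff₀ hc' hc]
  have hy : 0 ≤ Real.pi ^ 2 * ‖y‖ ^ 2 := by positivity
  nlinarith

variable [FiniteDimensional ℝ V] [MeasurableSpace V] [BorelSpace V]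

lemma kernel_gaussian {c : ℝ} (hc : 0 < c) (y : V) :
    kernel (gaussian hc : 𝓢(V, ℂ)) y = (heatKernel c y : ℂ) := by
  have hcoe : (⇑(gaussian hc : 𝓢(V, ℂ))) = fun v : V => Complex.exp (-(c : ℂ) * ‖v‖ ^ 2) := by
    ext v
    rw [gaussian_apply]
    push_cast
    rfl
  rw [kernel, fourierInv_coe, Real.fourierInv_eq_fourier_neg, hcoe,
    fourier_gaussian_innerProductSpace (by simpa using hc), heatKernel, norm_neg]
  push_cast
  rw [Complex.ofReal_cpow (by have := Real.pi_pos; positivity)]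
  push_cast
  rfl

lemma norm_kernel_gaussian {c : ℝ} (hc : 0 < c) (y : V) :
    ‖kernel (gaussian hc : 𝓢(V, ℂ)) y‖ = heatKernel c y := by
  rw [kernel_gaussian, Complex.norm_real, Real.norm_of_nonneg (heatKernel_pos hc y).le]

lemma integral_kernel (a : 𝓢(V, ℂ)) : ∫ y, kernel a y = a 0 := by
  have h : 𝓕 (kernel a) 0 = a 0 := by rw [fourier_kernel]
  rw [fourier_coe, Real.fourier_eq'] at h
  simpa using h

lemma kernelMoment_zero_gaussian {c : ℝ} (hc : 0 < c) :
    kernelMoment 0 (gaussian hc : 𝓢(V, ℂ)) = 1 := by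
  have h := integral_kernel (gaussian hc : 𝓢(V, ℂ))
  simp only [kernel_gaussian, gaussian_apply, norm_zero, integral_complex_ofReal] at h
  simp only [kernelMoment, pow_zero, one_mul, norm_kernel_gaussian]
  simpa using Complex.ofReal_injective h

/-- The probability measure with density `heatKernel c`. -/
def heatMeasure (V : Type*) [NormedAddCommGroup V] [InnerProductSpace ℝ V] [FiniteDimensional ℝ V]
    [MeasurableSpace V] [BorelSpace V] (c : ℝ) : Measure V :=
  volume.withDensity fun y => ENNReal.ofReal (heatKernel c y)

lemma isProbabilityMeasure_heatMeasure {c : ℝ} (hc : 0 < c) :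
    IsProbabilityMeasure (heatMeasure V c) := by
  constructor
  have hdensity (y : V) : ENNReal.ofReal (heatKernel c y)
      = ‖y‖ₑ ^ 0 * ‖kernel (gaussian hc : 𝓢(V, ℂ)) y‖ₑ := by
    rw [pow_zero, one_mul, ← ofReal_norm, norm_kernel_gaussian]
  rw [heatMeasure, withDensity_apply _ MeasurableSet.univ, Measure.restrict_univ]
  simp only [hdensity]
  rw [← ofReal_kernelMoment, kernelMoment_zero_gaussian, ENNReal.ofReal_one]

lemma integral_heatMeasure {E : Type*} [NormedAddCommGroup E] [NormedSpace ℝ E] {c : ℝ}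
    (hc : 0 < c) (F : V → E) : ∫ y, F y ∂(heatMeasure V c) = ∫ y, heatKernel c y • F y := by
  rw [heatMeasure, integral_withDensity_eq_integral_toReal_smul
    (continuous_heatKernel c).measurable.ennreal_ofReal (ae_of_all _ fun y => by simp)]
  simp only [ENNReal.toReal_ofReal (heatKernel_pos hc _).le]

lemma integral_kernel_mul_eq_integral_heatMeasure {c : ℝ} (hc : 0 < c) (a : 𝓢(V, ℂ)) (F : V → ℂ) :
    ∫ y, kernel a y * F y = ∫ y, (kernel a y / heatKernel c y) * F y ∂(heatMeasure V c) := by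
  rw [integral_heatMeasure hc]
  refine integral_congr_ae (ae_of_all _ fun y => ?_)
  have hne : (heatKernel c y : ℂ) ≠ 0 := by exact_mod_cast (heatKernel_pos hc y).ne'
  simp only [Complex.real_smul]
  field_simp

lemma multiplier_gaussian_apply {c : ℝ} (hc : 0 < c) (u : 𝓢(V, ℂ)) (x : V) :
    multiplier (gaussian hc) u x = ∫ y, u (x - y) ∂(heatMeasure V c) := by
  rw [multiplier_apply, integral_heatMeasure hc]
  simp only [kernel_gaussian, Complex.real_smul]

end Gaussian

section Variance

variable {Ω : Type*} [MeasurableSpace Ω] {P : Measure Ω} {E F : Type*} [NormedAddCommGroup E]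
  [NormedAddCommGroup F] [InnerProductSpace ℝ F]

lemma integrable_norm_sq_of_memLp {u : Ω → E} (hu : MemLp u 2 P) :
    Integrable (fun y => ‖u y‖ ^ 2) P := hu.integrable_norm_pow two_ne_zero

lemma sq_norm_mul_add_inner_le {u m : E} {v n : F} {U : ℝ} (hu : ‖u‖ ≤ U) (hm : ‖m‖ ≤ U) :
    ‖n‖ ^ 2 * ‖u‖ ^ 2 + 2 * ‖m‖ ^ 2 * inner ℝ n (v - n)
      ≤ ‖u‖ ^ 2 * ‖v‖ ^ 2 + (1 / 2 * ‖n‖ ^ 2 * ‖u - m‖ ^ 2 + 8 * U ^ 2 * ‖v - n‖ ^ 2) := by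
  have hU : 0 ≤ U := (norm_nonneg _).trans hu
  have hv : ‖v‖ ^ 2 = ‖n‖ ^ 2 + 2 * inner ℝ n (v - n) + ‖v - n‖ ^ 2 := by
    simpa using norm_add_sq_real n (v - n)
  have hsq : |‖u‖ ^ 2 - ‖m‖ ^ 2| ≤ 2 * U * ‖u - m‖ := by
    rw [sq_sub_sq, abs_mul, abs_of_nonneg (by positivity : (0 : ℝ) ≤ ‖u‖ + ‖m‖)]
    gcongr
    · linarith
    · exact abs_norm_sub_norm_le u m
  have hcross : |(‖u‖ ^ 2 - ‖m‖ ^ 2) * inner ℝ n (v - n)| ≤ 2 * U * ‖u - m‖ * (‖n‖ * ‖v - n‖) := by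
    rw [abs_mul]
    gcongr
    exact abs_real_inner_le_norm _ _
  rw [hv]
  nlinarith [(abs_le.1 hcross).1, sq_nonneg (‖n‖ * ‖u - m‖ - 4 * U * ‖v - n‖),
    mul_nonneg (sq_nonneg ‖u‖) (sq_nonneg ‖v - n‖)]

variable [IsProbabilityMeasure P] [InnerProductSpace ℝ E] [CompleteSpace E] [CompleteSpace F]

lemma integral_norm_sub_integral_sq {u : Ω → E} (hu : MemLp u 2 P) :
    ∫ y, ‖u y - ∫ z, u z ∂P‖ ^ 2 ∂P = (∫ y, ‖u y‖ ^ 2 ∂P) - ‖∫ z, u z ∂P‖ ^ 2 := by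
  have hint : Integrable u P := hu.integrable one_le_two
  set m := ∫ z, u z ∂P with hm
  have hsq := integrable_norm_sq_of_memLp hu
  have hinner : Integrable (fun y => 2 * inner ℝ m (u y)) P := (hint.const_inner m).const_mul 2
  have hexpand (y : Ω) : ‖u y - m‖ ^ 2 = ‖u y‖ ^ 2 - 2 * inner ℝ m (u y) + ‖m‖ ^ 2 := by
    rw [norm_sub_sq_real, real_inner_comm]
  have hdiff : Integrable (fun y => ‖u y‖ ^ 2 - 2 * inner ℝ m (u y)) P := hsq.sub hinner
  simp only [hexpand]
  rw [integral_add hdiff (integrable_const _), integral_sub hsq hinner,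
    integral_const_mul, integral_inner hint m, ← hm, real_inner_self_eq_norm_sq, integral_const,
    probReal_univ, one_smul]
  ring

lemma sq_norm_integral_le {u : Ω → E} (hu : MemLp u 2 P) :
    ‖∫ y, u y ∂P‖ ^ 2 ≤ ∫ y, ‖u y‖ ^ 2 ∂P := by
  rw [← sub_nonneg, ← integral_norm_sub_integral_sq hu]
  exact integral_nonneg fun _ => sq_nonneg _

lemma sq_norm_integral_mul_le {u κ : Ω → ℂ} {C : ℝ} (hu : MemLp u 2 P)
    (hκ : AEStronglyMeasurable κ P) (hC : ∀ y, ‖κ y‖ ≤ C) (hmean : ∫ y, κ y ∂P = 0) :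
    ‖∫ y, κ y * u y ∂P‖ ^ 2 ≤ C ^ 2 * ((∫ y, ‖u y‖ ^ 2 ∂P) - ‖∫ z, u z ∂P‖ ^ 2) := by
  rw [← integral_norm_sub_integral_sq hu]
  set m := ∫ z, u z ∂P
  have hcentered : MemLp (fun y => u y - m) 2 P := hu.sub (memLp_const m)
  have hκcentered : MemLp (fun y => κ y * (u y - m)) 2 P :=
    hcentered.of_le_mul (hκ.mul hcentered.1) (ae_of_all _ fun y => by
      rw [norm_mul]
      gcongr
      exact hC y)
  have hshift : ∫ y, κ y * u y ∂P = ∫ y, κ y * (u y - m) ∂P := by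
    have hκint : Integrable κ P := Integrable.of_bound hκ C (ae_of_all _ hC)
    simp only [mul_sub]
    rw [integral_sub ((hu.integrable one_le_two).bdd_mul hκ (ae_of_all _ hC)) (hκint.mul_const m),
      integral_mul_const, hmean, zero_mul, sub_zero]
  rw [hshift, ← integral_const_mul]
  refine (sq_norm_integral_le hκcentered).trans (integral_mono
    (integrable_norm_sq_of_memLp hκcentered)
    ((integrable_norm_sq_of_memLp hcentered).const_mul _) fun y => ?_)
  simp only [norm_mul, mul_pow]
  gcongr
  exact hC y

/-- The averaged product `‖u‖² ‖v‖²` gains the variance of `u` when the mean is taken, at the sole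
expense of the variance of `v`; summed over scales, the right-hand side telescopes. -/
lemma sq_norm_mean_add_variance_le {u : Ω → E} {v : Ω → F} {U : ℝ}
    (hu : AEStronglyMeasurable u P) (hU : ∀ y, ‖u y‖ ≤ U) (hv : MemLp v 2 P) :
    ‖∫ z, u z ∂P‖ ^ 2 * ‖∫ z, v z ∂P‖ ^ 2 +
      1 / 2 * (‖∫ z, v z ∂P‖ ^ 2 * ((∫ y, ‖u y‖ ^ 2 ∂P) - ‖∫ z, u z ∂P‖ ^ 2)) ≤
    (∫ y, ‖u y‖ ^ 2 * ‖v y‖ ^ 2 ∂P) + 8 * U ^ 2 * ((∫ y, ‖v y‖ ^ 2 ∂P) - ‖∫ z, v z ∂P‖ ^ 2) := by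
  have huLp : MemLp u 2 P := MemLp.of_bound hu U (ae_of_all _ hU)
  have hvint : Integrable v P := hv.integrable one_le_two
  have hm : ‖∫ z, u z ∂P‖ ≤ U := by
    simpa using norm_integral_le_of_norm_le_const (ae_of_all P hU)
  have huv := integral_norm_sub_integral_sq huLp
  have hvv := integral_norm_sub_integral_sq hv
  set m := ∫ z, u z ∂P
  set n := ∫ z, v z ∂P with hn
  have hprod : Integrable (fun y => ‖u y‖ ^ 2 * ‖v y‖ ^ 2) P :=
    (integrable_norm_sq_of_memLp hv).bdd_mul (c := U ^ 2) (hu.norm.pow 2)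
      (ae_of_all _ fun y => by
        rw [Real.norm_of_nonneg (by positivity)]
        exact pow_le_pow_left₀ (norm_nonneg _) (hU y) 2)
  have husq := (integrable_norm_sq_of_memLp huLp).const_mul (‖n‖ ^ 2)
  have hvcentered : Integrable (fun y => v y - n) P := hvint.sub (integrable_const n)
  have hinner : Integrable (fun y => 2 * ‖m‖ ^ 2 * inner ℝ n (v y - n)) P :=
    (hvcentered.const_inner n).const_mul _
  have hudev := (integrable_norm_sq_of_memLp (huLp.sub (memLp_const m))).const_mul
    (1 / 2 * ‖n‖ ^ 2)
  have hvdev := (integrable_norm_sq_of_memLp (hv.sub (memLp_const n))).const_mul (8 * U ^ 2)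
  simp only [Pi.sub_apply] at hudev hvdev
  have hdev : Integrable (fun y => 1 / 2 * ‖n‖ ^ 2 * ‖u y - m‖ ^ 2
      + 8 * U ^ 2 * ‖v y - n‖ ^ 2) P := hudev.add hvdev
  have hmean : ∫ y, inner ℝ n (v y - n) ∂P = 0 := by
    rw [integral_inner hvcentered n, integral_sub hvint (integrable_const n), integral_const,
      probReal_univ, one_smul, ← hn,
      sub_self, inner_zero_right]
  have hmono := integral_mono (husq.add hinner) (hprod.add hdev) fun y =>
    sq_norm_mul_add_inner_le (v := v y) (n := n) (hU y) hm
  simp only [Pi.add_apply] at hmono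
  rw [integral_add husq hinner, integral_add hprod hdev, integral_add hudev hvdev,
    integral_const_mul, integral_const_mul, integral_const_mul,
    integral_const_mul, hmean, huv, hvv] at hmono
  linarith

end Variance

section GaussianCarleson

variable {V : Type*} [NormedAddCommGroup V] [InnerProductSpace ℝ V]
  [FiniteDimensional ℝ V] [MeasurableSpace V] [BorelSpace V]

lemma integrable_comp_sub_prod (P : Measure V) [IsProbabilityMeasure P] {F : V → ℝ}
    (hc : Continuous F) (hi : Integrable F) :
    Integrable (fun z : V × V => F (z.1 - z.2)) (volume.prod P) := by
  have hmeas : AEStronglyMeasurable (fun z : V × V => F (z.1 - z.2)) (volume.prod P) :=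
    (hc.comp (continuous_fst.sub continuous_snd)).aestronglyMeasurable
  rw [integrable_prod_iff' hmeas]
  refine ⟨ae_of_all _ fun y => hi.comp_sub_right y, ?_⟩
  simp only [integral_sub_right_eq_self (fun x => ‖F x‖)]
  exact integrable_const _

lemma integrable_integral_comp_sub (P : Measure V) [IsProbabilityMeasure P] {F : V → ℝ}
    (hc : Continuous F) (hi : Integrable F) : Integrable (fun x => ∫ y, F (x - y) ∂P) :=
  (integrable_comp_sub_prod P hc hi).integral_prod_left

lemma integral_integral_comp_sub (P : Measure V) [IsProbabilityMeasure P] {F : V → ℝ}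
    (hc : Continuous F) (hi : Integrable F) : ∫ x, ∫ y, F (x - y) ∂P = ∫ x, F x := by
  rw [integral_integral_swap (integrable_comp_sub_prod P hc hi)]
  simp only [integral_sub_right_eq_self F, integral_const, probReal_univ, one_smul]

lemma sq_norm_pmul_gaussian_add_le {c : ℝ} (hc : 0 < c) {b u v : 𝓢(V, ℂ)} {C U : ℝ} (hC : 0 < C)
    (hb : ∀ y, ‖kernel b y‖ ≤ C * heatKernel c y) (hb0 : b 0 = 0) (hU : ∀ x, ‖u x‖ ≤ U) (x : V) :
    ‖pmul (multiplier (gaussian hc) u) (multiplier (gaussian hc) v) x‖ ^ 2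
        + 1 / (2 * C ^ 2) * ‖pmul (multiplier b u) (multiplier (gaussian hc) v) x‖ ^ 2
      ≤ (∫ y, ‖pmul u v (x - y)‖ ^ 2 ∂(heatMeasure V c))
        + 8 * U ^ 2 * ((∫ y, ‖v (x - y)‖ ^ 2 ∂(heatMeasure V c))
          - ‖multiplier (gaussian hc) v x‖ ^ 2) := by
  have := isProbabilityMeasure_heatMeasure (V := V) hc
  have hmeas (w : 𝓢(V, ℂ)) : AEStronglyMeasurable (fun y => w (x - y)) (heatMeasure V c) :=
    (w.continuous.comp (continuous_const.sub continuous_id)).aestronglyMeasurable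
  have hmem (w : 𝓢(V, ℂ)) : MemLp (fun y => w (x - y)) 2 (heatMeasure V c) :=
    MemLp.of_bound (hmeas w) _ (ae_of_all _ fun y => w.norm_le_seminorm ℝ (x - y))
  have hpos := heatKernel_pos (V := V) hc
  have hratio : Continuous fun y => kernel b y / heatKernel c y :=
    (kernel b).continuous.div (Complex.continuous_ofReal.comp (continuous_heatKernel c))
      fun y => by exact_mod_cast (hpos y).ne'
  have hratio_le (y : V) : ‖kernel b y / heatKernel c y‖ ≤ C := by
    rw [norm_div, Complex.norm_real, Real.norm_of_nonneg (hpos y).le, div_le_iff₀ (hpos y)]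
    exact hb y
  have hmean : ∫ y, kernel b y / heatKernel c y ∂(heatMeasure V c) = 0 := by
    have h := integral_kernel_mul_eq_integral_heatMeasure hc b fun _ => 1
    simpa only [mul_one, integral_kernel, hb0, eq_comm] using h
  have henergy := sq_norm_mean_add_variance_le (hmeas u) (fun y => hU (x - y)) (hmem v)
  have hband := sq_norm_integral_mul_le (hmem u) hratio.aestronglyMeasurable hratio_le hmean
  rw [← integral_kernel_mul_eq_integral_heatMeasure hc, ← multiplier_apply,
    ← multiplier_gaussian_apply hc] at hband
  rw [← multiplier_gaussian_apply hc, ← multiplier_gaussian_apply hc] at henergy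
  simp only [pmul_apply, norm_mul, mul_pow]
  refine le_trans ?_ henergy
  have hband' := mul_le_mul_of_nonneg_right hband
    (sq_nonneg ‖multiplier (gaussian hc) v x‖)
  rw [add_le_add_iff_left, one_div_mul_eq_div, div_le_iff₀ (by positivity)]
  linarith

/-- One step of the energy decrement behind the Carleson estimate. -/
lemma l2Sq_pmul_gaussian_add_le {c : ℝ} (hc : 0 < c) {b u v : 𝓢(V, ℂ)} {C U : ℝ} (hC : 0 < C)
    (hb : ∀ y, ‖kernel b y‖ ≤ C * heatKernel c y) (hb0 : b 0 = 0) (hU : ∀ x, ‖u x‖ ≤ U) :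
    l2Sq (pmul (multiplier (gaussian hc) u) (multiplier (gaussian hc) v))
        + 1 / (2 * C ^ 2) * l2Sq (pmul (multiplier b u) (multiplier (gaussian hc) v))
      ≤ l2Sq (pmul u v) + 8 * U ^ 2 * (l2Sq v - l2Sq (multiplier (gaussian hc) v)) := by
  have := isProbabilityMeasure_heatMeasure (V := V) hc
  have hcont (w : 𝓢(V, ℂ)) : Continuous fun x => ‖w x‖ ^ 2 := w.continuous.norm.pow 2
  have hint (w : 𝓢(V, ℂ)) :=
    integrable_integral_comp_sub (heatMeasure V c) (hcont w) (integrable_norm_sq w)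
  have heq (w : 𝓢(V, ℂ)) : ∫ x, ∫ y, ‖w (x - y)‖ ^ 2 ∂(heatMeasure V c) = l2Sq w :=
    integral_integral_comp_sub (heatMeasure V c) (hcont w) (integrable_norm_sq w)
  have hdef :=
    ((hint v).sub (integrable_norm_sq (multiplier (gaussian hc) v))).const_mul (8 * U ^ 2)
  simp only [Pi.sub_apply] at hdef
  have hmono := integral_mono
    ((integrable_norm_sq _).add ((integrable_norm_sq _).const_mul _)) ((hint _).add hdef)
    (sq_norm_pmul_gaussian_add_le (v := v) hc hC hb hb0 hU)
  simp only [Pi.add_apply] at hmono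
  rwa [integral_add (integrable_norm_sq _) ((integrable_norm_sq _).const_mul _),
    integral_const_mul, integral_add (hint _) hdef, integral_const_mul,
    integral_sub (hint v) (integrable_norm_sq _), heq, heq] at hmono

/-- The Gaussian low-frequency cutoff at frequency scale `2 ^ j`. -/
def gaussianLow (V : Type*) [NormedAddCommGroup V] [InnerProductSpace ℝ V] (j : ℕ) : 𝓢(V, ℂ) :=
  gaussian (c := 4⁻¹ ^ j) (by positivity)

/-- A difference of Gaussians concentrated at frequencies `|ξ| ∼ 2 ^ j`. The larger exponent is the
one carrying `gaussianLow V (j + 1)` to `gaussianLow V j`. -/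
def gaussianBand (V : Type*) [NormedAddCommGroup V] [InnerProductSpace ℝ V] (j : ℕ) : 𝓢(V, ℂ) :=
  gaussian (c := 1 / 2 * 4⁻¹ ^ j) (by positivity) - gaussian (c := 3 / 4 * 4⁻¹ ^ j) (by positivity)

lemma multiplier_gaussian_gaussianLow_succ (j : ℕ) (u : 𝓢(V, ℂ)) :
    multiplier (gaussian (c := 3 / 4 * 4⁻¹ ^ j) (by positivity))
      (multiplier (gaussianLow V (j + 1)) u) = multiplier (gaussianLow V j) u := by
  rw [multiplier_multiplier]
  congr 2
  ext x
  rw [pmul_apply, gaussianLow, gaussianLow, gaussian_apply, gaussian_apply, gaussian_apply,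
    ← Complex.ofReal_mul, ← Real.exp_add]
  congr 2
  rw [pow_succ]
  ring

lemma kernelMoment_zero_gaussianLow (j : ℕ) : kernelMoment 0 (gaussianLow V j) = 1 :=
  kernelMoment_zero_gaussian _

lemma norm_gaussianLow_le_one (j : ℕ) (x : V) : ‖gaussianLow V j x‖ ≤ 1 :=
  kernelMoment_zero_gaussianLow (V := V) j ▸ norm_le_kernelMoment_zero _ x

lemma norm_multiplier_gaussianLow_le {u : 𝓢(V, ℂ)} {U : ℝ} (hU : ∀ x, ‖u x‖ ≤ U) (j : ℕ) (x : V) :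
    ‖multiplier (gaussianLow V j) u x‖ ≤ U := by
  have h := norm_multiplier_le (a := gaussianLow V j) hU x
  rwa [kernelMoment_zero_gaussianLow, one_mul] at h

/-- Bounds the kernel of `gaussianBand V j` relative to the heat kernel of its larger exponent. -/
def bandConst (V : Type*) [NormedAddCommGroup V] [InnerProductSpace ℝ V] : ℝ :=
  1 + (3 / 2) ^ (Module.finrank ℝ V / 2 : ℝ)

omit [FiniteDimensional ℝ V] [MeasurableSpace V] [BorelSpace V] in
lemma bandConst_pos : 0 < bandConst V := by
  unfold bandConst
  positivity

lemma norm_kernel_gaussianBand_le (j : ℕ) (y : V) :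
    ‖kernel (gaussianBand V j) y‖ ≤ bandConst V * heatKernel (3 / 4 * 4⁻¹ ^ j) y := by
  have hj : (0 : ℝ) < 4⁻¹ ^ j := by positivity
  have hle := heatKernel_le (c := 3 / 4 * 4⁻¹ ^ j) (c' := 1 / 2 * 4⁻¹ ^ j) (by positivity)
    (by linarith) y
  have hratio : (3 / 4 * 4⁻¹ ^ j) / (1 / 2 * 4⁻¹ ^ j) = (3 / 2 : ℝ) := by
    rw [mul_div_mul_right _ _ hj.ne']
    norm_num
  rw [hratio] at hle
  rw [gaussianBand, kernel_sub, sub_apply, kernel_gaussian, kernel_gaussian]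
  refine (norm_sub_le _ _).trans ?_
  have hpos := heatKernel_pos (V := V) (c := 3 / 4 * 4⁻¹ ^ j) (by positivity) y
  have hpos' := heatKernel_pos (V := V) (c := 1 / 2 * 4⁻¹ ^ j) (by positivity) y
  rw [Complex.norm_real, Complex.norm_real, Real.norm_of_nonneg hpos.le,
    Real.norm_of_nonneg hpos'.le, bandConst]
  linarith

omit [FiniteDimensional ℝ V] [MeasurableSpace V] [BorelSpace V] in
lemma gaussianBand_zero (j : ℕ) : gaussianBand V j 0 = 0 := by
  simp [gaussianBand, gaussian_apply]

lemma l2Sq_pmul_gaussianLow_add_le {u : 𝓢(V, ℂ)} {U : ℝ} (hU : ∀ x, ‖u x‖ ≤ U) (h : 𝓢(V, ℂ))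
    (j : ℕ) :
    l2Sq (pmul (multiplier (gaussianLow V j) u) (multiplier (gaussianLow V j) h))
        + 1 / (2 * bandConst V ^ 2) *
          l2Sq (pmul (multiplier (gaussianBand V j) (multiplier (gaussianLow V (j + 1)) u))
            (multiplier (gaussianLow V j) h))
      ≤ l2Sq (pmul (multiplier (gaussianLow V (j + 1)) u) (multiplier (gaussianLow V (j + 1)) h))
        + 8 * U ^ 2 * (l2Sq (multiplier (gaussianLow V (j + 1)) h)
          - l2Sq (multiplier (gaussianLow V j) h)) := by
  have hstep := l2Sq_pmul_gaussian_add_le (c := 3 / 4 * 4⁻¹ ^ j) (by positivity)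
    (v := multiplier (gaussianLow V (j + 1)) h) bandConst_pos (norm_kernel_gaussianBand_le j)
    (gaussianBand_zero j) (norm_multiplier_gaussianLow_le hU (j + 1))
  rwa [multiplier_gaussian_gaussianLow_succ, multiplier_gaussian_gaussianLow_succ] at hstep

/-- The Carleson estimate for Gaussian cutoffs, by telescoping the energy
`‖(G_j u) (G_j h)‖² + 8 U² (‖h‖² - ‖G_j h‖²)`. -/
lemma sum_l2Sq_pmul_gaussianBand_le {u : 𝓢(V, ℂ)} {U : ℝ} (hU : ∀ x, ‖u x‖ ≤ U) (h : 𝓢(V, ℂ))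
    (N : ℕ) :
    ∑ j ∈ Finset.range N, l2Sq (pmul (multiplier (gaussianBand V j)
        (multiplier (gaussianLow V (j + 1)) u)) (multiplier (gaussianLow V j) h))
      ≤ 2 * bandConst V ^ 2 * (9 * U ^ 2) * l2Sq h := by
  have hC := bandConst_pos (V := V)
  let E (j : ℕ) : ℝ :=
    l2Sq (pmul (multiplier (gaussianLow V j) u) (multiplier (gaussianLow V j) h))
      + 8 * U ^ 2 * l2Sq (multiplier (gaussianLow V j) h)
  have hsum : 1 / (2 * bandConst V ^ 2) * ∑ j ∈ Finset.range N,
      l2Sq (pmul (multiplier (gaussianBand V j) (multiplier (gaussianLow V (j + 1)) u))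
        (multiplier (gaussianLow V j) h)) ≤ E N - E 0 := by
    rw [Finset.mul_sum, ← Finset.sum_range_sub]
    refine Finset.sum_le_sum fun j _ => ?_
    simp only [E]
    linarith [l2Sq_pmul_gaussianLow_add_le hU h j]
  have hE0 : 0 ≤ E 0 := by
    have hnonneg := l2Sq_nonneg (multiplier (gaussianLow V 0) h)
    exact add_nonneg (l2Sq_nonneg _) (by positivity)
  have hlow : l2Sq (multiplier (gaussianLow V N) h) ≤ l2Sq h := by
    simpa using l2Sq_multiplier_le (norm_gaussianLow_le_one (V := V) N) h
  have hEN : E N ≤ 9 * U ^ 2 * l2Sq h := by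
    calc E N ≤ U ^ 2 * l2Sq (multiplier (gaussianLow V N) h)
          + 8 * U ^ 2 * l2Sq (multiplier (gaussianLow V N) h) := by
          simp only [E]
          rw [pmul_comm]
          gcongr
          exact l2Sq_pmul_le (norm_multiplier_gaussianLow_le hU N) _
      _ = 9 * U ^ 2 * l2Sq (multiplier (gaussianLow V N) h) := by ring
      _ ≤ 9 * U ^ 2 * l2Sq h := by gcongr
  rw [one_div_mul_eq_div, div_le_iff₀ (by positivity)] at hsum
  calc _ ≤ (E N - E 0) * (2 * bandConst V ^ 2) := hsum
    _ ≤ 9 * U ^ 2 * l2Sq h * (2 * bandConst V ^ 2) := by gcongr; linarith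
    _ = _ := by ring

end GaussianCarleson

section Cutoffs

variable {V : Type*} [NormedAddCommGroup V] [InnerProductSpace ℝ V] [FiniteDimensional ℝ V]

/-- The radial cutoff equal to `1` on the unit ball and supported in the ball of radius `2`. -/
def bump (V : Type*) [NormedAddCommGroup V] : ContDiffBump (0 : V) := ⟨1, 2, one_pos, one_lt_two⟩

lemma bump_eq_one {x : V} (h : ‖x‖ ≤ 1) : bump V x = 1 :=
  (bump V).one_of_mem_closedBall (by simpa [bump] using h)

lemma bump_eq_zero {x : V} (h : 2 ≤ ‖x‖) : bump V x = 0 :=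
  (bump V).zero_of_le_dist (by simpa [bump] using h)

omit [InnerProductSpace ℝ V] [FiniteDimensional ℝ V] in
lemma hasCompactSupport_of_le_norm [ProperSpace V] {f : V → ℂ} (R : ℝ)
    (h : ∀ x, R ≤ ‖x‖ → f x = 0) : HasCompactSupport f := by
  refine HasCompactSupport.intro (isCompact_closedBall (0 : V) R) fun x hx => h x ?_
  rw [mem_closedBall_zero_iff, not_le] at hx
  exact hx.le

/-- `bump V` as a Schwartz function. -/
def bumpSchwartz (V : Type*) [NormedAddCommGroup V] [InnerProductSpace ℝ V]
    [FiniteDimensional ℝ V] : 𝓢(V, ℂ) :=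
  (hasCompactSupport_of_le_norm (f := fun x : V => ((bump V x : ℝ) : ℂ)) 2
    fun x h => by rw [bump_eq_zero h, Complex.ofReal_zero]).toSchwartzMap
      (Complex.ofRealCLM.contDiff.comp (bump V).contDiff)

lemma bumpSchwartz_apply (x : V) : bumpSchwartz V x = ((bump V x : ℝ) : ℂ) := rfl

omit [FiniteDimensional ℝ V] in
lemma norm_inv_two_pow_smul (k : ℕ) (x : V) : ‖((2 : ℝ)⁻¹ ^ k) • x‖ = ‖x‖ / 2 ^ k := by
  rw [norm_smul, Real.norm_of_nonneg (by positivity), inv_pow, inv_mul_eq_div]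

/-- The unit `2⁻ᵏ`. -/
def invTwoPow (k : ℕ) : ℝˣ := Units.mk0 ((2 : ℝ)⁻¹ ^ k) (by positivity)

@[simp] lemma val_invTwoPow (k : ℕ) : ((invTwoPow k : ℝˣ) : ℝ) = (2 : ℝ)⁻¹ ^ k := rfl

/-- The dyadic low-pass symbol `x ↦ bump (2⁻ᵏ x)`. -/
def lowPass (V : Type*) [NormedAddCommGroup V] [InnerProductSpace ℝ V] [FiniteDimensional ℝ V]
    (k : ℕ) : 𝓢(V, ℂ) :=
  dilate (invTwoPow k) (bumpSchwartz V)

lemma lowPass_apply (k : ℕ) (x : V) :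
    lowPass V k x = ((bump V ((2 : ℝ)⁻¹ ^ k • x) : ℝ) : ℂ) := by
  rw [lowPass, dilate_apply, bumpSchwartz_apply, val_invTwoPow]

lemma lowPass_eq_one {k : ℕ} {x : V} (h : ‖x‖ ≤ 2 ^ k) : lowPass V k x = 1 := by
  rw [lowPass_apply, bump_eq_one, Complex.ofReal_one]
  rwa [norm_inv_two_pow_smul, div_le_one (by positivity)]

lemma lowPass_eq_zero {k : ℕ} {x : V} (h : 2 ^ (k + 1) ≤ ‖x‖) : lowPass V k x = 0 := by
  rw [lowPass_apply, bump_eq_zero, Complex.ofReal_zero]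
  rwa [norm_inv_two_pow_smul, le_div_iff₀ (by positivity), ← pow_succ']

lemma norm_lowPass_le_one (k : ℕ) (x : V) : ‖lowPass V k x‖ ≤ 1 := by
  rw [lowPass_apply, Complex.norm_real, Real.norm_of_nonneg (bump V).nonneg]
  exact (bump V).le_one

lemma kernelMoment_zero_lowPass [MeasurableSpace V] [BorelSpace V] (k : ℕ) :
    kernelMoment 0 (lowPass V k) = kernelMoment 0 (bumpSchwartz V) := by
  rw [lowPass, kernelMoment_dilate, pow_zero, one_mul]

/-- The Littlewood–Paley symbols: a partition of unity into `lowPass V 0` and annular pieces. -/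
def dyadicPiece (V : Type*) [NormedAddCommGroup V] [InnerProductSpace ℝ V]
    [FiniteDimensional ℝ V] : ℕ → 𝓢(V, ℂ)
  | 0 => lowPass V 0
  | k + 1 => lowPass V (k + 1) - lowPass V k

lemma dyadicPiece_succ (k : ℕ) : dyadicPiece V (k + 1) = lowPass V (k + 1) - lowPass V k := rfl

lemma dyadicPiece_succ_eq_zero {k : ℕ} {x : V} (h : ‖x‖ ≤ 2 ^ k) :
    dyadicPiece V (k + 1) x = 0 := by
  rw [dyadicPiece_succ, sub_apply, lowPass_eq_one h,
    lowPass_eq_one (h.trans (pow_le_pow_right₀ one_le_two k.le_succ)), sub_self]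

lemma dyadicPiece_eq_zero {k : ℕ} {x : V} (h : 2 ^ (k + 1) ≤ ‖x‖) : dyadicPiece V k x = 0 := by
  cases k with
  | zero => exact lowPass_eq_zero h
  | succ k =>
    rw [dyadicPiece_succ, sub_apply, lowPass_eq_zero h,
      lowPass_eq_zero ((pow_le_pow_right₀ one_le_two (k + 1).le_succ).trans h), sub_self]

lemma sum_dyadicPiece (n : ℕ) : ∑ k ∈ Finset.range (n + 1), dyadicPiece V k = lowPass V n := by
  induction n with
  | zero => rw [zero_add, Finset.sum_range_one, dyadicPiece]
  | succ n ih => rw [Finset.sum_range_succ, ih, dyadicPiece_succ, add_sub_cancel]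

lemma norm_dyadicPiece_le_one (k : ℕ) (x : V) : ‖dyadicPiece V k x‖ ≤ 1 := by
  cases k with
  | zero => exact norm_lowPass_le_one 0 x
  | succ k =>
    rw [dyadicPiece_succ, sub_apply, lowPass_apply, lowPass_apply, ← Complex.ofReal_sub,
      Complex.norm_real, Real.norm_eq_abs, abs_sub_le_iff]
    have hnonneg (y : V) : 0 ≤ bump V y := (bump V).nonneg
    have hle (y : V) : bump V y ≤ 1 := (bump V).le_one
    constructor <;> linarith [hnonneg ((2 : ℝ)⁻¹ ^ k • x), hle ((2 : ℝ)⁻¹ ^ k • x),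
      hnonneg ((2 : ℝ)⁻¹ ^ (k + 1) • x), hle ((2 : ℝ)⁻¹ ^ (k + 1) • x)]

end Cutoffs

section BandInverse

variable {V : Type*} [NormedAddCommGroup V] [InnerProductSpace ℝ V] [FiniteDimensional ℝ V]

/-- The symbol of `G_{1/4} (G_{1/2} - G_{3/4})` as a function of the squared frequency, where `G_c`
is the Gaussian cutoff `exp (-c |ξ|²)`. -/
def bandProfile (r : ℝ) : ℝ :=
  Real.exp (-(1 / 4) * r) * (Real.exp (-(1 / 2) * r) - Real.exp (-(3 / 4) * r))

lemma bandProfile_pos {r : ℝ} (h : 0 < r) : 0 < bandProfile r :=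
  mul_pos (Real.exp_pos _) (sub_pos.2 (Real.exp_lt_exp.2 (by linarith)))

/-- `1 / bandProfile (|x|²)` cut off to the annulus `1/2 ≤ |x| ≤ 2⁸`. -/
def realBandInverse (V : Type*) [NormedAddCommGroup V] [InnerProductSpace ℝ V]
    [FiniteDimensional ℝ V] (x : V) : ℝ :=
  bump V ((2 : ℝ)⁻¹ ^ 7 • x) * (1 - bump V ((2 : ℝ) • x)) / bandProfile (‖x‖ ^ 2)

lemma realBandInverse_eq_zero_of_norm_lt {x : V} (h : ‖x‖ < 1 / 2) : realBandInverse V x = 0 := by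
  rw [realBandInverse, bump_eq_one (x := (2 : ℝ) • x), sub_self, mul_zero, zero_div]
  rw [norm_smul, Real.norm_ofNat]
  linarith

lemma realBandInverse_eq_zero_of_le_norm {x : V} (h : 2 ^ 8 ≤ ‖x‖) : realBandInverse V x = 0 := by
  rw [realBandInverse, bump_eq_zero (x := (2 : ℝ)⁻¹ ^ 7 • x), zero_mul, zero_div]
  rw [norm_inv_two_pow_smul, le_div_iff₀ (by positivity)]
  linarith

lemma realBandInverse_mul_bandProfile {x : V} (h₁ : 1 ≤ ‖x‖) (h₂ : ‖x‖ ≤ 2 ^ 7) :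
    realBandInverse V x * bandProfile (‖x‖ ^ 2) = 1 := by
  rw [realBandInverse, bump_eq_one (x := (2 : ℝ)⁻¹ ^ 7 • x), bump_eq_zero (x := (2 : ℝ) • x),
    sub_zero, one_mul, div_mul_cancel₀ _ (bandProfile_pos (by positivity)).ne']
  · rw [norm_smul, Real.norm_ofNat]
    linarith
  · rwa [norm_inv_two_pow_smul, div_le_one (by positivity)]

lemma contDiff_realBandInverse :
    ContDiff ℝ ((⊤ : ℕ∞) : WithTop ℕ∞) (realBandInverse V) := by
  refine contDiff_iff_contDiffAt.2 fun x => ?_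
  have hbump (t : ℝ) : ContDiff ℝ ((⊤ : ℕ∞) : WithTop ℕ∞) fun x : V => bump V (t • x) :=
    (bump V).contDiff.comp (contDiff_const_smul t)
  rcases lt_or_ge ‖x‖ (1 / 2) with hx | hx
  · have hzero : realBandInverse V =ᶠ[nhds x] fun _ => 0 := by
      filter_upwards [(isOpen_lt continuous_norm continuous_const).mem_nhds hx] with y hy
      exact realBandInverse_eq_zero_of_norm_lt hy
    exact contDiffAt_const.congr_of_eventuallyEq hzero
  · have hpos : 0 < ‖x‖ ^ 2 := by positivity
    have hprofile : ContDiff ℝ ((⊤ : ℕ∞) : WithTop ℕ∞) fun x : V => bandProfile (‖x‖ ^ 2) := by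
      have hnorm : ContDiff ℝ ((⊤ : ℕ∞) : WithTop ℕ∞) fun x : V => ‖x‖ ^ 2 := contDiff_norm_sq ℝ
      unfold bandProfile
      fun_prop
    exact ((hbump _).contDiffAt.mul (contDiffAt_const.sub (hbump _).contDiffAt)).div
      hprofile.contDiffAt (bandProfile_pos hpos).ne'

/-- `realBandInverse V` as a Schwartz function; a local inverse of `gaussianBand` at scale `1`. -/
def bandInverse (V : Type*) [NormedAddCommGroup V] [InnerProductSpace ℝ V]
    [FiniteDimensional ℝ V] : 𝓢(V, ℂ) :=
  (hasCompactSupport_of_le_norm (f := fun x : V => ((realBandInverse V x : ℝ) : ℂ)) (2 ^ 8)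
    fun x h => by rw [realBandInverse_eq_zero_of_le_norm h, Complex.ofReal_zero]).toSchwartzMap
      (Complex.ofRealCLM.contDiff.comp contDiff_realBandInverse)

lemma bandInverse_apply (x : V) : bandInverse V x = ((realBandInverse V x : ℝ) : ℂ) := rfl

omit [InnerProductSpace ℝ V] [FiniteDimensional ℝ V] in
lemma sq_norm_div_two_pow (j : ℕ) (ξ : V) : (‖ξ‖ / 2 ^ j) ^ 2 = (4 : ℝ)⁻¹ ^ j * ‖ξ‖ ^ 2 := by
  rw [div_pow, ← pow_mul, mul_comm j 2, pow_mul, inv_pow, inv_mul_eq_div]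
  norm_num

omit [FiniteDimensional ℝ V] in
lemma gaussianBand_mul_gaussianLow_succ (j : ℕ) (ξ : V) :
    gaussianBand V j ξ * gaussianLow V (j + 1) ξ
      = ((bandProfile (‖(2 : ℝ)⁻¹ ^ j • ξ‖ ^ 2) : ℝ) : ℂ) := by
  rw [norm_inv_two_pow_smul, sq_norm_div_two_pow, gaussianBand, gaussianLow, sub_apply,
    gaussian_apply, gaussian_apply, gaussian_apply, ← Complex.ofReal_sub, ← Complex.ofReal_mul,
    bandProfile, mul_comm, pow_succ]
  ring_nf

lemma dilate_bandInverse_mul {j : ℕ} {ξ : V} (h₁ : 2 ^ j ≤ ‖ξ‖) (h₂ : ‖ξ‖ ≤ 2 ^ (j + 7)) :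
    dilate (invTwoPow j) (bandInverse V) ξ *
      (gaussianBand V j ξ * gaussianLow V (j + 1) ξ) = 1 := by
  rw [gaussianBand_mul_gaussianLow_succ, dilate_apply, val_invTwoPow, bandInverse_apply,
    ← Complex.ofReal_mul, realBandInverse_mul_bandProfile, Complex.ofReal_one]
  · rwa [norm_inv_two_pow_smul, le_div_iff₀ (by positivity), one_mul]
  · rwa [norm_inv_two_pow_smul, div_le_iff₀ (by positivity), ← pow_add, add_comm 7]

end BandInverse

section Carleson

variable {V : Type*} [NormedAddCommGroup V] [InnerProductSpace ℝ V] [FiniteDimensional ℝ V]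
  [MeasurableSpace V] [BorelSpace V]

lemma sum_div_two_pow_le_one {r : ℝ} (hr : 0 ≤ r) (N : ℕ) :
    ∑ j ∈ Finset.range N, r / 2 ^ j / ((1 + r / 2 ^ j) * (2 + r / 2 ^ j)) ≤ 1 := by
  have htelescope (j : ℕ) : r / 2 ^ j / ((1 + r / 2 ^ j) * (2 + r / 2 ^ j)) =
      (r / 2 ^ j) / (1 + r / 2 ^ j) - (r / 2 ^ (j + 1)) / (1 + r / 2 ^ (j + 1)) := by
    have ht : 0 ≤ r / 2 ^ j := by positivity
    rw [pow_succ, ← div_div r]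
    set t := r / 2 ^ j
    field_simp
    ring
  simp only [htelescope]
  rw [Finset.sum_range_sub']
  have hfirst : r / 2 ^ 0 / (1 + r / 2 ^ 0) ≤ 1 := by
    rw [div_le_one (by positivity)]
    linarith
  have hlast : 0 ≤ r / 2 ^ N / (1 + r / 2 ^ N) := by positivity
  linarith

lemma mul_exp_neg_sq_le {t : ℝ} (ht : 0 ≤ t) :
    t * Real.exp (-2 * t ^ 2) ≤ 4 * (t / ((1 + t) * (2 + t))) := by
  have hexp : (1 + t) * (2 + t) ≤ 4 * Real.exp (2 * t ^ 2) := by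
    nlinarith [Real.add_one_le_exp (2 * t ^ 2), sq_nonneg (t - 3 / 14)]
  rw [neg_mul, Real.exp_neg, ← div_eq_mul_inv, ← mul_div_assoc,
    div_le_div_iff₀ (Real.exp_pos _) (by positivity)]
  calc t * ((1 + t) * (2 + t)) ≤ t * (4 * Real.exp (2 * t ^ 2)) := by gcongr
    _ = 4 * t * Real.exp (2 * t ^ 2) := by ring

lemma sum_div_two_pow_mul_exp_le {r : ℝ} (hr : 0 ≤ r) (N : ℕ) :
    ∑ j ∈ Finset.range N, r / 2 ^ j * Real.exp (-2 * (r / 2 ^ j) ^ 2) ≤ 4 := by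
  refine (Finset.sum_le_sum fun j _ => mul_exp_neg_sq_le (t := r / 2 ^ j) (by positivity)).trans ?_
  rw [← Finset.mul_sum]
  linarith [sum_div_two_pow_le_one hr N]

lemma sq_norm_fourier_multiplier_gaussianLow (j : ℕ) (h : 𝓢(V, ℂ)) (ξ : V) :
    ‖𝓕 (multiplier (gaussianLow V j) h) ξ‖ ^ 2
      = Real.exp (-2 * (‖ξ‖ / 2 ^ j) ^ 2) * ‖𝓕 h ξ‖ ^ 2 := by
  rw [fourier_multiplier_apply, norm_mul, gaussianLow, gaussian_apply, Complex.norm_real,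
    Real.norm_of_nonneg (Real.exp_pos _).le, mul_pow, ← Real.exp_nat_mul, sq_norm_div_two_pow]
  ring_nf

lemma sum_halfEnergy_gaussianLow_le (h : 𝓢(V, ℂ)) (N : ℕ) :
    ∑ j ∈ Finset.range N, (2 : ℝ)⁻¹ ^ j * halfEnergy (multiplier (gaussianLow V j) h)
      ≤ 4 * l2Sq h := by
  simp only [halfEnergy, ← integral_const_mul]
  rw [← integral_finsetSum _ (fun j _ => (integrable_halfEnergy _).const_mul _), ← l2Sq_fourier h,
    l2Sq, ← integral_const_mul]
  refine integral_mono (integrable_finsetSum _ fun j _ => (integrable_halfEnergy _).const_mul _)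
    ((integrable_norm_sq _).const_mul _) fun ξ => ?_
  have hterm (j : ℕ) : (2 : ℝ)⁻¹ ^ j * (‖ξ‖ * ‖𝓕 (multiplier (gaussianLow V j) h) ξ‖ ^ 2) =
      ‖ξ‖ / 2 ^ j * Real.exp (-2 * (‖ξ‖ / 2 ^ j) ^ 2) * ‖𝓕 h ξ‖ ^ 2 := by
    rw [sq_norm_fourier_multiplier_gaussianLow, inv_pow]
    ring
  simp only [hterm, ← Finset.sum_mul]
  gcongr
  exact sum_div_two_pow_mul_exp_le (norm_nonneg ξ) N

/-- The constant of `sum_l2Sq_pmul_multiplier_le`. -/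
def gaussianCarlesonConst (V : Type*) [NormedAddCommGroup V] [InnerProductSpace ℝ V]
    [FiniteDimensional ℝ V] [MeasurableSpace V] [BorelSpace V] : ℝ :=
  2 * kernelMoment 0 (bandInverse V) ^ 2 * (2 * bandConst V ^ 2 * 9) +
    8 * Real.pi * 4 * kernelMoment 0 (bandInverse V) *
      (kernelMoment 0 (bandInverse V) + kernelMoment 1 (bandInverse V)) * 4

lemma multiplier_eq_multiplier_gaussianBand {m : 𝓢(V, ℂ)} {j : ℕ}
    (hm : ∀ ξ, m ξ ≠ 0 → 2 ^ j ≤ ‖ξ‖ ∧ ‖ξ‖ ≤ 2 ^ (j + 7)) (u : 𝓢(V, ℂ)) :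
    multiplier m u = multiplier (pmul m (dilate (invTwoPow j) (bandInverse V)))
      (multiplier (gaussianBand V j) (multiplier (gaussianLow V (j + 1)) u)) := by
  rw [multiplier_multiplier, multiplier_multiplier]
  congr 2
  ext ξ
  simp only [pmul_apply]
  by_cases hz : m ξ = 0
  · simp only [hz, zero_mul]
  · rw [mul_assoc, mul_assoc, dilate_bandInverse_mul (hm ξ hz).1 (hm ξ hz).2, mul_one]

lemma norm_multiplier_gaussianBand_le {u : 𝓢(V, ℂ)} {U : ℝ} (hU : ∀ x, ‖u x‖ ≤ U) (j : ℕ) (x : V) :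
    ‖multiplier (gaussianBand V j) u x‖ ≤ 2 * U := by
  have hU0 : 0 ≤ U := (norm_nonneg _).trans (hU 0)
  refine (norm_multiplier_le hU x).trans ?_
  gcongr
  refine (kernelMoment_sub_le _ _ _).trans ?_
  rw [kernelMoment_zero_gaussian, kernelMoment_zero_gaussian]
  norm_num

lemma l2Sq_pmul_multiplier_gaussianLow_le {m u h : 𝓢(V, ℂ)} {j : ℕ} {U A : ℝ}
    (hU : ∀ x, ‖u x‖ ≤ U) (hm : ∀ ξ, m ξ ≠ 0 → 2 ^ j ≤ ‖ξ‖ ∧ ‖ξ‖ ≤ 2 ^ (j + 7))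
    (h0 : kernelMoment 0 m ≤ A) (h1 : kernelMoment 1 m ≤ A * (2 : ℝ)⁻¹ ^ j) :
    l2Sq (pmul (multiplier m u) (multiplier (gaussianLow V j) h)) ≤
      2 * (A * kernelMoment 0 (bandInverse V)) ^ 2 *
          l2Sq (pmul (multiplier (gaussianBand V j) (multiplier (gaussianLow V (j + 1)) u))
            (multiplier (gaussianLow V j) h))
        + 8 * Real.pi * (2 * U) ^ 2 * (A * kernelMoment 0 (bandInverse V)) *
          (A * (kernelMoment 0 (bandInverse V) + kernelMoment 1 (bandInverse V))) *
          ((2 : ℝ)⁻¹ ^ j * halfEnergy (multiplier (gaussianLow V j) h)) := by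
  have hA : 0 ≤ A := (kernelMoment_nonneg _ _).trans h0
  set T₀ := kernelMoment 0 (bandInverse V)
  set T₁ := kernelMoment 1 (bandInverse V)
  have hT₀ : 0 ≤ T₀ := kernelMoment_nonneg _ _
  have hT₁ : 0 ≤ T₁ := kernelMoment_nonneg _ _
  rw [multiplier_eq_multiplier_gaussianBand hm]
  set K := pmul m (dilate (invTwoPow j) (bandInverse V))
  have hK₀ : kernelMoment 0 K ≤ A * T₀ := by
    refine (kernelMoment_zero_pmul_le _ _).trans ?_
    rw [kernelMoment_dilate, pow_zero, one_mul]
    gcongr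
  have hK₁ : kernelMoment 1 K ≤ A * (T₀ + T₁) * (2 : ℝ)⁻¹ ^ j := by
    refine (kernelMoment_one_pmul_le _ _).trans ?_
    rw [kernelMoment_dilate, kernelMoment_dilate, val_invTwoPow, abs_of_nonneg (by positivity),
      pow_zero, pow_one, one_mul]
    calc _ ≤ (A * (2 : ℝ)⁻¹ ^ j) * T₀ + A * ((2 : ℝ)⁻¹ ^ j * T₁) := by gcongr
      _ = _ := by ring
  refine (l2Sq_pmul_multiplier_le
    (norm_multiplier_gaussianBand_le (norm_multiplier_gaussianLow_le hU _) j)).trans ?_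
  have hY := halfEnergy_nonneg (multiplier (gaussianLow V j) h)
  have hq := l2Sq_nonneg (pmul (multiplier (gaussianBand V j)
    (multiplier (gaussianLow V (j + 1)) u)) (multiplier (gaussianLow V j) h))
  have hK₀' := kernelMoment_nonneg 0 K
  have hK₁' := kernelMoment_nonneg 1 K
  rw [← mul_assoc _ ((2 : ℝ)⁻¹ ^ j), mul_assoc _ (A * (T₀ + T₁)) ((2 : ℝ)⁻¹ ^ j)]
  gcongr

lemma sum_l2Sq_pmul_multiplier_le (m : ℕ → 𝓢(V, ℂ)) (u h : 𝓢(V, ℂ)) {U A : ℝ}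
    (hU : ∀ x, ‖u x‖ ≤ U) (hm : ∀ j ξ, m j ξ ≠ 0 → 2 ^ j ≤ ‖ξ‖ ∧ ‖ξ‖ ≤ 2 ^ (j + 7))
    (h0 : ∀ j, kernelMoment 0 (m j) ≤ A) (h1 : ∀ j, kernelMoment 1 (m j) ≤ A * (2 : ℝ)⁻¹ ^ j)
    (N : ℕ) :
    ∑ j ∈ Finset.range N, l2Sq (pmul (multiplier (m j) u) (multiplier (gaussianLow V j) h)) ≤
      gaussianCarlesonConst V * (A ^ 2 * U ^ 2) * l2Sq h := by
  have hA : 0 ≤ A := (kernelMoment_nonneg _ _).trans (h0 0)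
  have hT₀ := kernelMoment_nonneg 0 (bandInverse V)
  have hT₁ := kernelMoment_nonneg 1 (bandInverse V)
  have := Real.pi_pos
  refine (Finset.sum_le_sum fun j _ =>
    l2Sq_pmul_multiplier_gaussianLow_le hU (hm j) (h0 j) (h1 j)).trans ?_
  rw [Finset.sum_add_distrib, ← Finset.mul_sum, ← Finset.mul_sum]
  grw [sum_l2Sq_pmul_gaussianBand_le hU h N, sum_halfEnergy_gaussianLow_le h N]
  unfold gaussianCarlesonConst
  exact le_of_eq (by ring)

end Carleson

section Duality

variable {V : Type*} [NormedAddCommGroup V] [InnerProductSpace ℝ V] [FiniteDimensional ℝ V]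
  [MeasurableSpace V] [BorelSpace V]

/-- The real `L²` inner product of Schwartz functions. -/
def l2Inner (f g : 𝓢(V, ℂ)) : ℝ := ∫ x, inner ℝ (f x) (g x)

lemma real_inner_eq_sq_norm_add_sub_sq_norm_sub (z w : ℂ) :
    (inner ℝ z w : ℝ) = (1 / 4) * (‖z + w‖ ^ 2 - ‖z - w‖ ^ 2) := by
  rw [norm_add_sq_real, norm_sub_sq_real]
  ring

lemma integrable_inner (f g : 𝓢(V, ℂ)) : Integrable fun x => (inner ℝ (f x) (g x) : ℝ) := by
  simp only [real_inner_eq_sq_norm_add_sub_sq_norm_sub]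
  exact ((integrable_norm_sq (f + g)).sub (integrable_norm_sq (f - g))).const_mul _

lemma l2Inner_eq (f g : 𝓢(V, ℂ)) : l2Inner f g = (1 / 4) * (l2Sq (f + g) - l2Sq (f - g)) := by
  rw [l2Inner, l2Sq, l2Sq, ← integral_sub (integrable_norm_sq _) (integrable_norm_sq _),
    ← integral_const_mul]
  exact integral_congr_ae (.of_forall fun x => real_inner_eq_sq_norm_add_sub_sq_norm_sub _ _)

lemma l2Inner_fourier (f g : 𝓢(V, ℂ)) : l2Inner (𝓕 f) (𝓕 g) = l2Inner f g := by
  rw [l2Inner_eq, l2Inner_eq, ← FourierTransform.fourier_add, ← fourier_sub,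
    l2Sq_fourier, l2Sq_fourier]

lemma l2Inner_self (f : 𝓢(V, ℂ)) : l2Inner f f = l2Sq f :=
  integral_congr_ae (.of_forall fun _ => real_inner_self_eq_norm_sq _)

lemma sum_l2Inner {ι : Type*} (s : Finset ι) (f : ι → 𝓢(V, ℂ)) (g : 𝓢(V, ℂ)) :
    l2Inner (∑ i ∈ s, f i) g = ∑ i ∈ s, l2Inner (f i) g := by
  simp only [l2Inner, sum_apply, sum_inner]
  exact integral_finsetSum _ fun i _ => integrable_inner _ _

lemma l2Inner_multiplier {r : V → ℝ} {a : 𝓢(V, ℂ)} (ha : ∀ x, a x = (r x : ℂ)) (f g : 𝓢(V, ℂ)) :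
    l2Inner (multiplier a f) g = l2Inner f (multiplier a g) := by
  rw [← l2Inner_fourier, ← l2Inner_fourier f]
  refine integral_congr_ae (.of_forall fun x => ?_)
  simp only [fourier_multiplier_apply, ha]
  rw [← Complex.real_smul, ← Complex.real_smul, real_inner_smul_left, real_inner_smul_right]

lemma mul_le_weighted_sq_add_sq (a b : ℝ) {ε : ℝ} (hε : 0 < ε) :
    a * b ≤ ε / 2 * a ^ 2 + 1 / (2 * ε) * b ^ 2 := by
  have hsq : (ε * a - b) ^ 2 / (2 * ε) = ε / 2 * a ^ 2 + 1 / (2 * ε) * b ^ 2 - a * b := by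
    field_simp
    ring
  linarith [show 0 ≤ (ε * a - b) ^ 2 / (2 * ε) by positivity]

lemma l2Inner_pmul_le (F G v : 𝓢(V, ℂ)) {ε : ℝ} (hε : 0 < ε) :
    l2Inner (pmul F G) v ≤ ε / 2 * l2Sq F + 1 / (2 * ε) * l2Sq (pmul G v) := by
  have hF := (integrable_norm_sq F).const_mul (ε / 2)
  have hG := (integrable_norm_sq (pmul G v)).const_mul (1 / (2 * ε))
  rw [l2Inner, l2Sq, l2Sq, ← integral_const_mul, ← integral_const_mul, ← integral_add hF hG]
  refine integral_mono (integrable_inner _ _) (hF.add hG) fun x => ?_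
  refine (real_inner_le_norm _ _).trans ?_
  simp only [pmul_apply, norm_mul, mul_assoc]
  exact mul_le_weighted_sq_add_sq _ _ hε

omit [FiniteDimensional ℝ V] [MeasurableSpace V] [BorelSpace V] in
lemma gaussianLow_apply (j : ℕ) (ξ : V) :
    gaussianLow V j ξ = ((Real.exp (-(‖ξ‖ / 2 ^ j) ^ 2) : ℝ) : ℂ) := by
  rw [gaussianLow, gaussian_apply, sq_norm_div_two_pow, neg_mul]

lemma fourier_sub_multiplier_gaussianLow (j : ℕ) (p : 𝓢(V, ℂ)) (ζ : V) :
    𝓕 (p - multiplier (gaussianLow V j) p) ζ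
      = ((1 - Real.exp (-(‖ζ‖ / 2 ^ j) ^ 2) : ℝ) : ℂ) * 𝓕 p ζ := by
  rw [fourier_sub, sub_apply, fourier_multiplier_apply, gaussianLow_apply, Complex.ofReal_sub,
    Complex.ofReal_one, sub_mul, one_mul]

lemma sq_one_sub_exp_neg_sq_le {t b : ℝ} (ht : 0 ≤ t) (hb : t ≤ b) :
    (1 - Real.exp (-t ^ 2)) ^ 2 ≤ b * (1 + b) * (2 + b) * (t / ((1 + t) * (2 + t))) := by
  have hle : Real.exp (-t ^ 2) ≤ 1 := Real.exp_le_one_iff.2 (by nlinarith)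
  have hge : 1 - Real.exp (-t ^ 2) ≤ t ^ 2 := by linarith [Real.add_one_le_exp (-t ^ 2)]
  have hpos := Real.exp_pos (-t ^ 2)
  have hb0 : 0 ≤ b := ht.trans hb
  calc (1 - Real.exp (-t ^ 2)) ^ 2 ≤ t ^ 2 := by nlinarith
    _ ≤ b * t := by nlinarith
    _ = b * (1 + t) * (2 + t) * (t / ((1 + t) * (2 + t))) := by field_simp
    _ ≤ b * (1 + b) * (2 + b) * (t / ((1 + t) * (2 + t))) := by gcongr

/-- The multiplicity constant of `l2Sq_sum_sub_multiplier_gaussianLow_le`. -/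
def lowFreqConst (c : ℕ) : ℝ := (2 : ℝ) ^ c * (1 + 2 ^ c) * (2 + 2 ^ c)

lemma lowFreqConst_pos (c : ℕ) : 0 < lowFreqConst c := by
  unfold lowFreqConst
  positivity

lemma l2Sq_sum_sub_multiplier_gaussianLow_le {c : ℕ} {p : ℕ → 𝓢(V, ℂ)}
    (hp : ∀ j ξ, 𝓕 (p j) ξ ≠ 0 → ‖ξ‖ ≤ 2 ^ (j + c)) (N : ℕ) :
    l2Sq (∑ j ∈ Finset.range N, (p j - multiplier (gaussianLow V j) (p j)))
      ≤ lowFreqConst c * ∑ j ∈ Finset.range N, l2Sq (p j) := by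
  have hc := lowFreqConst_pos c
  refine l2Sq_le_sum_of_fourier_le (Finset.range N)
    (fun j ζ => if ‖ζ‖ ≤ 2 ^ (j + c) then 1 - Real.exp (-(‖ζ‖ / 2 ^ j) ^ 2) else 0) p _
    (fun ζ => ?_) (fun ζ => ?_)
  · calc _ ≤ ∑ j ∈ Finset.range N,
          lowFreqConst c * (‖ζ‖ / 2 ^ j / ((1 + ‖ζ‖ / 2 ^ j) * (2 + ‖ζ‖ / 2 ^ j))) := by
          refine Finset.sum_le_sum fun j _ => ?_
          split_ifs with h
          · refine sq_one_sub_exp_neg_sq_le (by positivity) ?_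
            rwa [div_le_iff₀ (by positivity), ← pow_add, add_comm c]
          · rw [zero_pow two_ne_zero]
            positivity
      _ ≤ lowFreqConst c * 1 := by
          rw [← Finset.mul_sum]
          gcongr
          exact sum_div_two_pow_le_one (norm_nonneg ζ) N
      _ = lowFreqConst c := mul_one _
  · rw [FourierTransform.fourier_sum, sum_apply]
    refine (norm_sum_le _ _).trans (Finset.sum_le_sum fun j _ => ?_)
    by_cases hz : 𝓕 (p j) ζ = 0
    · rw [fourier_sub_multiplier_gaussianLow, hz, mul_zero, norm_zero, mul_zero]
    · have hle : Real.exp (-(‖ζ‖ / 2 ^ j) ^ 2) ≤ 1 :=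
        Real.exp_le_one_iff.2 (neg_nonpos.2 (sq_nonneg _))
      rw [if_pos (hp j ζ hz), fourier_sub_multiplier_gaussianLow, norm_mul, Complex.norm_real,
        Real.norm_of_nonneg (sub_nonneg.2 hle)]

lemma gaussianCarlesonConst_nonneg : 0 ≤ gaussianCarlesonConst V := by
  have h0 := kernelMoment_nonneg 0 (bandInverse V)
  have h1 := kernelMoment_nonneg 1 (bandInverse V)
  have := Real.pi_pos
  unfold gaussianCarlesonConst
  positivity

/-- The dual form of `sum_l2Sq_pmul_multiplier_le`: the adjoint of `v ↦ ((m_j u) (G_j v))_j` is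
estimated by pairing with its own output. -/
lemma l2Sq_sum_gaussianLow_pmul_le (m F : ℕ → 𝓢(V, ℂ)) (u : 𝓢(V, ℂ)) {U A : ℝ} (hU0 : 0 < U)
    (hA : 0 < A) (hU : ∀ x, ‖u x‖ ≤ U)
    (hm : ∀ j ξ, m j ξ ≠ 0 → 2 ^ j ≤ ‖ξ‖ ∧ ‖ξ‖ ≤ 2 ^ (j + 7))
    (h0 : ∀ j, kernelMoment 0 (m j) ≤ A) (h1 : ∀ j, kernelMoment 1 (m j) ≤ A * (2 : ℝ)⁻¹ ^ j)
    (N : ℕ) :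
    l2Sq (∑ j ∈ Finset.range N, multiplier (gaussianLow V j) (pmul (F j) (multiplier (m j) u))) ≤
      (gaussianCarlesonConst V + 1) * (A ^ 2 * U ^ 2) * ∑ j ∈ Finset.range N, l2Sq (F j) := by
  set S := ∑ j ∈ Finset.range N, multiplier (gaussianLow V j) (pmul (F j) (multiplier (m j) u))
    with hS
  set K := (gaussianCarlesonConst V + 1) * (A ^ 2 * U ^ 2) with hK
  have hconst := gaussianCarlesonConst_nonneg (V := V)
  have hKpos : 0 < K := by positivity
  have hpair : l2Sq S ≤ K / 2 * ∑ j ∈ Finset.range N, l2Sq (F j) + 1 / (2 * K) *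
      ∑ j ∈ Finset.range N, l2Sq (pmul (multiplier (m j) u) (multiplier (gaussianLow V j) S)) := by
    rw [← l2Inner_self]
    nth_rw 1 [hS]
    rw [sum_l2Inner, Finset.mul_sum, Finset.mul_sum, ← Finset.sum_add_distrib]
    refine Finset.sum_le_sum fun j _ => ?_
    rw [l2Inner_multiplier fun x => gaussianLow_apply j x]
    exact l2Inner_pmul_le _ _ _ hKpos
  have hcarleson : ∑ j ∈ Finset.range N,
      l2Sq (pmul (multiplier (m j) u) (multiplier (gaussianLow V j) S)) ≤ K * l2Sq S := by
    refine (sum_l2Sq_pmul_multiplier_le m u S hU hm h0 h1 N).trans ?_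
    have hSnonneg := l2Sq_nonneg S
    rw [hK]
    gcongr
    linarith
  have habsorb : 1 / (2 * K) * (K * l2Sq S) = l2Sq S / 2 := by field_simp
  have hscaled := mul_le_mul_of_nonneg_left hcarleson (by positivity : 0 ≤ 1 / (2 * K))
  linarith

/-- The constant of `l2Sq_sum_pmul_multiplier_le`. -/
def paraproductConst (V : Type*) [NormedAddCommGroup V] [InnerProductSpace ℝ V]
    [FiniteDimensional ℝ V] [MeasurableSpace V] [BorelSpace V] (c : ℕ) : ℝ :=
  2 * (gaussianCarlesonConst V + 1) + 2 * lowFreqConst c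

lemma l2Sq_sum_pmul_multiplier_le (c : ℕ) (m F : ℕ → 𝓢(V, ℂ)) (u : 𝓢(V, ℂ)) {U A : ℝ}
    (hU0 : 0 < U) (hA : 0 < A) (hU : ∀ x, ‖u x‖ ≤ U)
    (hm : ∀ j ξ, m j ξ ≠ 0 → 2 ^ j ≤ ‖ξ‖ ∧ ‖ξ‖ ≤ 2 ^ (j + 7))
    (h0 : ∀ j, kernelMoment 0 (m j) ≤ A) (h1 : ∀ j, kernelMoment 1 (m j) ≤ A * (2 : ℝ)⁻¹ ^ j)
    (hp : ∀ j ξ, 𝓕 (pmul (F j) (multiplier (m j) u)) ξ ≠ 0 → ‖ξ‖ ≤ 2 ^ (j + c)) (N : ℕ) :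
    l2Sq (∑ j ∈ Finset.range N, pmul (F j) (multiplier (m j) u)) ≤
      paraproductConst V c * (A ^ 2 * U ^ 2) * ∑ j ∈ Finset.range N, l2Sq (F j) := by
  set p := fun j => pmul (F j) (multiplier (m j) u)
  have hc := lowFreqConst_pos c
  have hsplit : ∑ j ∈ Finset.range N, p j
      = ∑ j ∈ Finset.range N, multiplier (gaussianLow V j) (p j)
        + ∑ j ∈ Finset.range N, (p j - multiplier (gaussianLow V j) (p j)) := by
    simp only [← Finset.sum_add_distrib, add_sub_cancel]
  have hproducts : ∑ j ∈ Finset.range N, l2Sq (p j)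
      ≤ A ^ 2 * U ^ 2 * ∑ j ∈ Finset.range N, l2Sq (F j) := by
    rw [Finset.mul_sum, ← mul_pow]
    refine Finset.sum_le_sum fun j _ => l2Sq_pmul_le (fun x => ?_) _
    refine (norm_multiplier_le hU x).trans ?_
    gcongr
    exact h0 j
  rw [hsplit]
  refine (l2Sq_add_le _ _).trans ?_
  grw [l2Sq_sum_gaussianLow_pmul_le m F u hU0 hA hU hm h0 h1 N,
    l2Sq_sum_sub_multiplier_gaussianLow_le hp N, hproducts, paraproductConst]
  exact le_of_eq (by ring)

end Duality

section FourierSupport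

variable {V : Type*} [NormedAddCommGroup V] [InnerProductSpace ℝ V] [FiniteDimensional ℝ V]

lemma norm_le_of_lowPass_ne_zero {k : ℕ} {ξ : V} (h : lowPass V k ξ ≠ 0) : ‖ξ‖ ≤ 2 ^ (k + 1) :=
  le_of_not_ge fun hξ => h (lowPass_eq_zero hξ)

lemma norm_le_of_dyadicPiece_ne_zero {k : ℕ} {ξ : V} (h : dyadicPiece V k ξ ≠ 0) :
    ‖ξ‖ ≤ 2 ^ (k + 1) :=
  le_of_not_ge fun hξ => h (dyadicPiece_eq_zero hξ)

lemma le_norm_of_dyadicPiece_succ_ne_zero {k : ℕ} {ξ : V} (h : dyadicPiece V (k + 1) ξ ≠ 0) :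
    2 ^ k ≤ ‖ξ‖ :=
  le_of_not_ge fun hξ => h (dyadicPiece_succ_eq_zero hξ)

lemma sum_dyadicPiece_add (k n : ℕ) :
    ∑ i ∈ Finset.range n, dyadicPiece V (k + 1 + i) = lowPass V (k + n) - lowPass V k := by
  simp only [add_right_comm k 1, dyadicPiece_succ]
  exact Finset.sum_range_sub (fun i => lowPass V (k + i)) n

variable [MeasurableSpace V] [BorelSpace V]

lemma multiplier_congr {a b f : 𝓢(V, ℂ)} (h : ∀ ξ, 𝓕 f ξ ≠ 0 → a ξ = b ξ) :
    multiplier a f = multiplier b f := by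
  refine ext_fourier fun ξ => ?_
  rw [fourier_multiplier_apply, fourier_multiplier_apply]
  by_cases hz : 𝓕 f ξ = 0
  · rw [hz, mul_zero, mul_zero]
  · rw [h ξ hz]

lemma symbol_ne_zero_of_fourier_multiplier_ne_zero {a f : 𝓢(V, ℂ)} {ξ : V}
    (h : 𝓕 (multiplier a f) ξ ≠ 0) : a ξ ≠ 0 :=
  left_ne_zero_of_mul (fourier_multiplier_apply a f ξ ▸ h)

lemma fourier_ne_zero_of_fourier_multiplier_ne_zero {a f : 𝓢(V, ℂ)} {ξ : V}
    (h : 𝓕 (multiplier a f) ξ ≠ 0) : 𝓕 f ξ ≠ 0 :=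
  right_ne_zero_of_mul (fourier_multiplier_apply a f ξ ▸ h)

lemma norm_le_of_fourier_pmul_ne_zero {f g : 𝓢(V, ℂ)} {R S : ℝ} (hf : ∀ ξ, 𝓕 f ξ ≠ 0 → ‖ξ‖ ≤ R)
    (hg : ∀ ξ, 𝓕 g ξ ≠ 0 → ‖ξ‖ ≤ S) {ζ : V} (h : 𝓕 (pmul f g) ζ ≠ 0) : ‖ζ‖ ≤ R + S := by
  by_contra hζ
  refine h (fourier_pmul_eq_zero fun η hη => by_contra fun hζη => hζ ?_)
  rw [← add_sub_cancel η ζ]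
  exact norm_add_le_of_le (hf _ hη) (hg _ hζη)

lemma le_norm_of_fourier_pmul_ne_zero {f g : 𝓢(V, ℂ)} {R S : ℝ} (hf : ∀ ξ, 𝓕 f ξ ≠ 0 → ‖ξ‖ ≤ R)
    (hg : ∀ ξ, 𝓕 g ξ ≠ 0 → S ≤ ‖ξ‖) {ζ : V} (h : 𝓕 (pmul f g) ζ ≠ 0) : S - R ≤ ‖ζ‖ := by
  by_contra hζ
  refine h (fourier_pmul_eq_zero fun η hη => by_contra fun hζη => hζ ?_)
  linarith [norm_sub_le ζ η, hf _ hη, hg _ hζη]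

lemma annulus_of_fourier_pmul_ne_zero {f g : 𝓢(V, ℂ)} {k : ℕ}
    (hf : ∀ ξ, 𝓕 f ξ ≠ 0 → ‖ξ‖ ≤ 2 ^ (k + 1))
    (hg : ∀ ξ, 𝓕 g ξ ≠ 0 → 2 ^ (k + 2) ≤ ‖ξ‖ ∧ ‖ξ‖ ≤ 2 ^ (k + 4)) {ζ : V}
    (h : 𝓕 (pmul f g) ζ ≠ 0) : 2 ^ (k + 1) ≤ ‖ζ‖ ∧ ‖ζ‖ ≤ 2 ^ (k + 5) := by
  have hlow := le_norm_of_fourier_pmul_ne_zero hf (fun ξ hξ => (hg ξ hξ).1) h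
  have hhigh := norm_le_of_fourier_pmul_ne_zero hf (fun ξ hξ => (hg ξ hξ).2) h
  have hk : (0 : ℝ) < 2 ^ k := by positivity
  simp only [pow_add] at hlow hhigh ⊢
  constructor <;> linarith

lemma annulus_of_fourier_multiplier_dyadicPiece_ne_zero {k : ℕ} {f : 𝓢(V, ℂ)} {ξ : V}
    (h : 𝓕 (multiplier (dyadicPiece V (k + 3)) f) ξ ≠ 0) :
    2 ^ (k + 2) ≤ ‖ξ‖ ∧ ‖ξ‖ ≤ 2 ^ (k + 4) :=
  have hpiece := symbol_ne_zero_of_fourier_multiplier_ne_zero h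
  ⟨le_norm_of_dyadicPiece_succ_ne_zero hpiece, norm_le_of_dyadicPiece_ne_zero hpiece⟩

/-- The multiplicity constant of `l2Sq_sum_le_of_annulus`. -/
def annulusConst (a b : ℕ) : ℝ := (1 + 2 ^ b) * (2 + 2 ^ b) / 2 ^ a

lemma annulusConst_nonneg (a b : ℕ) : 0 ≤ annulusConst a b := by
  unfold annulusConst
  positivity

lemma one_le_annulusConst_mul {a b : ℕ} {t : ℝ} (ha : 2 ^ a ≤ t) (hb : t ≤ 2 ^ b) :
    1 ≤ annulusConst a b * (t / ((1 + t) * (2 + t))) := by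
  have ht : 0 < t := lt_of_lt_of_le (by positivity) ha
  rw [annulusConst, div_mul_div_comm, le_div_iff₀ (by positivity), one_mul]
  calc 2 ^ a * ((1 + t) * (2 + t)) ≤ t * ((1 + 2 ^ b) * (2 + 2 ^ b)) := by gcongr
    _ = (1 + 2 ^ b) * (2 + 2 ^ b) * t := mul_comm _ _

open scoped Classical in
lemma sum_ite_annulus_le (a b : ℕ) {r : ℝ} (hr : 0 ≤ r) (N : ℕ) :
    ∑ j ∈ Finset.range N, (if 2 ^ (j + a) ≤ r ∧ r ≤ 2 ^ (j + b) then (1 : ℝ) else 0)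
      ≤ annulusConst a b := by
  have hC := annulusConst_nonneg a b
  calc _ ≤ ∑ j ∈ Finset.range N,
        annulusConst a b * (r / 2 ^ j / ((1 + r / 2 ^ j) * (2 + r / 2 ^ j))) := by
        refine Finset.sum_le_sum fun j _ => ?_
        split_ifs with h
        · refine one_le_annulusConst_mul ?_ ?_
          · rw [le_div_iff₀ (by positivity), ← pow_add, add_comm a]
            exact h.1
          · rw [div_le_iff₀ (by positivity), ← pow_add, add_comm b]
            exact h.2
        · positivity
    _ ≤ annulusConst a b * 1 := by
        rw [← Finset.mul_sum]
        gcongr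
        exact sum_div_two_pow_le_one hr N
    _ = annulusConst a b := mul_one _

lemma l2Sq_sum_le_of_annulus {a b : ℕ} {p : ℕ → 𝓢(V, ℂ)}
    (hp : ∀ j ζ, 𝓕 (p j) ζ ≠ 0 → 2 ^ (j + a) ≤ ‖ζ‖ ∧ ‖ζ‖ ≤ 2 ^ (j + b)) (N : ℕ) :
    l2Sq (∑ j ∈ Finset.range N, p j) ≤ annulusConst a b * ∑ j ∈ Finset.range N, l2Sq (p j) := by
  classical
  refine l2Sq_le_sum_of_fourier_le (Finset.range N)
    (fun j ζ => if 2 ^ (j + a) ≤ ‖ζ‖ ∧ ‖ζ‖ ≤ 2 ^ (j + b) then (1 : ℝ) else 0) p _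
    (fun ζ => ?_) (fun ζ => ?_)
  · simp only [ite_pow, one_pow, zero_pow two_ne_zero]
    exact sum_ite_annulus_le a b (norm_nonneg ζ) N
  · rw [FourierTransform.fourier_sum, sum_apply]
    refine (norm_sum_le _ _).trans (Finset.sum_le_sum fun j _ => ?_)
    by_cases hz : 𝓕 (p j) ζ = 0
    · rw [hz, norm_zero, mul_zero]
    · rw [if_pos (hp j ζ hz), one_mul]

lemma commutator_multiplier_lowPass (a f g : 𝓢(V, ℂ)) (N : ℕ) :
    commutator a (multiplier (lowPass V N) f) (multiplier (lowPass V (N + 2)) g) =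
      ∑ k ∈ Finset.range N,
        commutator a (multiplier (lowPass V k) f) (multiplier (dyadicPiece V (k + 3)) g) +
      ∑ k ∈ Finset.range (N + 1),
        commutator a (multiplier (dyadicPiece V k) f) (multiplier (lowPass V (k + 2)) g) := by
  have hsucc : ∀ k (h : 𝓢(V, ℂ)), multiplier (lowPass V (k + 1)) h
      = multiplier (lowPass V k) h + multiplier (dyadicPiece V (k + 1)) h := fun k h => by
    rw [← LinearMap.map_add₂, dyadicPiece_succ, add_sub_cancel]
  induction N with
  | zero => simp [dyadicPiece]
  | succ N ih =>
    rw [Finset.sum_range_succ, Finset.sum_range_succ _ (N + 1), add_add_add_comm, ← ih, hsucc N f,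
      LinearMap.map_add₂, add_right_comm N 1 2, hsucc (N + 2) g, map_add]
    simp only [map_add, add_assoc]

end FourierSupport

section Paraproducts

variable {V : Type*} [NormedAddCommGroup V] [InnerProductSpace ℝ V] [FiniteDimensional ℝ V]
  [MeasurableSpace V] [BorelSpace V] {a : 𝓢(V, ℂ)} {W : ℕ → ℝ} {A B q : ℝ}

/-- A weight on dyadic scales which varies by bounded factors between neighbouring scales and
grows at least geometrically, up to the factor `B`. -/
structure IsDyadicWeight (W : ℕ → ℝ) (B q : ℝ) : Prop where
  one_le : 1 ≤ B
  ratio_pos : 0 < q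
  ratio_lt_one : q < 1
  pos : ∀ k, 0 < W k
  le_of_le_add_two : ∀ j k, j ≤ k + 2 → W j ≤ B * W k
  le_of_le : ∀ j k, j ≤ k → W j ≤ B * q ^ (k - j) * W k

/-- The kernels of the symbols `b j` have mass at most `A W_j` and are concentrated at distance
`2⁻ʲ` from the origin: `b j` behaves like a symbol of size `W_j` localized at frequency `2ʲ`. -/
structure HasDyadicKernels (b : ℕ → 𝓢(V, ℂ)) (W : ℕ → ℝ) (A : ℝ) : Prop where
  pos : 0 < A
  kernelMoment_zero_le : ∀ j, kernelMoment 0 (b j) ≤ A * W j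
  kernelMoment_one_le : ∀ j, kernelMoment 1 (b j) ≤ A * (2 : ℝ)⁻¹ ^ j * W j

lemma sum_range_comp_add_three_le {x : ℕ → ℝ} (hx : ∀ k, 0 ≤ x k) {E : ℝ}
    (hE : ∀ N, ∑ k ∈ Finset.range N, x k ≤ E) (N : ℕ) :
    ∑ k ∈ Finset.range N, x (k + 3) ≤ E := by
  refine le_trans ?_ (hE (3 + N))
  rw [Finset.sum_range_add]
  simp only [add_comm 3]
  exact le_add_of_nonneg_left (Finset.sum_nonneg fun i _ => hx i)

/-- The part of the symbol `a` which acts on the annulus `2 ^ (k + 1) ≤ ‖ξ‖ ≤ 2 ^ (k + 5)`. -/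
def annulusSymbol (a : 𝓢(V, ℂ)) (k : ℕ) : 𝓢(V, ℂ) :=
  ∑ i ∈ Finset.range 5, pmul a (dyadicPiece V (k + 1 + i))

omit [MeasurableSpace V] [BorelSpace V] in
lemma annulusSymbol_apply (a : 𝓢(V, ℂ)) {k : ℕ} {ξ : V} (h₁ : 2 ^ (k + 1) ≤ ‖ξ‖)
    (h₂ : ‖ξ‖ ≤ 2 ^ (k + 5)) : annulusSymbol a k ξ = a ξ := by
  rw [annulusSymbol, ← map_sum, sum_dyadicPiece_add, pmul_apply, sub_apply, lowPass_eq_one h₂,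
    lowPass_eq_zero h₁, sub_zero, mul_one]

lemma commutator_eq_commutator_annulusSymbol (a : 𝓢(V, ℂ)) {f g : 𝓢(V, ℂ)} {k : ℕ}
    (hf : ∀ ξ, 𝓕 f ξ ≠ 0 → ‖ξ‖ ≤ 2 ^ (k + 1))
    (hg : ∀ ξ, 𝓕 g ξ ≠ 0 → 2 ^ (k + 2) ≤ ‖ξ‖ ∧ ‖ξ‖ ≤ 2 ^ (k + 4)) :
    commutator a f g = commutator (annulusSymbol a k) f g := by
  have hproduct : multiplier a (pmul f g) = multiplier (annulusSymbol a k) (pmul f g) :=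
    multiplier_congr fun ξ hξ =>
      have hann := annulus_of_fourier_pmul_ne_zero hf hg hξ
      (annulusSymbol_apply a hann.1 hann.2).symm
  have hfactor : multiplier a g = multiplier (annulusSymbol a k) g :=
    multiplier_congr fun ξ hξ => (annulusSymbol_apply a
      ((pow_le_pow_right₀ one_le_two (by omega)).trans (hg ξ hξ).1)
      ((hg ξ hξ).2.trans (pow_le_pow_right₀ one_le_two (by omega)))).symm
  rw [commutator_eq, commutator_eq, hproduct, hfactor]

lemma annulus_of_fourier_commutator_ne_zero (a : 𝓢(V, ℂ)) {f g : 𝓢(V, ℂ)} {k : ℕ}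
    (hf : ∀ ξ, 𝓕 f ξ ≠ 0 → ‖ξ‖ ≤ 2 ^ (k + 1))
    (hg : ∀ ξ, 𝓕 g ξ ≠ 0 → 2 ^ (k + 2) ≤ ‖ξ‖ ∧ ‖ξ‖ ≤ 2 ^ (k + 4)) {ξ : V}
    (h : 𝓕 (commutator a f g) ξ ≠ 0) : 2 ^ (k + 1) ≤ ‖ξ‖ ∧ ‖ξ‖ ≤ 2 ^ (k + 5) := by
  rw [commutator_eq, fourier_sub, sub_apply] at h
  by_cases hz : 𝓕 (pmul f (multiplier a g)) ξ = 0
  · rw [hz, sub_zero] at h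
    exact annulus_of_fourier_pmul_ne_zero hf hg (fourier_ne_zero_of_fourier_multiplier_ne_zero h)
  · exact annulus_of_fourier_pmul_ne_zero hf
      (fun η hη => hg η (fourier_ne_zero_of_fourier_multiplier_ne_zero hη)) hz

lemma kernelMoment_one_annulusSymbol_le (hW : IsDyadicWeight W B q)
    (ha : HasDyadicKernels (fun j => pmul a (dyadicPiece V j)) W A) (k : ℕ) :
    kernelMoment 1 (annulusSymbol a k)
      ≤ 20 * A * B * ((2 : ℝ)⁻¹ ^ (k + 3) * W (k + 3)) := by
  have hA := ha.pos
  have hpiece : ∀ i ∈ Finset.range 5, kernelMoment 1 (pmul a (dyadicPiece V (k + 1 + i)))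
      ≤ A * (2 : ℝ)⁻¹ ^ (k + 1) * (B * W (k + 3)) := fun i hi => by
    refine (ha.kernelMoment_one_le _).trans ?_
    have hpow : (2 : ℝ)⁻¹ ^ (k + 1 + i) ≤ (2 : ℝ)⁻¹ ^ (k + 1) :=
      pow_le_pow_of_le_one (by norm_num) (by norm_num) (by omega)
    have hpos := hW.pos (k + 1 + i)
    gcongr
    exact hW.le_of_le_add_two _ _ (by have := Finset.mem_range.1 hi; omega)
  calc kernelMoment 1 (annulusSymbol a k)
      ≤ ∑ _i ∈ Finset.range 5, A * (2 : ℝ)⁻¹ ^ (k + 1) * (B * W (k + 3)) :=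
        (kernelMoment_sum_le 1 _ _).trans (Finset.sum_le_sum hpiece)
    _ = 20 * A * B * ((2 : ℝ)⁻¹ ^ (k + 3) * W (k + 3)) := by
        rw [Finset.sum_const, Finset.card_range, nsmul_eq_mul]
        ring

/-- The constant of `l2Sq_sum_commutator_lowPass_le`. -/
def lowHighConst (V : Type*) [NormedAddCommGroup V] [InnerProductSpace ℝ V]
    [FiniteDimensional ℝ V] [MeasurableSpace V] [BorelSpace V] (A B : ℝ) : ℝ :=
  annulusConst 1 5 * (kernelMoment 0 (bumpSchwartz V) * (20 * A * B)) ^ 2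

lemma l2Sq_commutator_lowPass_le (hW : IsDyadicWeight W B q)
    (ha : HasDyadicKernels (fun j => pmul a (dyadicPiece V j)) W A) (f g : 𝓢(V, ℂ)) {L : ℝ}
    (hL : 0 ≤ L) (hf : ∀ x y, ‖f x - f y‖ ≤ L * ‖x - y‖) (k : ℕ) :
    l2Sq (commutator a (multiplier (lowPass V k) f) (multiplier (dyadicPiece V (k + 3)) g)) ≤
      (kernelMoment 0 (bumpSchwartz V) * (20 * A * B)) ^ 2 * L ^ 2 *
      (((2 : ℝ)⁻¹ ^ (k + 3) * W (k + 3)) ^ 2 * l2Sq (multiplier (dyadicPiece V (k + 3)) g)) := by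
  have hbump := kernelMoment_nonneg 0 (bumpSchwartz V)
  have hg := l2Sq_nonneg (multiplier (dyadicPiece V (k + 3)) g)
  have hmoment := kernelMoment_nonneg 1 (annulusSymbol a k)
  have hlip : ∀ x y, ‖multiplier (lowPass V k) f x - multiplier (lowPass V k) f y‖
      ≤ kernelMoment 0 (bumpSchwartz V) * L * ‖x - y‖ := fun x y => by
    rw [← kernelMoment_zero_lowPass k]
    exact norm_multiplier_sub_le hf x y
  rw [commutator_eq_commutator_annulusSymbol a
    (fun ξ h => norm_le_of_lowPass_ne_zero (symbol_ne_zero_of_fourier_multiplier_ne_zero h))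
    (fun ξ h => annulus_of_fourier_multiplier_dyadicPiece_ne_zero h)]
  refine (l2Sq_commutator_le (by positivity) hlip _).trans ?_
  grw [kernelMoment_one_annulusSymbol_le hW ha k]
  exact le_of_eq (by ring)

lemma l2Sq_sum_commutator_lowPass_le (hW : IsDyadicWeight W B q)
    (ha : HasDyadicKernels (fun j => pmul a (dyadicPiece V j)) W A) (f g : 𝓢(V, ℂ)) {L E : ℝ}
    (hL : 0 ≤ L) (hf : ∀ x y, ‖f x - f y‖ ≤ L * ‖x - y‖)
    (hE : ∀ N, ∑ k ∈ Finset.range N,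
      ((2 : ℝ)⁻¹ ^ k * W k) ^ 2 * l2Sq (multiplier (dyadicPiece V k) g) ≤ E) (N : ℕ) :
    l2Sq (∑ k ∈ Finset.range N,
        commutator a (multiplier (lowPass V k) f) (multiplier (dyadicPiece V (k + 3)) g)) ≤
      lowHighConst V A B * (L ^ 2 * E) := by
  have hC := annulusConst_nonneg 1 5
  have hterms := Finset.sum_le_sum fun k (_ : k ∈ Finset.range N) =>
    l2Sq_commutator_lowPass_le hW ha f g hL hf k
  have hshift := sum_range_comp_add_three_le
    (fun k => mul_nonneg (sq_nonneg ((2 : ℝ)⁻¹ ^ k * W k)) (l2Sq_nonneg _)) hE N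
  rw [← Finset.mul_sum] at hterms
  refine (l2Sq_sum_le_of_annulus (a := 1) (b := 5) (fun k ξ h =>
    annulus_of_fourier_commutator_ne_zero a
      (fun η hη => norm_le_of_lowPass_ne_zero (symbol_ne_zero_of_fourier_multiplier_ne_zero hη))
      (fun η hη => annulus_of_fourier_multiplier_dyadicPiece_ne_zero hη) h) N).trans ?_
  grw [hterms, hshift, lowHighConst]
  exact le_of_eq (by ring)

end Paraproducts

section HighLow

variable {V : Type*} [NormedAddCommGroup V] [InnerProductSpace ℝ V] [FiniteDimensional ℝ V]
  [MeasurableSpace V] [BorelSpace V] {a : 𝓢(V, ℂ)} {W : ℕ → ℝ} {A B q : ℝ}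

lemma geom_sum_le_inv_one_sub (hq : 0 < q) (hq1 : q < 1) (n : ℕ) :
    ∑ j ∈ Finset.range n, q ^ j ≤ (1 - q)⁻¹ := by
  rw [← tsum_geometric_of_lt_one hq.le hq1]
  exact (summable_geometric_of_lt_one hq.le hq1).sum_le_tsum _ fun i _ => by positivity

lemma sum_ite_pow_sub_le (hq : 0 < q) (hq1 : q < 1) (m n : ℕ) :
    ∑ j ∈ Finset.range n, (if m ≤ j then q ^ (j - m) else 0) ≤ (1 - q)⁻¹ := by
  have hbelow : ∑ j ∈ Finset.range m, (if m ≤ j then q ^ (j - m) else 0) = 0 :=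
    Finset.sum_eq_zero fun j hj => if_neg (by simpa using hj)
  calc _ ≤ ∑ j ∈ Finset.range (m + n), (if m ≤ j then q ^ (j - m) else 0) := by
        refine Finset.sum_le_sum_of_subset_of_nonneg (Finset.range_mono (by omega)) fun j _ _ => ?_
        split_ifs <;> positivity
    _ = ∑ j ∈ Finset.range n, q ^ j := by
        rw [Finset.sum_range_add, hbelow, zero_add]
        exact Finset.sum_congr rfl fun j _ => by rw [if_pos (by omega), Nat.add_sub_cancel_left]
    _ ≤ (1 - q)⁻¹ := geom_sum_le_inv_one_sub hq hq1 n

/-- The constant of `kernelMoment_zero_pmul_lowPass_le`, from summing the geometric growth of the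
weight. -/
def lowPassConst (A B q : ℝ) : ℝ := A * B * (1 - q)⁻¹

lemma IsDyadicWeight.inv_one_sub_pos (hW : IsDyadicWeight W B q) : 0 < (1 - q)⁻¹ :=
  inv_pos.2 (sub_pos.2 hW.ratio_lt_one)

lemma IsDyadicWeight.const_pos (hW : IsDyadicWeight W B q) : 0 < B := one_pos.trans_le hW.one_le

lemma IsDyadicWeight.lowPassConst_pos (hW : IsDyadicWeight W B q) (hA : 0 < A) :
    0 < lowPassConst A B q :=
  mul_pos (mul_pos hA hW.const_pos) hW.inv_one_sub_pos

lemma kernelMoment_zero_pmul_lowPass_le (hW : IsDyadicWeight W B q)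
    (ha : HasDyadicKernels (fun j => pmul a (dyadicPiece V j)) W A) (k : ℕ) :
    kernelMoment 0 (pmul a (lowPass V k)) ≤ lowPassConst A B q * W k := by
  have hA := ha.pos
  have hB := hW.const_pos
  have hWk := hW.pos k
  have hpiece : ∀ j ∈ Finset.range (k + 1), kernelMoment 0 (pmul a (dyadicPiece V j))
      ≤ A * B * W k * q ^ (k + 1 - 1 - j) := fun j hj => by
    have hgrowth := hW.le_of_le j k (by have := Finset.mem_range.1 hj; omega)
    grw [ha.kernelMoment_zero_le j, hgrowth]
    exact le_of_eq (by rw [Nat.add_sub_cancel]; ring)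
  calc kernelMoment 0 (pmul a (lowPass V k))
      ≤ ∑ j ∈ Finset.range (k + 1), A * B * W k * q ^ (k + 1 - 1 - j) := by
        rw [← sum_dyadicPiece, map_sum]
        exact (kernelMoment_sum_le 0 _ _).trans (Finset.sum_le_sum hpiece)
    _ = A * B * W k * ∑ j ∈ Finset.range (k + 1), q ^ j := by
        rw [← Finset.mul_sum, Finset.sum_range_reflect fun j => q ^ j]
    _ ≤ A * B * W k * (1 - q)⁻¹ := by
        gcongr
        exact geom_sum_le_inv_one_sub hW.ratio_pos hW.ratio_lt_one _
    _ = lowPassConst A B q * W k := by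
        rw [lowPassConst]
        ring

lemma norm_symbol_le (hW : IsDyadicWeight W B q)
    (ha : HasDyadicKernels (fun j => pmul a (dyadicPiece V j)) W A) {k : ℕ} {ζ : V}
    (h : ‖ζ‖ ≤ 2 ^ k) : ‖a ζ‖ ≤ lowPassConst A B q * W k := by
  refine le_trans ?_ (kernelMoment_zero_pmul_lowPass_le hW ha k)
  simpa only [pmul_apply, lowPass_eq_one h, mul_one] using
    norm_le_kernelMoment_zero (pmul a (lowPass V k)) ζ

lemma norm_symbol_div_weight_le (hW : IsDyadicWeight W B q)
    (ha : HasDyadicKernels (fun j => pmul a (dyadicPiece V j)) W A) {m k : ℕ} {ζ : V}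
    (h : ‖ζ‖ ≤ 2 ^ (m + 4)) (hmk : m ≤ k) :
    ‖a ζ‖ / W k ≤ lowPassConst A B q * B ^ 3 * q ^ (k - m) := by
  have hB := hW.const_pos
  have hD := hW.lowPassConst_pos ha.pos
  rw [div_le_iff₀ (hW.pos k)]
  grw [norm_symbol_le hW ha h, hW.le_of_le_add_two (m + 4) (m + 2) (by omega),
    hW.le_of_le_add_two (m + 2) m le_rfl, hW.le_of_le m k hmk]
  exact le_of_eq (by ring)

lemma sum_sq_norm_symbol_div_weight_le (hW : IsDyadicWeight W B q)
    (ha : HasDyadicKernels (fun j => pmul a (dyadicPiece V j)) W A) (ζ : V) (N : ℕ)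
    [∀ k : ℕ, Decidable (‖ζ‖ ≤ 2 ^ (k + 4))] :
    ∑ k ∈ Finset.range N, (if ‖ζ‖ ≤ 2 ^ (k + 4) then ‖a ζ‖ / W k else 0) ^ 2
      ≤ (lowPassConst A B q * B ^ 3) ^ 2 * (1 - q)⁻¹ := by
  have hq := hW.ratio_pos
  have hex : ∃ k : ℕ, ‖ζ‖ ≤ 2 ^ (k + 4) := by
    obtain ⟨n, hn⟩ := pow_unbounded_of_one_lt ‖ζ‖ one_lt_two
    exact ⟨n, hn.le.trans (pow_le_pow_right₀ one_le_two (by omega))⟩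
  set m := Nat.find hex
  calc _ ≤ ∑ k ∈ Finset.range N,
        (lowPassConst A B q * B ^ 3) ^ 2 * (if m ≤ k then q ^ (k - m) else 0) := by
        refine Finset.sum_le_sum fun k _ => ?_
        by_cases hk : ‖ζ‖ ≤ 2 ^ (k + 4)
        · have hmk : m ≤ k := Nat.find_min' hex hk
          have hWk := hW.pos k
          have hpow : q ^ (k - m) ≤ 1 := pow_le_one₀ hq.le hW.ratio_lt_one.le
          rw [if_pos hk, if_pos hmk]
          grw [norm_symbol_div_weight_le hW ha (Nat.find_spec hex) hmk, mul_pow,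
            sq (q ^ (k - m)), mul_le_of_le_one_right (by positivity) hpow]
        · rw [if_neg hk, zero_pow two_ne_zero]
          positivity
    _ ≤ (lowPassConst A B q * B ^ 3) ^ 2 * (1 - q)⁻¹ := by
        rw [← Finset.mul_sum]
        gcongr
        exact sum_ite_pow_sub_le hq hW.ratio_lt_one _ _

lemma l2Sq_pmul_dyadicPiece_le {f h : 𝓢(V, ℂ)} {C w : ℝ} {k : ℕ} (hh : ∀ x, ‖h x‖ ≤ C * w) :
    l2Sq (pmul (multiplier (dyadicPiece V k) f) h) ≤
      C ^ 2 * (w ^ 2 * l2Sq (multiplier (dyadicPiece V k) f)) :=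
  (l2Sq_pmul_le hh _).trans_eq (by ring)

lemma l2Sq_smul_pmul_lowPass_le (hW : IsDyadicWeight W B q) (f : 𝓢(V, ℂ)) {g : 𝓢(V, ℂ)} {U : ℝ}
    (hg : ∀ x, ‖g x‖ ≤ U) (k : ℕ) :
    l2Sq ((W k : ℂ) • pmul (multiplier (dyadicPiece V k) f) (multiplier (lowPass V (k + 2)) g)) ≤
      (kernelMoment 0 (bumpSchwartz V) * U) ^ 2 *
        (W k ^ 2 * l2Sq (multiplier (dyadicPiece V k) f)) := by
  have hlow : ∀ x, ‖multiplier (lowPass V (k + 2)) g x‖ ≤ kernelMoment 0 (bumpSchwartz V) * U :=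
    fun x => kernelMoment_zero_lowPass (V := V) (k + 2) ▸ norm_multiplier_le hg x
  rw [l2Sq_smul, Complex.norm_real, Real.norm_of_nonneg (hW.pos k).le]
  grw [l2Sq_pmul_le hlow]
  exact le_of_eq (by ring)

lemma norm_le_of_fourier_pmul_dyadicPiece_lowPass_ne_zero {f g : 𝓢(V, ℂ)} {k : ℕ} {ζ : V}
    (h : 𝓕 (pmul (multiplier (dyadicPiece V k) f) (multiplier (lowPass V (k + 2)) g)) ζ ≠ 0) :
    ‖ζ‖ ≤ 2 ^ (k + 4) := by
  have hsum := norm_le_of_fourier_pmul_ne_zero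
    (fun ξ hξ => norm_le_of_dyadicPiece_ne_zero (symbol_ne_zero_of_fourier_multiplier_ne_zero hξ))
    (fun ξ hξ => norm_le_of_lowPass_ne_zero (symbol_ne_zero_of_fourier_multiplier_ne_zero hξ)) h
  have hk : (0 : ℝ) < 2 ^ k := by positivity
  simp only [pow_add] at hsum ⊢
  linarith

lemma l2Sq_multiplier_sum_pmul_lowPass_le (hW : IsDyadicWeight W B q)
    (ha : HasDyadicKernels (fun j => pmul a (dyadicPiece V j)) W A) (f : 𝓢(V, ℂ)) {g : 𝓢(V, ℂ)}
    {U E : ℝ} (hg : ∀ x, ‖g x‖ ≤ U)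
    (hE : ∀ N, ∑ k ∈ Finset.range N, W k ^ 2 * l2Sq (multiplier (dyadicPiece V k) f) ≤ E) (N : ℕ) :
    l2Sq (multiplier a (∑ k ∈ Finset.range N,
        pmul (multiplier (dyadicPiece V k) f) (multiplier (lowPass V (k + 2)) g))) ≤
      (lowPassConst A B q * B ^ 3) ^ 2 * (1 - q)⁻¹ * kernelMoment 0 (bumpSchwartz V) ^ 2 *
        (U ^ 2 * E) := by
  classical
  have hq := hW.inv_one_sub_pos
  set F := fun k => pmul (multiplier (dyadicPiece V k) f) (multiplier (lowPass V (k + 2)) g)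
  have hterms := Finset.sum_le_sum fun k (_ : k ∈ Finset.range N) =>
    l2Sq_smul_pmul_lowPass_le hW f hg k
  rw [← Finset.mul_sum] at hterms
  have hfourier : ∀ ζ, ‖𝓕 (multiplier a (∑ k ∈ Finset.range N, F k)) ζ‖ ≤ ∑ k ∈ Finset.range N,
      (if ‖ζ‖ ≤ 2 ^ (k + 4) then ‖a ζ‖ / W k else 0) * ‖𝓕 ((W k : ℂ) • F k) ζ‖ := fun ζ => by
    rw [fourier_multiplier_apply, FourierTransform.fourier_sum, sum_apply, Finset.mul_sum]
    refine (norm_sum_le _ _).trans (Finset.sum_le_sum fun k _ => ?_)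
    have hWk := hW.pos k
    rw [FourierTransform.fourier_smul, smul_apply, norm_smul, Complex.norm_real,
      Real.norm_of_nonneg hWk.le, norm_mul]
    by_cases hz : 𝓕 (F k) ζ = 0
    · rw [hz, norm_zero, mul_zero, mul_zero, mul_zero]
    · rw [if_pos (norm_le_of_fourier_pmul_dyadicPiece_lowPass_ne_zero hz), ← mul_assoc,
        div_mul_cancel₀ _ hWk.ne']
  refine (l2Sq_le_sum_of_fourier_le (Finset.range N)
    (fun k ζ => if ‖ζ‖ ≤ 2 ^ (k + 4) then ‖a ζ‖ / W k else 0) (fun k => (W k : ℂ) • F k) _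
    (fun ζ => sum_sq_norm_symbol_div_weight_le hW ha ζ N) hfourier).trans ?_
  grw [hterms, hE N]
  exact le_of_eq (by ring)

lemma norm_multiplier_pmul_lowPass_le (hW : IsDyadicWeight W B q)
    (ha : HasDyadicKernels (fun j => pmul a (dyadicPiece V j)) W A) {g : 𝓢(V, ℂ)} {U : ℝ}
    (hU : 0 ≤ U) (hg : ∀ x, ‖g x‖ ≤ U) {j k : ℕ} (hjk : j ≤ k + 2) (x : V) :
    ‖multiplier (pmul a (lowPass V j)) g x‖ ≤ lowPassConst A B q * B * U * W k := by
  have hD := hW.lowPassConst_pos ha.pos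
  grw [norm_multiplier_le hg x, kernelMoment_zero_pmul_lowPass_le hW ha j,
    hW.le_of_le_add_two j k hjk]
  exact le_of_eq (by ring)

lemma l2Sq_sum_pmul_low_le (hW : IsDyadicWeight W B q)
    (ha : HasDyadicKernels (fun j => pmul a (dyadicPiece V j)) W A) (f : 𝓢(V, ℂ)) {g : 𝓢(V, ℂ)}
    {U E : ℝ} (hU : 0 ≤ U) (hg : ∀ x, ‖g x‖ ≤ U)
    (hE : ∀ N, ∑ k ∈ Finset.range N, W k ^ 2 * l2Sq (multiplier (dyadicPiece V k) f) ≤ E) (N : ℕ) :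
    l2Sq (∑ k ∈ Finset.range N, pmul (multiplier (dyadicPiece V (k + 3)) f)
        (multiplier (pmul a (lowPass V k)) g)) ≤
      annulusConst 1 5 * (lowPassConst A B q * B) ^ 2 * (U ^ 2 * E) := by
  have hC := annulusConst_nonneg 1 5
  have hterms := Finset.sum_le_sum fun k (_ : k ∈ Finset.range N) =>
    l2Sq_pmul_dyadicPiece_le (f := f) (k := k + 3)
      (norm_multiplier_pmul_lowPass_le hW ha hU hg (by omega : k ≤ k + 3 + 2))
  have hshift := sum_range_comp_add_three_le
    (fun k => mul_nonneg (sq_nonneg (W k)) (l2Sq_nonneg _)) hE N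
  rw [← Finset.mul_sum] at hterms
  have hlow : ∀ k ξ, 𝓕 (multiplier (pmul a (lowPass V k)) g) ξ ≠ 0 → ‖ξ‖ ≤ 2 ^ (k + 1) :=
    fun k ξ hξ => norm_le_of_lowPass_ne_zero
      (right_ne_zero_of_mul (symbol_ne_zero_of_fourier_multiplier_ne_zero hξ))
  refine (l2Sq_sum_le_of_annulus (a := 1) (b := 5) (fun k ξ h => ?_) N).trans ?_
  · rw [pmul_comm] at h
    exact annulus_of_fourier_pmul_ne_zero (hlow k)
      (fun η hη => annulus_of_fourier_multiplier_dyadicPiece_ne_zero hη) h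
  · grw [hterms, hshift]
    exact le_of_eq (by ring)

lemma l2Sq_sum_pmul_first_le (hW : IsDyadicWeight W B q)
    (ha : HasDyadicKernels (fun j => pmul a (dyadicPiece V j)) W A) (f : 𝓢(V, ℂ)) {g : 𝓢(V, ℂ)}
    {U E : ℝ} (hU : 0 ≤ U) (hg : ∀ x, ‖g x‖ ≤ U) {n : ℕ}
    (hE : ∑ k ∈ Finset.range n, W k ^ 2 * l2Sq (multiplier (dyadicPiece V k) f) ≤ E) :
    l2Sq (∑ k ∈ Finset.range n, pmul (multiplier (dyadicPiece V k) f)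
        (multiplier (pmul a (lowPass V (k + 2))) g)) ≤
      n * (lowPassConst A B q * B) ^ 2 * (U ^ 2 * E) := by
  have hterms := Finset.sum_le_sum fun k (_ : k ∈ Finset.range n) =>
    l2Sq_pmul_dyadicPiece_le (f := f) (k := k)
      (norm_multiplier_pmul_lowPass_le hW ha hU hg (le_refl (k + 2)))
  rw [← Finset.mul_sum] at hterms
  refine (l2Sq_sum_le_card _ _).trans ?_
  grw [hterms, hE, Finset.card_range]
  exact le_of_eq (by ring)

lemma smul_pmul_inv_smul_multiplier {c : ℂ} (hc : c ≠ 0) (F a g : 𝓢(V, ℂ)) :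
    pmul (c • F) (multiplier (c⁻¹ • a) g) = pmul F (multiplier a g) := by
  rw [LinearMap.map_smul₂, LinearMap.map_smul₂, map_smul, smul_smul, mul_inv_cancel₀ hc, one_smul]

omit [MeasurableSpace V] [BorelSpace V] in
lemma annulus_of_pmul_dyadicPiece_ne_zero {i j : ℕ} (hi : i < 5) {ξ : V}
    (h : pmul a (dyadicPiece V (j + 1 + i)) ξ ≠ 0) : 2 ^ j ≤ ‖ξ‖ ∧ ‖ξ‖ ≤ 2 ^ (j + 6) := by
  have hpiece : dyadicPiece V (j + i + 1) ξ ≠ 0 := by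
    rw [add_right_comm]
    exact right_ne_zero_of_mul h
  exact ⟨(pow_le_pow_right₀ one_le_two (by omega)).trans
      (le_norm_of_dyadicPiece_succ_ne_zero hpiece),
    (norm_le_of_dyadicPiece_ne_zero hpiece).trans (pow_le_pow_right₀ one_le_two (by omega))⟩

lemma kernelMoment_inv_smul_le {b : 𝓢(V, ℂ)} {n : ℕ} {w C : ℝ} (hw : 0 < w)
    (h : kernelMoment n b ≤ C * w) : kernelMoment n ((w : ℂ)⁻¹ • b) ≤ C := by
  rw [kernelMoment_smul, norm_inv, Complex.norm_real, Real.norm_of_nonneg hw.le,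
    inv_mul_le_iff₀ hw, mul_comm]
  exact h

lemma paraproductConst_nonneg (c : ℕ) : 0 ≤ paraproductConst V c := by
  have hcarleson := gaussianCarlesonConst_nonneg (V := V)
  have hlow := lowFreqConst_pos c
  unfold paraproductConst
  positivity

lemma kernelMoment_inv_weight_smul_dyadicPiece_le (hW : IsDyadicWeight W B q)
    (ha : HasDyadicKernels (fun j => pmul a (dyadicPiece V j)) W A) {i : ℕ} (hi : i < 5) (j : ℕ) :
    kernelMoment 0 ((W (j + 3) : ℂ)⁻¹ • pmul a (dyadicPiece V (j + 1 + i))) ≤ A * B ∧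
      kernelMoment 1 ((W (j + 3) : ℂ)⁻¹ • pmul a (dyadicPiece V (j + 1 + i))) ≤
        A * B * (2 : ℝ)⁻¹ ^ j := by
  have hA := ha.pos
  have hpos := hW.pos (j + 1 + i)
  have hweight : W (j + 1 + i) ≤ B * W (j + 3) := hW.le_of_le_add_two _ _ (by omega)
  have hpow : (2 : ℝ)⁻¹ ^ (j + 1 + i) ≤ (2 : ℝ)⁻¹ ^ j :=
    pow_le_pow_of_le_one (by norm_num) (by norm_num) (by omega)
  constructor
  · refine kernelMoment_inv_smul_le (hW.pos _) ((ha.kernelMoment_zero_le _).trans ?_)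
    grw [hweight, mul_assoc]
  · refine kernelMoment_inv_smul_le (hW.pos _) ((ha.kernelMoment_one_le _).trans ?_)
    grw [hpow, hweight]
    exact le_of_eq (by ring)

lemma l2Sq_sum_pmul_diagonal_le (hW : IsDyadicWeight W B q)
    (ha : HasDyadicKernels (fun j => pmul a (dyadicPiece V j)) W A) (f : 𝓢(V, ℂ)) {g : 𝓢(V, ℂ)}
    {U E : ℝ} (hU : 0 < U) (hg : ∀ x, ‖g x‖ ≤ U)
    (hE : ∀ N, ∑ k ∈ Finset.range N, W k ^ 2 * l2Sq (multiplier (dyadicPiece V k) f) ≤ E)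
    {i : ℕ} (hi : i < 5) (N : ℕ) :
    l2Sq (∑ k ∈ Finset.range N, pmul (multiplier (dyadicPiece V (k + 3)) f)
        (multiplier (pmul a (dyadicPiece V (k + 1 + i))) g)) ≤
      paraproductConst V 7 * (A * B) ^ 2 * (U ^ 2 * E) := by
  have hA := ha.pos
  have hB := hW.const_pos
  have hC := paraproductConst_nonneg (V := V) 7
  set m : ℕ → 𝓢(V, ℂ) := fun k => (W (k + 3) : ℂ)⁻¹ • pmul a (dyadicPiece V (k + 1 + i))
  set F : ℕ → 𝓢(V, ℂ) := fun k => (W (k + 3) : ℂ) • multiplier (dyadicPiece V (k + 3)) f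
  have hm : ∀ j ξ, m j ξ ≠ 0 → 2 ^ j ≤ ‖ξ‖ ∧ ‖ξ‖ ≤ 2 ^ (j + 6) := fun j ξ h =>
    annulus_of_pmul_dyadicPiece_ne_zero hi (right_ne_zero_of_mul h)
  have hF : ∀ j ξ, 𝓕 (F j) ξ ≠ 0 → ‖ξ‖ ≤ 2 ^ (j + 4) := fun j ξ h => by
    rw [FourierTransform.fourier_smul] at h
    exact (annulus_of_fourier_multiplier_dyadicPiece_ne_zero (right_ne_zero_of_mul h)).2
  have hmoments := kernelMoment_inv_weight_smul_dyadicPiece_le hW ha hi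
  have hproduct : ∀ j ξ, 𝓕 (pmul (F j) (multiplier (m j) g)) ξ ≠ 0 → ‖ξ‖ ≤ 2 ^ (j + 7) :=
    fun j ξ h => by
      have hsum := norm_le_of_fourier_pmul_ne_zero (hF j)
        (fun η hη => (hm j η (symbol_ne_zero_of_fourier_multiplier_ne_zero hη)).2) h
      have hj : (0 : ℝ) < 2 ^ j := by positivity
      simp only [pow_add] at hsum ⊢
      linarith
  have hparaproduct := l2Sq_sum_pmul_multiplier_le 7 m F g hU (by positivity) hg
    (fun j ξ h => ⟨(hm j ξ h).1, (hm j ξ h).2.trans (pow_le_pow_right₀ one_le_two (by omega))⟩)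
    (fun j => (hmoments j).1) (fun j => (hmoments j).2) hproduct N
  simp only [m, F, smul_pmul_inv_smul_multiplier (Complex.ofReal_ne_zero.2 (hW.pos _).ne'),
    l2Sq_smul, Complex.norm_real, Real.norm_of_nonneg (hW.pos _).le] at hparaproduct
  grw [hparaproduct, sum_range_comp_add_three_le
    (fun k => mul_nonneg (sq_nonneg (W k)) (l2Sq_nonneg _)) hE N]
  exact le_of_eq (by ring)

/-- The constant of `l2Sq_sum_pmul_multiplier_lowPass_le`. -/
def highLowConst (V : Type*) [NormedAddCommGroup V] [InnerProductSpace ℝ V]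
    [FiniteDimensional ℝ V] [MeasurableSpace V] [BorelSpace V] (A B q : ℝ) : ℝ :=
  2 * (3 * (lowPassConst A B q * B) ^ 2) + 4 * (annulusConst 1 5 * (lowPassConst A B q * B) ^ 2) +
    4 * (25 * (paraproductConst V 7 * (A * B) ^ 2))

lemma sum_pmul_multiplier_lowPass_eq (a f g : 𝓢(V, ℂ)) (N : ℕ) :
    ∑ k ∈ Finset.range (3 + N),
        pmul (multiplier (dyadicPiece V k) f) (multiplier a (multiplier (lowPass V (k + 2)) g)) =
      ∑ k ∈ Finset.range 3,
        pmul (multiplier (dyadicPiece V k) f) (multiplier (pmul a (lowPass V (k + 2))) g) +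
      (∑ k ∈ Finset.range N,
        pmul (multiplier (dyadicPiece V (k + 3)) f) (multiplier (pmul a (lowPass V k)) g) +
      ∑ i ∈ Finset.range 5, ∑ k ∈ Finset.range N, pmul (multiplier (dyadicPiece V (k + 3)) f)
        (multiplier (pmul a (dyadicPiece V (k + 1 + i))) g)) := by
  have hlow : ∀ k, multiplier (pmul a (lowPass V (k + 5))) g
      = multiplier (pmul a (lowPass V k)) g
        + ∑ i ∈ Finset.range 5, multiplier (pmul a (dyadicPiece V (k + 1 + i))) g := fun k => by
    rw [← LinearMap.map_sum₂, ← LinearMap.map_add₂, ← map_sum, ← map_add, sum_dyadicPiece_add,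
      add_sub_cancel]
  simp only [multiplier_multiplier]
  rw [Finset.sum_range_add, Finset.sum_comm, ← Finset.sum_add_distrib]
  congr 1
  refine Finset.sum_congr rfl fun k _ => ?_
  rw [show 3 + k + 2 = k + 5 by omega, hlow, map_add, map_sum, add_comm 3 k]

lemma l2Sq_sum_pmul_multiplier_lowPass_le (hW : IsDyadicWeight W B q)
    (ha : HasDyadicKernels (fun j => pmul a (dyadicPiece V j)) W A) (f : 𝓢(V, ℂ)) {g : 𝓢(V, ℂ)}
    {U E : ℝ} (hU : 0 < U) (hg : ∀ x, ‖g x‖ ≤ U)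
    (hE : ∀ N, ∑ k ∈ Finset.range N, W k ^ 2 * l2Sq (multiplier (dyadicPiece V k) f) ≤ E) (N : ℕ) :
    l2Sq (∑ k ∈ Finset.range (3 + N),
        pmul (multiplier (dyadicPiece V k) f) (multiplier a (multiplier (lowPass V (k + 2)) g))) ≤
      highLowConst V A B q * (U ^ 2 * E) := by
  have hdiagonal : l2Sq (∑ i ∈ Finset.range 5, ∑ k ∈ Finset.range N,
      pmul (multiplier (dyadicPiece V (k + 3)) f)
        (multiplier (pmul a (dyadicPiece V (k + 1 + i))) g)) ≤
      25 * (paraproductConst V 7 * (A * B) ^ 2 * (U ^ 2 * E)) := by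
    refine (l2Sq_sum_le_card _ _).trans ?_
    grw [Finset.sum_le_card_nsmul _ _ _ fun i hi =>
      l2Sq_sum_pmul_diagonal_le hW ha f hU hg hE (Finset.mem_range.1 hi) N]
    rw [Finset.card_range, nsmul_eq_mul]
    exact le_of_eq (by push_cast; ring)
  rw [sum_pmul_multiplier_lowPass_eq]
  grw [l2Sq_add_le, l2Sq_add_le (∑ k ∈ Finset.range N, _), hdiagonal,
    l2Sq_sum_pmul_first_le hW ha f hU.le hg (hE 3),
    l2Sq_sum_pmul_low_le hW ha f hU.le hg hE N, highLowConst]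
  exact le_of_eq (by push_cast; ring)

/-- The constant of `l2Sq_commutator_multiplier_lowPass_le`. -/
def commutatorConst (V : Type*) [NormedAddCommGroup V] [InnerProductSpace ℝ V]
    [FiniteDimensional ℝ V] [MeasurableSpace V] [BorelSpace V] (A B q : ℝ) : ℝ :=
  2 * lowHighConst V A B +
    4 * ((lowPassConst A B q * B ^ 3) ^ 2 * (1 - q)⁻¹ * kernelMoment 0 (bumpSchwartz V) ^ 2) +
    4 * highLowConst V A B q

lemma lowHighConst_nonneg : 0 ≤ lowHighConst V A B := by
  have hC := annulusConst_nonneg 1 5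
  unfold lowHighConst
  positivity

lemma highLowConst_nonneg : 0 ≤ highLowConst V A B q := by
  have hC := annulusConst_nonneg 1 5
  have hP := paraproductConst_nonneg (V := V) 7
  unfold highLowConst
  positivity

lemma commutatorConst_nonneg (hq : q ≤ 1) : 0 ≤ commutatorConst V A B q := by
  have hlow : 0 ≤ lowHighConst V A B := lowHighConst_nonneg
  have hhigh : 0 ≤ highLowConst V A B q := highLowConst_nonneg
  have : 0 ≤ (1 - q)⁻¹ := inv_nonneg.2 (sub_nonneg.2 hq)
  unfold commutatorConst
  positivity

lemma l2Sq_commutator_multiplier_lowPass_le (hW : IsDyadicWeight W B q)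
    (ha : HasDyadicKernels (fun j => pmul a (dyadicPiece V j)) W A) {f g : 𝓢(V, ℂ)}
    {U Ef L Eg : ℝ} (hU : 0 < U) (hg : ∀ x, ‖g x‖ ≤ U) (hL : 0 ≤ L)
    (hf : ∀ x y, ‖f x - f y‖ ≤ L * ‖x - y‖)
    (hEg : ∀ N, ∑ k ∈ Finset.range N,
      ((2 : ℝ)⁻¹ ^ k * W k) ^ 2 * l2Sq (multiplier (dyadicPiece V k) g) ≤ Eg)
    (hEf : ∀ N, ∑ k ∈ Finset.range N, W k ^ 2 * l2Sq (multiplier (dyadicPiece V k) f) ≤ Ef)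
    (N : ℕ) :
    l2Sq (commutator a (multiplier (lowPass V (N + 2)) f) (multiplier (lowPass V (N + 4)) g)) ≤
      commutatorConst V A B q * (L ^ 2 * Eg + U ^ 2 * Ef) := by
  have hhigh : ∑ k ∈ Finset.range (3 + N),
        commutator a (multiplier (dyadicPiece V k) f) (multiplier (lowPass V (k + 2)) g) =
      multiplier a (∑ k ∈ Finset.range (3 + N),
        pmul (multiplier (dyadicPiece V k) f) (multiplier (lowPass V (k + 2)) g)) -
      ∑ k ∈ Finset.range (3 + N), pmul (multiplier (dyadicPiece V k) f)
        (multiplier a (multiplier (lowPass V (k + 2)) g)) := by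
    rw [map_sum, ← Finset.sum_sub_distrib]
    rfl
  rw [commutator_multiplier_lowPass, show N + 2 + 1 = 3 + N by omega, hhigh]
  grw [l2Sq_add_le, l2Sq_sub_le, l2Sq_sum_commutator_lowPass_le hW ha f g hL hf hEg (N + 2),
    l2Sq_multiplier_sum_pmul_lowPass_le hW ha f hg hEf (3 + N),
    l2Sq_sum_pmul_multiplier_lowPass_le hW ha f hU hg hEf N]
  have hEg0 : 0 ≤ Eg := by simpa using hEg 0
  have hEf0 : 0 ≤ Ef := by simpa using hEf 0
  have hlowHigh := lowHighConst_nonneg (V := V) (A := A) (B := B)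
  have hhighLow := highLowConst_nonneg (V := V) (A := A) (B := B) (q := q)
  have hq := hW.inv_one_sub_pos
  have hcross : 0 ≤ 2 * lowHighConst V A B * (U ^ 2 * Ef) + (4 * ((lowPassConst A B q * B ^ 3) ^ 2
      * (1 - q)⁻¹ * kernelMoment 0 (bumpSchwartz V) ^ 2) + 4 * highLowConst V A B q)
      * (L ^ 2 * Eg) := by positivity
  rw [commutatorConst]
  linarith

end HighLow

section Limits

open Filter Topology

variable {V : Type*} [NormedAddCommGroup V] [InnerProductSpace ℝ V] [FiniteDimensional ℝ V]

lemma tendsto_lowPass (c : ℕ) (ξ : V) :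
    Tendsto (fun n : ℕ => lowPass V (n + c) ξ) atTop (𝓝 1) := by
  obtain ⟨n, hn⟩ := pow_unbounded_of_one_lt ‖ξ‖ one_lt_two
  refine tendsto_const_nhds.congr' ?_
  filter_upwards [eventually_ge_atTop n] with m hm
  exact (lowPass_eq_one
    (hn.le.trans (pow_le_pow_right₀ one_le_two (hm.trans (Nat.le_add_right m c))))).symm

/-- The Schwartz symbol assembled from the first dyadic pieces `b 0, …, b n` of a symbol. -/
def truncation (b : ℕ → 𝓢(V, ℂ)) (n : ℕ) : 𝓢(V, ℂ) := ∑ j ∈ Finset.range (n + 1), b j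

section Truncation

variable {w : V → ℂ} {p : ℕ} {C : ℝ} {b : ℕ → 𝓢(V, ℂ)}

lemma truncation_apply (hb : ∀ j ξ, b j ξ = w ξ * dyadicPiece V j ξ) (n : ℕ) (ξ : V) :
    truncation b n ξ = w ξ * lowPass V n ξ := by
  rw [truncation, ← sum_dyadicPiece, sum_apply, sum_apply, Finset.mul_sum]
  exact Finset.sum_congr rfl fun j _ => hb j ξ

lemma norm_truncation_le (hb : ∀ j ξ, b j ξ = w ξ * dyadicPiece V j ξ) (n : ℕ) (ξ : V) :
    ‖truncation b n ξ‖ ≤ ‖w ξ‖ := by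
  rw [truncation_apply hb, norm_mul]
  exact mul_le_of_le_one_right (norm_nonneg _) (norm_lowPass_le_one n ξ)

lemma tendsto_truncation (hb : ∀ j ξ, b j ξ = w ξ * dyadicPiece V j ξ) (ξ : V) :
    Tendsto (fun n => truncation b n ξ) atTop (𝓝 (w ξ)) := by
  simp only [truncation_apply hb]
  simpa only [add_zero, mul_one] using (tendsto_lowPass 0 ξ).const_mul (w ξ)

lemma pmul_truncation_dyadicPiece (hb : ∀ j ξ, b j ξ = w ξ * dyadicPiece V j ξ) (n j : ℕ) :
    pmul (truncation b n) (dyadicPiece V j) = pmul (b j) (lowPass V n) := by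
  ext ξ
  rw [pmul_apply, pmul_apply, truncation_apply hb, hb, mul_right_comm]

lemma pmul_lowPass_eq_zero (hb : ∀ j ξ, b j ξ = w ξ * dyadicPiece V j ξ) {n j : ℕ}
    (hj : n + 1 < j) : pmul (b j) (lowPass V n) = 0 := by
  obtain ⟨i, rfl⟩ := Nat.exists_eq_add_of_lt hj
  ext ξ
  rw [pmul_apply, hb, zero_apply]
  by_contra hne
  have hpiece := right_ne_zero_of_mul (left_ne_zero_of_mul hne)
  refine right_ne_zero_of_mul hne (lowPass_eq_zero ?_)
  exact (pow_le_pow_right₀ one_le_two (Nat.le_add_right (n + 1) i)).trans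
    (le_norm_of_dyadicPiece_succ_ne_zero hpiece)

variable [MeasurableSpace V] [BorelSpace V] {W : ℕ → ℝ} {A : ℝ}

/-- The constant of `HasDyadicKernels.truncation`. -/
def truncationConst (V : Type*) [NormedAddCommGroup V] [InnerProductSpace ℝ V]
    [FiniteDimensional ℝ V] [MeasurableSpace V] [BorelSpace V] (A : ℝ) : ℝ :=
  A * (kernelMoment 0 (bumpSchwartz V) + 2 * kernelMoment 1 (bumpSchwartz V) + 1)

lemma kernelMoment_one_lowPass_le {n j : ℕ} (hj : j ≤ n + 1) :
    kernelMoment 1 (lowPass V n) ≤ 2 * (2 : ℝ)⁻¹ ^ j * kernelMoment 1 (bumpSchwartz V) := by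
  rw [lowPass, kernelMoment_dilate, val_invTwoPow, abs_of_nonneg (by positivity), pow_one]
  refine mul_le_mul_of_nonneg_right ?_ (kernelMoment_nonneg 1 _)
  have hpow : (2 : ℝ)⁻¹ ^ (n + 1) ≤ 2⁻¹ ^ j :=
    pow_le_pow_of_le_one (by norm_num) (by norm_num) hj
  rw [pow_succ] at hpow
  linarith

lemma HasDyadicKernels.truncation (hK : HasDyadicKernels b W A) (hW : ∀ j, 0 ≤ W j)
    (hb : ∀ j ξ, b j ξ = w ξ * dyadicPiece V j ξ) (n : ℕ) :
    HasDyadicKernels (fun j => pmul (truncation b n) (dyadicPiece V j)) W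
      (truncationConst V A) := by
  have hA := hK.pos
  have h0 := kernelMoment_nonneg 0 (bumpSchwartz V)
  have h1 := kernelMoment_nonneg 1 (bumpSchwartz V)
  refine ⟨by unfold truncationConst; positivity, fun j => ?_, fun j => ?_⟩
  · have hWj := hW j
    rw [pmul_truncation_dyadicPiece hb]
    grw [kernelMoment_zero_pmul_le, kernelMoment_zero_lowPass, hK.kernelMoment_zero_le]
    calc A * W j * kernelMoment 0 (bumpSchwartz V)
        = A * kernelMoment 0 (bumpSchwartz V) * W j := mul_right_comm _ _ _
      _ ≤ truncationConst V A * W j := by unfold truncationConst; gcongr; linarith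
  · have hWj := hW j
    rw [pmul_truncation_dyadicPiece hb]
    rcases le_or_gt j (n + 1) with hj | hj
    · have hb0 := kernelMoment_nonneg 0 (b j)
      grw [kernelMoment_one_pmul_le, kernelMoment_zero_lowPass, kernelMoment_one_lowPass_le hj,
        hK.kernelMoment_zero_le, hK.kernelMoment_one_le]
      calc A * (2 : ℝ)⁻¹ ^ j * W j * kernelMoment 0 (bumpSchwartz V) +
            A * W j * (2 * (2 : ℝ)⁻¹ ^ j * kernelMoment 1 (bumpSchwartz V))
          = A * (kernelMoment 0 (bumpSchwartz V) + 2 * kernelMoment 1 (bumpSchwartz V)) *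
            (2 : ℝ)⁻¹ ^ j * W j := by ring
        _ ≤ truncationConst V A * (2 : ℝ)⁻¹ ^ j * W j := by
            unfold truncationConst; gcongr A * ?_ * _ * _; linarith
    · rw [pmul_lowPass_eq_zero hb hj, kernelMoment_zero]
      unfold truncationConst
      positivity

end Truncation

variable [MeasurableSpace V] [BorelSpace V]

lemma tendsto_fourierInv {F : ℕ → V → ℂ} {G : V → ℂ} {bound : V → ℝ}
    (hF : ∀ n, Continuous (F n)) (hbound : Integrable bound)
    (hle : ∀ n, ∀ᵐ ξ, ‖F n ξ‖ ≤ bound ξ)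
    (hlim : ∀ ξ, Tendsto (fun n => F n ξ) atTop (𝓝 (G ξ))) (x : V) :
    Tendsto (fun n => 𝓕⁻ (F n) x) atTop (𝓝 (𝓕⁻ G x)) := by
  simp only [Real.fourierInv_eq']
  refine tendsto_integral_of_dominated_convergence bound (fun n => ?_) hbound (fun n => ?_) ?_
  · have := hF n
    exact Continuous.aestronglyMeasurable (by fun_prop)
  · filter_upwards [hle n] with ξ h
    rwa [norm_smul, Complex.norm_exp_ofReal_mul_I, one_mul]
  · exact ae_of_all _ fun ξ => (hlim ξ).const_smul _

lemma integrable_one_add_norm_pow_mul (p : ℕ) (g : 𝓢(V, ℂ)) :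
    Integrable (fun ξ => (1 + ‖ξ‖) ^ p * ‖g ξ‖) := by
  refine ((g.integrable.norm.add (g.integrable_pow_mul volume p)).const_mul
    (2 ^ (p - 1))).mono' ?_ (ae_of_all _ fun ξ => ?_)
  · have := g.continuous
    exact Continuous.aestronglyMeasurable (by fun_prop)
  · rw [Real.norm_of_nonneg (by positivity)]
    calc (1 + ‖ξ‖) ^ p * ‖g ξ‖ ≤ (2 ^ (p - 1) * (1 ^ p + ‖ξ‖ ^ p)) * ‖g ξ‖ := by
          gcongr
          exact add_pow_le zero_le_one (norm_nonneg ξ) p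
      _ = 2 ^ (p - 1) * (‖g ξ‖ + ‖ξ‖ ^ p * ‖g ξ‖) := by ring

lemma norm_fourier_multiplier_lowPass_le (k : ℕ) (f : 𝓢(V, ℂ)) (ξ : V) :
    ‖𝓕 (multiplier (lowPass V k) f) ξ‖ ≤ ‖𝓕 f ξ‖ := by
  rw [fourier_multiplier_apply, norm_mul]
  exact mul_le_of_le_one_left (norm_nonneg _) (norm_lowPass_le_one k ξ)

lemma tendsto_fourier_multiplier_lowPass (c : ℕ) (f : 𝓢(V, ℂ)) (ξ : V) :
    Tendsto (fun n => 𝓕 (multiplier (lowPass V (n + c)) f) ξ) atTop (𝓝 (𝓕 f ξ)) := by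
  simp only [fourier_multiplier_apply]
  simpa only [one_mul] using (tendsto_lowPass c ξ).mul_const (𝓕 f ξ)

lemma tendsto_multiplier_lowPass (c : ℕ) (f : 𝓢(V, ℂ)) (x : V) :
    Tendsto (fun n => multiplier (lowPass V (n + c)) f x) atTop (𝓝 (f x)) := by
  have hinv : ∀ h : 𝓢(V, ℂ), h x = 𝓕⁻ (⇑(𝓕 h : 𝓢(V, ℂ))) x := fun h => by
    rw [← fourierInv_coe, FourierTransform.fourierInv_fourier_eq]
  simp only [hinv]
  exact tendsto_fourierInv (fun n => SchwartzMap.continuous _) (𝓕 f).integrable.norm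
    (fun n => ae_of_all _ fun ξ => norm_fourier_multiplier_lowPass_le _ f ξ)
    (tendsto_fourier_multiplier_lowPass c f) x

lemma tendsto_fourier_pmul_lowPass (f g : 𝓢(V, ℂ)) (c d : ℕ) (ζ : V) :
    Tendsto (fun n => 𝓕 (pmul (multiplier (lowPass V (n + c)) f)
      (multiplier (lowPass V (n + d)) g)) ζ) atTop (𝓝 (𝓕 (pmul f g) ζ)) := by
  simp only [fourier_pmul]
  have hbound : ∀ z, ‖𝓕 g z‖ ≤ SchwartzMap.seminorm ℝ 0 0 (𝓕 g) :=
    SchwartzMap.norm_le_seminorm ℝ (𝓕 g)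
  refine tendsto_integral_of_dominated_convergence
    (fun η => ‖𝓕 f η‖ * SchwartzMap.seminorm ℝ 0 0 (𝓕 g)) (fun n => ?_)
    ((𝓕 f).integrable.norm.mul_const _) (fun n => ae_of_all _ fun η => ?_)
    (ae_of_all _ fun η => (tendsto_fourier_multiplier_lowPass c f η).mul
      (tendsto_fourier_multiplier_lowPass d g _))
  · exact ((SchwartzMap.continuous _).mul
      ((SchwartzMap.continuous _).comp (by fun_prop))).aestronglyMeasurable
  · rw [norm_mul]
    exact mul_le_mul (norm_fourier_multiplier_lowPass_le _ f η)
      ((norm_fourier_multiplier_lowPass_le _ g _).trans (hbound _)) (norm_nonneg _) (norm_nonneg _)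

omit [InnerProductSpace ℝ V] [FiniteDimensional ℝ V] [MeasurableSpace V] [BorelSpace V] in
lemma one_add_norm_pow_le (p : ℕ) (ζ η : V) :
    (1 + ‖ζ‖) ^ p ≤ (1 + ‖η‖) ^ p * (1 + ‖ζ - η‖) ^ p := by
  rw [← mul_pow]
  have htri : ‖ζ‖ ≤ ‖η‖ + ‖ζ - η‖ := norm_le_norm_add_norm_sub' ζ η
  gcongr
  nlinarith [norm_nonneg η, norm_nonneg (ζ - η)]

lemma one_add_norm_pow_mul_norm_fourier_pmul_le (p : ℕ) {f g f' g' : 𝓢(V, ℂ)}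
    (hf : ∀ ξ, ‖𝓕 f' ξ‖ ≤ ‖𝓕 f ξ‖) (hg : ∀ ξ, ‖𝓕 g' ξ‖ ≤ ‖𝓕 g ξ‖) {ζ : V}
    (hζ : Integrable fun η => (1 + ‖η‖) ^ p * ‖𝓕 f η‖ * ((1 + ‖ζ - η‖) ^ p * ‖𝓕 g (ζ - η)‖)) :
    (1 + ‖ζ‖) ^ p * ‖𝓕 (pmul f' g') ζ‖ ≤
      ∫ η, (1 + ‖η‖) ^ p * ‖𝓕 f η‖ * ((1 + ‖ζ - η‖) ^ p * ‖𝓕 g (ζ - η)‖) := by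
  rw [fourier_pmul]
  grw [norm_integral_le_integral_norm]
  rw [← integral_const_mul]
  refine integral_mono_of_nonneg (ae_of_all _ fun η => by positivity) hζ (ae_of_all _ fun η => ?_)
  dsimp only
  rw [norm_mul]
  grw [hf η, hg (ζ - η), one_add_norm_pow_le p ζ η]
  exact le_of_eq (by ring)

variable {w : V → ℂ} {p : ℕ} {C : ℝ} {b : ℕ → 𝓢(V, ℂ)}

lemma tendsto_multiplier_truncation (hw : ∀ ξ, ‖w ξ‖ ≤ C * (1 + ‖ξ‖) ^ p)
    (hb : ∀ j ξ, b j ξ = w ξ * dyadicPiece V j ξ) {u : ℕ → 𝓢(V, ℂ)} {v : V → ℂ} {bound : V → ℝ}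
    (hbound : Integrable bound) (hle : ∀ n, ∀ᵐ ξ, (1 + ‖ξ‖) ^ p * ‖𝓕 (u n) ξ‖ ≤ bound ξ)
    (hlim : ∀ ξ, Tendsto (fun n => 𝓕 (u n) ξ) atTop (𝓝 (v ξ))) (x : V) :
    Tendsto (fun n => multiplier (truncation b n) (u n) x) atTop
      (𝓝 (𝓕⁻ (fun ξ => w ξ * v ξ) x)) := by
  have hC : 0 ≤ C := by simpa using (norm_nonneg _).trans (hw 0)
  simp only [coe_multiplier]
  refine tendsto_fourierInv
    (fun n => (SchwartzMap.continuous _).mul (SchwartzMap.continuous _)) (hbound.const_mul C)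
    (fun n => ?_) (fun ξ => (tendsto_truncation hb ξ).mul (hlim ξ)) x
  filter_upwards [hle n] with ξ hξ
  rw [Pi.mul_apply, norm_mul]
  grw [norm_truncation_le hb, hw, mul_assoc, hξ]

/-- The commutator `[w(D), f] g` for a symbol `w` that need not be a Schwartz function. -/
def symbolCommutator (w f g : V → ℂ) (x : V) : ℂ :=
  𝓕⁻ (fun ξ => w ξ * 𝓕 (fun y => f y * g y) ξ) x - f x * 𝓕⁻ (fun ξ => w ξ * 𝓕 g ξ) x

lemma tendsto_commutator_truncation (hw : ∀ ξ, ‖w ξ‖ ≤ C * (1 + ‖ξ‖) ^ p)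
    (hb : ∀ j ξ, b j ξ = w ξ * dyadicPiece V j ξ) (f g : 𝓢(V, ℂ)) (c d : ℕ) (x : V) :
    Tendsto (fun n => commutator (truncation b n) (multiplier (lowPass V (n + c)) f)
        (multiplier (lowPass V (n + d)) g) x) atTop
      (𝓝 (symbolCommutator w f g x)) := by
  have hprod : 𝓕 (fun y => f y * g y) = ⇑(𝓕 (pmul f g) : 𝓢(V, ℂ)) := by
    rw [fourier_coe]
    rfl
  rw [symbolCommutator, hprod, ← fourier_coe]
  simp only [commutator_eq, sub_apply, pmul_apply]
  have hf_int := integrable_one_add_norm_pow_mul p (𝓕 f)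
  have hg_int := integrable_one_add_norm_pow_mul p (𝓕 g)
  refine Tendsto.sub ?_ ((tendsto_multiplier_lowPass c f x).mul ?_)
  · refine tendsto_multiplier_truncation hw hb
      (hf_int.integrable_convolution (ContinuousLinearMap.mul ℝ ℝ) hg_int) (fun n => ?_)
      (tendsto_fourier_pmul_lowPass f g c d) x
    filter_upwards [hf_int.ae_convolution_exists (ContinuousLinearMap.mul ℝ ℝ) hg_int] with ζ hζ
    exact one_add_norm_pow_mul_norm_fourier_pmul_le p (norm_fourier_multiplier_lowPass_le _ f)
      (norm_fourier_multiplier_lowPass_le _ g) hζ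
  · refine tendsto_multiplier_truncation hw hb hg_int (fun n => ae_of_all _ fun ξ => ?_)
      (tendsto_fourier_multiplier_lowPass d g) x
    grw [norm_fourier_multiplier_lowPass_le]

lemma eLpNorm_two_eq (f : 𝓢(V, ℂ)) :
    eLpNorm f 2 volume = ENNReal.ofReal (Real.sqrt (l2Sq f)) := by
  rw [eLpNorm_eq_lintegral_rpow_enorm_toReal (by norm_num) (by norm_num), Real.sqrt_eq_rpow,
    ← ENNReal.ofReal_rpow_of_nonneg (l2Sq_nonneg f) (by norm_num), ofReal_l2Sq]
  simp only [ENNReal.toReal_ofNat, ENNReal.rpow_ofNat]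

variable {W : ℕ → ℝ} {A B q : ℝ}

lemma l2Sq_commutator_truncation_le (hW : IsDyadicWeight W B q) (hK : HasDyadicKernels b W A)
    (hb : ∀ j ξ, b j ξ = w ξ * dyadicPiece V j ξ) {f g : 𝓢(V, ℂ)} {U Ef L Eg : ℝ} (hU : 0 ≤ U)
    (hg : ∀ x, ‖g x‖ ≤ U) (hL : 0 ≤ L) (hf : ∀ x y, ‖f x - f y‖ ≤ L * ‖x - y‖)
    (hEg : ∀ N, ∑ k ∈ Finset.range N,
      ((2 : ℝ)⁻¹ ^ k * W k) ^ 2 * l2Sq (multiplier (dyadicPiece V k) g) ≤ Eg)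
    (hEf : ∀ N, ∑ k ∈ Finset.range N, W k ^ 2 * l2Sq (multiplier (dyadicPiece V k) f) ≤ Ef)
    (n : ℕ) :
    l2Sq (commutator (truncation b n) (multiplier (lowPass V (n + 2)) f)
        (multiplier (lowPass V (n + 4)) g)) ≤
      commutatorConst V (truncationConst V A) B q * (L ^ 2 * Eg + U ^ 2 * Ef) := by
  have hlim : Tendsto
      (fun u : ℝ => commutatorConst V (truncationConst V A) B q * (L ^ 2 * Eg + u ^ 2 * Ef))
      (𝓝[>] U)
      (𝓝 (commutatorConst V (truncationConst V A) B q * (L ^ 2 * Eg + U ^ 2 * Ef))) :=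
    (Continuous.tendsto (by fun_prop) U).mono_left nhdsWithin_le_nhds
  refine ge_of_tendsto hlim ?_
  filter_upwards [self_mem_nhdsWithin] with u hu
  exact l2Sq_commutator_multiplier_lowPass_le hW (hK.truncation (fun j => (hW.pos j).le) hb n)
    (hU.trans_lt hu) (fun x => (hg x).trans (le_of_lt hu)) hL hf hEg hEf n

theorem eLpNorm_commutator_le (hW : IsDyadicWeight W B q) (hK : HasDyadicKernels b W A)
    (hw : ∀ ξ, ‖w ξ‖ ≤ C * (1 + ‖ξ‖) ^ p) (hb : ∀ j ξ, b j ξ = w ξ * dyadicPiece V j ξ)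
    {f g : 𝓢(V, ℂ)} {U Ef L Eg : ℝ} (hU : 0 ≤ U)
    (hg : ∀ x, ‖g x‖ ≤ U) (hL : 0 ≤ L) (hf : ∀ x y, ‖f x - f y‖ ≤ L * ‖x - y‖)
    (hEg : ∀ N, ∑ k ∈ Finset.range N,
      ((2 : ℝ)⁻¹ ^ k * W k) ^ 2 * l2Sq (multiplier (dyadicPiece V k) g) ≤ Eg)
    (hEf : ∀ N, ∑ k ∈ Finset.range N, W k ^ 2 * l2Sq (multiplier (dyadicPiece V k) f) ≤ Ef) :
    eLpNorm (symbolCommutator w f g) 2 volume ≤ ENNReal.ofReal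
      √(commutatorConst V (truncationConst V A) B q * (L ^ 2 * Eg + U ^ 2 * Ef)) := by
  refine (Lp.eLpNorm_lim_le_liminf_eLpNorm
    (fun n => (SchwartzMap.continuous _).aestronglyMeasurable) _
    (ae_of_all _ (tendsto_commutator_truncation hw hb f g 2 4))).trans ?_
  refine liminf_le_of_frequently_le' (Frequently.of_forall fun n => ?_)
  rw [eLpNorm_two_eq]
  exact ENNReal.ofReal_le_ofReal (Real.sqrt_le_sqrt
    (l2Sq_commutator_truncation_le hW hK hb hU hg hL hf hEg hEf n))

end Limits

section UniformKernels

variable {V : Type*} [NormedAddCommGroup V] [InnerProductSpace ℝ V] [FiniteDimensional ℝ V]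
  [MeasurableSpace V] [BorelSpace V]

open Filter Topology
open scoped ContDiff

/-- The symbol `a` is a Schwartz function whose kernel has mass and first moment at most `A`. -/
def IsKernelBounded (a : V → ℂ) (A : ℝ) : Prop :=
  ∃ b : 𝓢(V, ℂ), ⇑b = a ∧ kernelMoment 0 b ≤ A ∧ kernelMoment 1 b ≤ A

lemma IsKernelBounded.mono {a : V → ℂ} {A A' : ℝ} (h : IsKernelBounded a A) (hA : A ≤ A') :
    IsKernelBounded a A' := by
  obtain ⟨b, hb, h₀, h₁⟩ := h
  exact ⟨b, hb, h₀.trans hA, h₁.trans hA⟩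

lemma exists_seminorm_kernel_le (k n : ℕ) : ∃ (s : Finset (ℕ × ℕ)) (C : ℝ), 0 ≤ C ∧
    ∀ b : 𝓢(V, ℂ), SchwartzMap.seminorm ℂ k n (kernel b) ≤
      C * s.sup (schwartzSeminormFamily ℂ V ℂ) b := by
  have hcont : Continuous ((SchwartzMap.seminorm ℂ k n).comp
      (FourierTransform.fourierInvCLM ℂ 𝓢(V, ℂ) : 𝓢(V, ℂ) →ₗ[ℂ] 𝓢(V, ℂ))) :=
    ((schwartz_withSeminorms ℂ V ℂ).continuous_seminorm (k, n)).comp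
      (FourierTransform.fourierInvCLM ℂ 𝓢(V, ℂ) : 𝓢(V, ℂ) →L[ℂ] 𝓢(V, ℂ)).continuous
  obtain ⟨s, C, -, h⟩ := Seminorm.bound_of_continuous (schwartz_withSeminorms ℂ V ℂ) _ hcont
  exact ⟨s, C, C.2, fun b => h b⟩

lemma exists_kernelMoment_le (n : ℕ) : ∃ (s : Finset (ℕ × ℕ)) (C : ℝ), 0 ≤ C ∧
    ∀ (b : 𝓢(V, ℂ)) (M : ℝ), 0 ≤ M → (∀ i ∈ s, SchwartzMap.seminorm ℂ i.1 i.2 b ≤ M) →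
      kernelMoment n b ≤ C * M := by
  classical
  let I := (volume : Measure V).integrablePower
  let J := 2 ^ I * ∫ x : V, (1 + ‖x‖) ^ (-(I : ℝ))
  have : 0 ≤ J := mul_nonneg (by positivity) (integral_nonneg fun x => by positivity)
  obtain ⟨s₀, C₀, hC₀, h₀⟩ := exists_seminorm_kernel_le (V := V) 0 0
  obtain ⟨s₁, C₁, hC₁, h₁⟩ := exists_seminorm_kernel_le (V := V) (n + I) 0
  refine ⟨s₀ ∪ s₁, J * (C₀ + C₁), by positivity, fun b M hM h => ?_⟩
  have hle₀ := Seminorm.finset_sup_apply_le (p := schwartzSeminormFamily ℂ V ℂ) (x := b) hM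
    fun i hi => h i (Finset.mem_union_left s₁ hi)
  have hle₁ := Seminorm.finset_sup_apply_le (p := schwartzSeminormFamily ℂ V ℂ) (x := b) hM
    fun i hi => h i (Finset.mem_union_right s₀ hi)
  have hint := SchwartzMap.integral_pow_mul_iteratedFDeriv_le ℂ volume (kernel b) n 0
  simp only [norm_iteratedFDeriv_zero] at hint
  calc kernelMoment n b
      ≤ J * (SchwartzMap.seminorm ℂ 0 0 (kernel b) + SchwartzMap.seminorm ℂ (n + I) 0 (kernel b)) :=
        hint
    _ ≤ J * (C₀ * M + C₁ * M) := by grw [h₀ b, h₁ b, hle₀, hle₁]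
    _ = J * (C₀ + C₁) * M := by ring

lemma exists_isKernelBounded_of_seminorm_le : ∃ (s : Finset (ℕ × ℕ)) (C : ℝ), 0 ≤ C ∧
    ∀ (b : 𝓢(V, ℂ)) (M : ℝ), 0 ≤ M → (∀ i ∈ s, SchwartzMap.seminorm ℂ i.1 i.2 b ≤ M) →
      IsKernelBounded b (C * M) := by
  classical
  obtain ⟨s₀, C₀, hC₀, h₀⟩ := exists_kernelMoment_le (V := V) 0
  obtain ⟨s₁, C₁, _, h₁⟩ := exists_kernelMoment_le (V := V) 1
  refine ⟨s₀ ∪ s₁, max C₀ C₁, le_max_of_le_left hC₀, fun b M hM h => ⟨b, rfl, ?_, ?_⟩⟩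
  · exact (h₀ b M hM fun i hi => h i (Finset.mem_union_left s₁ hi)).trans
      (mul_le_mul_of_nonneg_right (le_max_left _ _) hM)
  · exact (h₁ b M hM fun i hi => h i (Finset.mem_union_right s₀ hi)).trans
      (mul_le_mul_of_nonneg_right (le_max_right _ _) hM)

section Families

variable {P : Type*} [NormedAddCommGroup P] [NormedSpace ℝ P] {K : Set P}

omit [FiniteDimensional ℝ V] [MeasurableSpace V] [BorelSpace V] in
lemma norm_iteratedFDeriv_slice_le {G : P × V → ℂ} (hG : ContDiff ℝ ∞ G) (n : ℕ) (θ : P) (ξ : V) :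
    ‖iteratedFDeriv ℝ n (fun η => G (θ, η)) ξ‖ ≤
      ‖iteratedFDeriv ℝ n G (θ, ξ)‖ * ‖ContinuousLinearMap.inr ℝ P V‖ ^ n := by
  have hslice : (fun η => G (θ, η)) =
      (fun z => G (z + (θ, 0))) ∘ ContinuousLinearMap.inr ℝ P V := by
    ext η
    simp
  have hshift : ContDiff ℝ ∞ fun z => G (z + (θ, 0)) := hG.comp (by fun_prop)
  rw [hslice, ContinuousLinearMap.iteratedFDeriv_comp_right _ hshift ξ (by exact_mod_cast le_top),
    iteratedFDeriv_comp_add_right]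
  refine (ContinuousMultilinearMap.norm_compContinuousLinearMap_le _ _).trans (le_of_eq ?_)
  simp

omit [MeasurableSpace V] [BorelSpace V] in
lemma exists_norm_iteratedFDeriv_slice_le {G : P × V → ℂ} (hG : ContDiff ℝ ∞ G) (hK : IsCompact K)
    (R : ℝ) (n : ℕ) : ∃ D : ℝ, 0 ≤ D ∧ ∀ θ ∈ K, ∀ ξ : V, ‖ξ‖ ≤ R →
      ‖iteratedFDeriv ℝ n (fun η => G (θ, η)) ξ‖ ≤ D := by
  have hcont : Continuous (iteratedFDeriv ℝ n G) :=
    hG.continuous_iteratedFDeriv (by exact_mod_cast le_top)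
  obtain ⟨D, hD⟩ := (hK.prod (isCompact_closedBall (0 : V) R)).exists_bound_of_continuousOn
    hcont.continuousOn
  refine ⟨max D 0 * ‖ContinuousLinearMap.inr ℝ P V‖ ^ n, by positivity, fun θ hθ ξ hξ => ?_⟩
  refine (norm_iteratedFDeriv_slice_le hG n θ ξ).trans ?_
  grw [hD (θ, ξ) ⟨hθ, mem_closedBall_zero_iff.2 hξ⟩, ← le_max_left D 0]

omit [FiniteDimensional ℝ V] [MeasurableSpace V] [BorelSpace V] in
lemma iteratedFDeriv_eq_zero_of_lt_norm {a : V → ℂ} {R : ℝ} (ha : ∀ ξ, R ≤ ‖ξ‖ → a ξ = 0) (n : ℕ)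
    {ξ : V} (hξ : R < ‖ξ‖) : iteratedFDeriv ℝ n a ξ = 0 := by
  have hzero : a =ᶠ[𝓝 ξ] fun _ => 0 := by
    filter_upwards [(isOpen_lt continuous_const continuous_norm).mem_nhds hξ] with η hη
    exact ha η (le_of_lt hη)
  rw [(hzero.iteratedFDeriv ℝ n).eq_of_nhds]
  simp

lemma exists_forall_isKernelBounded (G : P × V → ℂ) (hK : IsCompact K) (R : ℝ)
    (hG : ContDiff ℝ ∞ G) (hR : ∀ θ ξ, R ≤ ‖ξ‖ → G (θ, ξ) = 0) :
    ∃ A : ℝ, 0 < A ∧ ∀ θ ∈ K, IsKernelBounded (fun ξ => G (θ, ξ)) A := by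
  obtain ⟨s, C, hC, hbound⟩ := exists_isKernelBounded_of_seminorm_le (V := V)
  choose D hD₀ hD using exists_norm_iteratedFDeriv_slice_le hG hK (max R 0)
  have hterm (i : ℕ × ℕ) : 0 ≤ max R 0 ^ i.1 * D i.2 := by
    have := hD₀ i.2
    positivity
  set M := ∑ i ∈ s, max R 0 ^ i.1 * D i.2
  have hM : 0 ≤ M := Finset.sum_nonneg fun i _ => hterm i
  refine ⟨C * M + 1, by positivity, fun θ hθ => ?_⟩
  let b := (hasCompactSupport_of_le_norm R (hR θ)).toSchwartzMap
    (hG.comp (by fun_prop : ContDiff ℝ ∞ fun ξ : V => (θ, ξ)))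
  suffices h : ∀ i ∈ s, SchwartzMap.seminorm ℂ i.1 i.2 b ≤ M from
    (hbound b M hM h).mono (le_add_of_nonneg_right zero_le_one)
  refine fun i hi => SchwartzMap.seminorm_le_bound ℂ _ _ _ hM fun ξ => ?_
  refine le_trans ?_ (Finset.single_le_sum (fun i _ => hterm i) hi)
  rcases le_or_gt ‖ξ‖ (max R 0) with hξ | hξ
  · have hderiv : ‖iteratedFDeriv ℝ i.2 b ξ‖ ≤ D i.2 := hD i.2 θ hθ ξ hξ
    gcongr
  · have hderiv : iteratedFDeriv ℝ i.2 b ξ = 0 :=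
      iteratedFDeriv_eq_zero_of_lt_norm (hR θ) i.2 ((le_max_left R 0).trans_lt hξ)
    rw [hderiv, norm_zero, mul_zero]
    exact hterm i

lemma exists_forall_isKernelBounded_mul (u : P × V → ℝ) (Ψ : 𝓢(V, ℂ)) (hK : IsCompact K) (R : ℝ)
    (hΨ : ∀ ξ, R ≤ ‖ξ‖ → Ψ ξ = 0)
    (hu : ∀ θ ξ, ContDiffAt ℝ ∞ u (θ, ξ) ∨ ∀ᶠ η in 𝓝 ξ, Ψ η = 0) :
    ∃ A : ℝ, 0 < A ∧ ∀ θ ∈ K, IsKernelBounded (fun ξ => ((u (θ, ξ) : ℝ) : ℂ) * Ψ ξ) A := by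
  refine exists_forall_isKernelBounded (fun p => ((u p : ℝ) : ℂ) * Ψ p.2) hK R ?_
    fun θ ξ h => by rw [hΨ ξ h, mul_zero]
  rw [contDiff_iff_contDiffAt]
  rintro ⟨θ, ξ⟩
  rcases hu θ ξ with h | h
  · exact (Complex.ofRealCLM.contDiff.contDiffAt.comp (θ, ξ) h).mul
      ((Ψ.smooth ⊤).comp contDiff_snd).contDiffAt
  · refine (contDiffAt_const (c := (0 : ℂ))).congr_of_eventuallyEq ?_
    filter_upwards [(continuous_snd.tendsto (θ, ξ)).eventually h] with p hp
    rw [hp, mul_zero]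

end Families

end UniformKernels

section CothSymbol

open scoped ContDiff

lemma inv_factorial_le {m n : ℕ} (h : m ≤ n) :
    (1 : ℝ) / n.factorial ≤ 1 / m.factorial :=
  one_div_le_one_div_of_le (by exact_mod_cast m.factorial_pos)
    (by exact_mod_cast Nat.factorial_le h)

/-- The real power series with coefficients `c`. -/
def powerSum (c : ℕ → ℝ) (z : ℝ) : ℝ := ∑' n, c n * z ^ n

section PowerSum

variable {c : ℕ → ℝ}

lemma powerSum_zero (c : ℕ → ℝ) : powerSum c 0 = c 0 := by
  rw [powerSum, tsum_eq_single 0 fun n hn => by rw [zero_pow hn, mul_zero], pow_zero, mul_one]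

lemma abs_mul_pow_le_pow_div_factorial (hc : ∀ n, |c n| ≤ 1 / n.factorial) {t : ℝ} (ht : 0 ≤ t)
    (n : ℕ) : |c n| * t ^ n ≤ t ^ n / n.factorial := by
  grw [hc n]
  exact le_of_eq (by ring)

lemma summable_mul_pow (hc : ∀ n, |c n| ≤ 1 / n.factorial) (z : ℝ) :
    Summable fun n => c n * z ^ n := by
  refine (Real.summable_pow_div_factorial |z|).of_norm_bounded fun n => ?_
  rw [norm_mul, norm_pow, Real.norm_eq_abs, Real.norm_eq_abs]
  exact abs_mul_pow_le_pow_div_factorial hc (abs_nonneg z) n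

lemma contDiff_powerSum (hc : ∀ n, |c n| ≤ 1 / n.factorial) {m : WithTop ℕ∞} :
    ContDiff ℝ m (powerSum c) := by
  set p := FormalMultilinearSeries.ofScalars ℝ c
  have hradius : p.radius = ⊤ := by
    refine p.radius_eq_top_of_summable_norm fun r => ?_
    refine (Real.summable_pow_div_factorial r).of_norm_bounded fun n => ?_
    rw [FormalMultilinearSeries.ofScalars_norm, norm_mul, norm_norm, norm_pow,
      Real.norm_of_nonneg r.coe_nonneg, Real.norm_eq_abs]
    exact abs_mul_pow_le_pow_div_factorial hc r.coe_nonneg n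
  have hanalytic : AnalyticOnNhd ℝ p.sum Set.univ := by
    have h := (p.hasFPowerSeriesOnBall (by rw [hradius]; exact ENNReal.coe_lt_top)).analyticOnNhd
    rwa [hradius, Metric.eball_top] at h
  have hsum : powerSum c = p.sum := by
    ext z
    exact (FormalMultilinearSeries.ofScalars_sum_eq c z).symm
  rw [hsum]
  exact hanalytic.contDiff

lemma powerSum_pos (hc : ∀ n, |c n| ≤ 1 / n.factorial) (h₀ : 0 < c 0) (hnonneg : ∀ n, 0 ≤ c n)
    {z : ℝ} (hz : 0 ≤ z) : 0 < powerSum c z := by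
  have hle := (summable_mul_pow hc z).le_tsum 0 fun n _ => mul_nonneg (hnonneg n) (by positivity)
  rw [pow_zero, mul_one] at hle
  exact h₀.trans_le hle

end PowerSum

/-- Coefficients of `cosh √z`. -/
def coshCoeff (n : ℕ) : ℝ := 1 / (2 * n).factorial

/-- Coefficients of `sinh √z / √z`. -/
def sinhcCoeff (n : ℕ) : ℝ := 1 / (2 * n + 1).factorial

/-- Coefficients of `(cosh √z - sinh √z / √z) / z`. -/
def coshSubSinhcCoeff (n : ℕ) : ℝ := 1 / (2 * n + 2).factorial - 1 / (2 * n + 3).factorial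

lemma abs_coshCoeff_le (n : ℕ) : |coshCoeff n| ≤ 1 / n.factorial := by
  rw [coshCoeff, abs_of_nonneg (by positivity)]
  exact inv_factorial_le (by lia)

lemma abs_sinhcCoeff_le (n : ℕ) : |sinhcCoeff n| ≤ 1 / n.factorial := by
  rw [sinhcCoeff, abs_of_nonneg (by positivity)]
  exact inv_factorial_le (by lia)

lemma coshSubSinhcCoeff_nonneg (n : ℕ) : 0 ≤ coshSubSinhcCoeff n :=
  sub_nonneg.2 (inv_factorial_le (by lia))

lemma coshSubSinhcCoeff_le_of_le {m n : ℕ} (h : m ≤ 2 * n + 2) :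
    coshSubSinhcCoeff n ≤ 1 / m.factorial :=
  (sub_le_self _ (by positivity)).trans (inv_factorial_le h)

lemma abs_coshSubSinhcCoeff_le (n : ℕ) : |coshSubSinhcCoeff n| ≤ 1 / n.factorial := by
  rw [abs_of_nonneg (coshSubSinhcCoeff_nonneg n)]
  exact coshSubSinhcCoeff_le_of_le (by lia)

/-- The entire function `z ↦ cosh √z`. -/
def coshSqrt : ℝ → ℝ := powerSum coshCoeff

/-- The entire function `z ↦ sinh √z / √z`. -/
def sinhcSqrt : ℝ → ℝ := powerSum sinhcCoeff

/-- The entire function `z ↦ (cosh √z - sinh √z / √z) / z`. -/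
def coshSubSinhcSqrt : ℝ → ℝ := powerSum coshSubSinhcCoeff

lemma coshSqrt_sq (x : ℝ) : coshSqrt (x ^ 2) = Real.cosh x := by
  rw [← (Real.hasSum_cosh x).tsum_eq, coshSqrt, powerSum]
  refine tsum_congr fun n => ?_
  rw [coshCoeff, ← pow_mul]
  ring

lemma mul_sinhcSqrt_sq (x : ℝ) : x * sinhcSqrt (x ^ 2) = Real.sinh x := by
  rw [← (Real.hasSum_sinh x).tsum_eq, sinhcSqrt, powerSum, ← tsum_mul_left]
  refine tsum_congr fun n => ?_
  rw [sinhcCoeff, ← pow_mul, pow_succ]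
  ring

lemma coshSqrt_zero : coshSqrt 0 = 1 := by
  simp [coshSqrt, powerSum_zero, coshCoeff]

lemma sinhcSqrt_zero : sinhcSqrt 0 = 1 := by
  simp [sinhcSqrt, powerSum_zero, sinhcCoeff]

lemma coshSqrt_pos {z : ℝ} (hz : 0 ≤ z) : 0 < coshSqrt z :=
  powerSum_pos abs_coshCoeff_le (by unfold coshCoeff; positivity)
    (fun n => by unfold coshCoeff; positivity) hz

lemma sinhcSqrt_pos {z : ℝ} (hz : 0 ≤ z) : 0 < sinhcSqrt z :=
  powerSum_pos abs_sinhcCoeff_le (by unfold sinhcCoeff; positivity)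
    (fun n => by unfold sinhcCoeff; positivity) hz

lemma coshSqrt_sub_sinhcSqrt (z : ℝ) : coshSqrt z - sinhcSqrt z = z * coshSubSinhcSqrt z := by
  have hcosh := summable_mul_pow abs_coshCoeff_le z
  have hsinhc := summable_mul_pow abs_sinhcCoeff_le z
  rw [coshSqrt, sinhcSqrt, coshSubSinhcSqrt, powerSum, powerSum, powerSum,
    ← hcosh.tsum_sub hsinhc, (hcosh.sub hsinhc).tsum_eq_zero_add, ← tsum_mul_left]
  have hzero : coshCoeff 0 * z ^ 0 - sinhcCoeff 0 * z ^ 0 = 0 := by simp [coshCoeff, sinhcCoeff]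
  rw [hzero, zero_add]
  refine tsum_congr fun n => ?_
  rw [coshCoeff, sinhcCoeff, coshSubSinhcCoeff, show 2 * (n + 1) = 2 * n + 2 by ring]
  ring

lemma coshSubSinhcSqrt_le_sinhcSqrt {z : ℝ} (hz : 0 ≤ z) :
    coshSubSinhcSqrt z ≤ sinhcSqrt z :=
  (summable_mul_pow abs_coshSubSinhcCoeff_le z).tsum_le_tsum
    (fun n => mul_le_mul_of_nonneg_right (coshSubSinhcCoeff_le_of_le (by lia)) (by positivity))
    (summable_mul_pow abs_sinhcCoeff_le z)

/-- The function `z ↦ (√z coth √z)^{1/2}`, smooth up to `z = 0`; composed with `μ |ξ|²` it is the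
symbol of `T_μ^{-1/2}`. -/
def cothSymbol (z : ℝ) : ℝ := √(coshSqrt z / sinhcSqrt z)

/-- The quotient `(cothSymbol z - 1) / z`, smooth up to `z = 0`. -/
def cothSymbolSlope (z : ℝ) : ℝ := coshSubSinhcSqrt z / (sinhcSqrt z * (cothSymbol z + 1))

lemma cothSymbol_nonneg (z : ℝ) : 0 ≤ cothSymbol z := Real.sqrt_nonneg _

lemma cothSymbol_sub_one {z : ℝ} (hz : 0 ≤ z) : cothSymbol z - 1 = z * cothSymbolSlope z := by
  have hcosh := coshSqrt_pos hz
  have hsinhc := sinhcSqrt_pos hz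
  have hnonneg := cothSymbol_nonneg z
  have hsq : cothSymbol z ^ 2 * sinhcSqrt z = coshSqrt z := by
    rw [cothSymbol, Real.sq_sqrt (by positivity), div_mul_cancel₀ _ hsinhc.ne']
  rw [cothSymbolSlope, ← mul_div_assoc, ← coshSqrt_sub_sinhcSqrt, eq_div_iff (by positivity)]
  linear_combination hsq

lemma cothSymbol_le {z : ℝ} (hz : 0 ≤ z) : cothSymbol z ≤ 1 + z := by
  have hsinhc := sinhcSqrt_pos hz
  have hcosh : coshSqrt z ≤ (1 + z) * sinhcSqrt z := by
    linarith [coshSqrt_sub_sinhcSqrt z,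
      mul_le_mul_of_nonneg_left (coshSubSinhcSqrt_le_sinhcSqrt hz) hz]
  refine Real.sqrt_le_iff.2 ⟨by positivity, (div_le_iff₀ hsinhc).2 (hcosh.trans ?_)⟩
  gcongr
  exact le_self_pow₀ (le_add_of_nonneg_right hz) two_ne_zero

lemma contDiffAt_cothSymbol {m : WithTop ℕ∞} {z : ℝ} (hz : 0 ≤ z) :
    ContDiffAt ℝ m cothSymbol z := by
  have hcosh := coshSqrt_pos hz
  have hsinhc := sinhcSqrt_pos hz
  exact ContDiffAt.sqrt ((contDiff_powerSum abs_coshCoeff_le).contDiffAt.div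
    (contDiff_powerSum abs_sinhcCoeff_le).contDiffAt hsinhc.ne') (div_pos hcosh hsinhc).ne'

lemma contDiffAt_cothSymbolSlope {m : WithTop ℕ∞} {z : ℝ} (hz : 0 ≤ z) :
    ContDiffAt ℝ m cothSymbolSlope z := by
  have hsinhc := sinhcSqrt_pos hz
  have hnonneg := cothSymbol_nonneg z
  exact (contDiff_powerSum abs_coshSubSinhcCoeff_le).contDiffAt.div
    ((contDiff_powerSum abs_sinhcCoeff_le).contDiffAt.mul
      ((contDiffAt_cothSymbol hz).add contDiffAt_const)) (by positivity)

lemma Tsymb_rpow_neg_half {μ r : ℝ} (hμ : 0 < μ) (hr : 0 ≤ r) :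
    Tsymb μ r ^ (-(1 : ℝ) / 2) = cothSymbol (μ * r ^ 2) := by
  rw [Tsymb]
  split_ifs with h
  · rw [h, zero_pow two_ne_zero, mul_zero, cothSymbol, coshSqrt_zero, sinhcSqrt_zero, div_one,
      Real.sqrt_one, Real.one_rpow]
  · have : 0 < r := hr.lt_of_ne' h
    have hsq : μ * r ^ 2 = (√μ * r) ^ 2 := by rw [mul_pow, Real.sq_sqrt hμ.le]
    have hx : 0 < √μ * r := by positivity
    generalize √μ * r = x at hsq hx
    have hcosh := coshSqrt_pos (sq_nonneg x)
    have hsinhc := sinhcSqrt_pos (sq_nonneg x)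
    rw [hsq, cothSymbol, Real.tanh_eq_sinh_div_cosh, ← mul_sinhcSqrt_sq, ← coshSqrt_sq,
      Real.sqrt_eq_rpow, neg_div, Real.rpow_neg (by positivity), ← Real.inv_rpow (by positivity)]
    congr 1
    field_simp

/-- The factor `exp (-2r/ρ)`, extended by `0` to `ρ ≤ 0`; it is smooth in `ρ` up to `ρ = 0`. -/
def expRatio (ρ r : ℝ) : ℝ := expNegInvGlue (ρ / (2 * r))

/-- The profile `(r coth (r/ρ))^{1/2}` of `cothSymbol` at high frequency, where `ρ = l⁻¹` is the
inverse of the frequency scale `l` (see `cothSymbol_sq_mul_sq`). Unlike `cothSymbol (l² r²)` itself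
it extends smoothly to `ρ = 0`. -/
def highProfile (ρ r : ℝ) : ℝ := √(r * ((1 + expRatio ρ r) / (1 - expRatio ρ r)))

lemma expRatio_nonneg (ρ r : ℝ) : 0 ≤ expRatio ρ r := expNegInvGlue.nonneg _

lemma expRatio_lt_one (ρ r : ℝ) : expRatio ρ r < 1 := by
  rw [expRatio, expNegInvGlue]
  split_ifs with h
  · exact zero_lt_one
  · rw [Real.exp_lt_one_iff]
    exact neg_neg_of_pos (inv_pos.2 (not_le.1 h))

lemma expRatio_inv {l r : ℝ} (hl : 0 < l) (hr : 0 < r) :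
    expRatio l⁻¹ r = Real.exp (-(l * r)) ^ 2 := by
  rw [expRatio, expNegInvGlue, if_neg (not_le.2 (by positivity)), ← Real.exp_nat_mul]
  congr 1
  field_simp
  norm_num

lemma cosh_div_sinh_eq {x : ℝ} (hx : 0 < x) :
    Real.cosh x / Real.sinh x = (1 + Real.exp (-x) ^ 2) / (1 - Real.exp (-x) ^ 2) := by
  have hexp : Real.exp x * Real.exp (-x) = 1 := by
    rw [← Real.exp_add, add_neg_cancel, Real.exp_zero]
  have hlt : Real.exp (-x) ^ 2 < 1 :=
    pow_lt_one₀ (Real.exp_nonneg _) (Real.exp_lt_one_iff.2 (neg_neg_of_pos hx)) two_ne_zero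
  have hsinh : Real.exp x - Real.exp (-x) ≠ 0 := by
    exact (sub_pos.2 (Real.exp_lt_exp.2 (by linarith))).ne'
  rw [Real.cosh_eq, Real.sinh_eq, div_div_div_cancel_right₀ two_ne_zero,
    div_eq_div_iff hsinh (sub_pos.2 hlt).ne']
  linear_combination (-2 * Real.exp (-x)) * hexp

lemma cothSymbol_sq_mul_sq {l r : ℝ} (hl : 0 < l) (hr : 0 < r) :
    cothSymbol (l ^ 2 * r ^ 2) = √l * highProfile l⁻¹ r := by
  have hx : 0 < l * r := mul_pos hl hr
  rw [cothSymbol, highProfile, ← Real.sqrt_mul hl.le, ← mul_pow, expRatio_inv hl hr,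
    ← cosh_div_sinh_eq hx, ← mul_sinhcSqrt_sq (l * r), coshSqrt_sq]
  congr 1
  field_simp

lemma contDiffAt_highProfile {m : ℕ∞} {X : Type*} [NormedAddCommGroup X] [NormedSpace ℝ X]
    {ρ r : X → ℝ} {x : X} (hρ : ContDiffAt ℝ m ρ x) (hr : ContDiffAt ℝ m r x) (hpos : 0 < r x) :
    ContDiffAt ℝ m (fun y => highProfile (ρ y) (r y)) x := by
  have hexp : ContDiffAt ℝ m (fun y => expRatio (ρ y) (r y)) x :=
    expNegInvGlue.contDiff.contDiffAt.comp x
      (hρ.div (contDiffAt_const.mul hr) (mul_pos two_pos hpos).ne')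
  have hnonneg := expRatio_nonneg (ρ x) (r x)
  have hlt : 0 < 1 - expRatio (ρ x) (r x) := sub_pos.2 (expRatio_lt_one _ _)
  exact ContDiffAt.sqrt (hr.mul ((contDiffAt_const.add hexp).div (contDiffAt_const.sub hexp)
    hlt.ne')) (by positivity)

end CothSymbol

section Pieces

variable {V : Type*} [NormedAddCommGroup V] [InnerProductSpace ℝ V] [FiniteDimensional ℝ V]

open Filter Topology
open scoped ContDiff

/-- The profile whose dilates are the annular Littlewood–Paley symbols. -/
def annularProfile (V : Type*) [NormedAddCommGroup V] [InnerProductSpace ℝ V]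
    [FiniteDimensional ℝ V] : 𝓢(V, ℂ) :=
  dilate (invTwoPow 1)⁻¹ (dyadicPiece V 1)

lemma annularProfile_apply (x : V) : annularProfile V x = dyadicPiece V 1 ((2 : ℝ) • x) := by
  rw [annularProfile, dilate_apply, Units.val_inv_eq_inv_val, val_invTwoPow, pow_one, inv_inv]

lemma dyadicPiece_succ_apply (k : ℕ) (x : V) :
    dyadicPiece V (k + 1) x = annularProfile V ((2 : ℝ)⁻¹ ^ (k + 1) • x) := by
  simp only [annularProfile_apply, dyadicPiece_succ, sub_apply, lowPass_apply, smul_smul]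
  congr 5 <;> ring

lemma annularProfile_eq_zero_of_two_le {x : V} (h : 2 ≤ ‖x‖) : annularProfile V x = 0 := by
  rw [annularProfile_apply, dyadicPiece_eq_zero]
  rw [norm_smul, Real.norm_two, pow_succ', pow_one]
  gcongr

lemma annularProfile_eq_zero_of_le_half {x : V} (h : ‖x‖ ≤ 1 / 2) : annularProfile V x = 0 := by
  rw [annularProfile_apply, dyadicPiece_succ_eq_zero]
  rw [norm_smul, Real.norm_two]
  linarith

lemma annularProfile_eventuallyEq_zero : ∀ᶠ x in 𝓝 (0 : V), annularProfile V x = 0 := by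
  filter_upwards [Metric.ball_mem_nhds (0 : V) one_half_pos] with x hx
  exact annularProfile_eq_zero_of_le_half (mem_ball_zero_iff.1 hx).le

variable [MeasurableSpace V] [BorelSpace V]

section Families

variable {P : Type*} [NormedAddCommGroup P] [NormedSpace ℝ P] {K : Set P}

lemma exists_forall_isKernelBounded_mul_lowPass (u : P × V → ℝ) (hK : IsCompact K)
    (hu : ∀ p, ContDiffAt ℝ ∞ u p) :
    ∃ A : ℝ, 0 < A ∧ ∀ θ ∈ K, IsKernelBounded (fun ξ => ((u (θ, ξ) : ℝ) : ℂ) * lowPass V 0 ξ) A :=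
  exists_forall_isKernelBounded_mul u _ hK 2
    (fun _ h => lowPass_eq_zero (by rwa [zero_add, pow_one])) fun θ ξ => .inl (hu (θ, ξ))

lemma exists_forall_isKernelBounded_mul_annularProfile (u : P × V → ℝ) (hK : IsCompact K)
    (hu : ∀ p, p.2 ≠ 0 → ContDiffAt ℝ ∞ u p) :
    ∃ A : ℝ, 0 < A ∧ ∀ θ ∈ K,
      IsKernelBounded (fun ξ => ((u (θ, ξ) : ℝ) : ℂ) * annularProfile V ξ) A := by
  refine exists_forall_isKernelBounded_mul u _ hK 2
    (fun _ h => annularProfile_eq_zero_of_two_le h) fun θ ξ => ?_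
  rcases eq_or_ne ξ 0 with rfl | hξ
  · exact .inr annularProfile_eventuallyEq_zero
  · exact .inl (hu (θ, ξ) hξ)

end Families

/-- The `j`-th Littlewood–Paley piece of the symbol `σ` has a kernel of mass at most `M` which is
concentrated at distance `2⁻ʲ` from the origin. -/
def IsPieceBounded (σ : V → ℝ) (j : ℕ) (M : ℝ) : Prop :=
  ∃ b : 𝓢(V, ℂ), (∀ ξ, b ξ = ((σ ξ : ℝ) : ℂ) * dyadicPiece V j ξ) ∧
    kernelMoment 0 b ≤ M ∧ kernelMoment 1 b ≤ M * (2 : ℝ)⁻¹ ^ j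

lemma IsPieceBounded.mono {σ : V → ℝ} {j : ℕ} {M M' : ℝ} (h : IsPieceBounded σ j M)
    (hM : M ≤ M') : IsPieceBounded σ j M' := by
  obtain ⟨b, hb, h₀, h₁⟩ := h
  exact ⟨b, hb, h₀.trans hM, h₁.trans (by gcongr)⟩

lemma IsKernelBounded.isPieceBounded {σ : V → ℝ} {a : V → ℂ} {A c : ℝ} (ha : IsKernelBounded a A)
    (hc : 0 ≤ c) {j : ℕ}
    (h : ∀ ξ, ((σ ξ : ℝ) : ℂ) * dyadicPiece V j ξ = (c : ℂ) * a ((2 : ℝ)⁻¹ ^ j • ξ)) :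
    IsPieceBounded σ j (A * c) := by
  obtain ⟨b, rfl, h₀, h₁⟩ := ha
  have hmoment (n : ℕ) : kernelMoment n ((c : ℂ) • dilate (invTwoPow j) b) =
      ((2 : ℝ)⁻¹ ^ j) ^ n * kernelMoment n b * c := by
    rw [kernelMoment_smul, kernelMoment_dilate, Complex.norm_real, Real.norm_of_nonneg hc,
      val_invTwoPow, abs_of_pos (by positivity), mul_comm]
  refine ⟨(c : ℂ) • dilate (invTwoPow j) b, fun ξ => (h ξ).symm, ?_, ?_⟩
  · rw [hmoment, pow_zero, one_mul]
    grw [h₀]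
  · rw [hmoment, pow_one]
    grw [h₁]
    exact le_of_eq (by ring)

lemma IsKernelBounded.isPieceBounded_zero {σ v : V → ℝ} {A c : ℝ}
    (ha : IsKernelBounded (fun ξ => ((v ξ : ℝ) : ℂ) * lowPass V 0 ξ) A) (hc : 0 ≤ c)
    (h : ∀ ξ, σ ξ = c * v ξ) : IsPieceBounded σ 0 (A * c) := by
  refine ha.isPieceBounded hc fun ξ => ?_
  rw [pow_zero, one_smul, h, dyadicPiece, Complex.ofReal_mul, mul_assoc]

lemma IsKernelBounded.isPieceBounded_succ {σ v : V → ℝ} {A c : ℝ}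
    (ha : IsKernelBounded (fun ξ => ((v ξ : ℝ) : ℂ) * annularProfile V ξ) A) (hc : 0 ≤ c) {k : ℕ}
    (h : ∀ ξ, ξ ≠ 0 → σ ξ = c * v ((2 : ℝ)⁻¹ ^ (k + 1) • ξ)) :
    IsPieceBounded σ (k + 1) (A * c) := by
  refine ha.isPieceBounded hc fun ξ => ?_
  rw [dyadicPiece_succ_apply]
  rcases eq_or_ne ξ 0 with rfl | hξ
  · rw [smul_zero, annularProfile_eventuallyEq_zero.self_of_nhds, mul_zero, mul_zero, mul_zero]
  · rw [h ξ hξ, Complex.ofReal_mul, mul_assoc]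

lemma exists_hasDyadicKernels {σ : V → ℝ} {W : ℕ → ℝ} {A : ℝ} (hA : 0 < A)
    (h : ∀ j, IsPieceBounded σ j (A * W j)) : ∃ b : ℕ → 𝓢(V, ℂ),
      (∀ j ξ, b j ξ = ((σ ξ : ℝ) : ℂ) * dyadicPiece V j ξ) ∧ HasDyadicKernels b W A := by
  choose b hb h₀ h₁ using h
  exact ⟨b, hb, hA, h₀, fun j => (h₁ j).trans_eq (mul_right_comm _ _ _)⟩

end Pieces

section JapaneseBracket

lemma jap_rpow (x s : ℝ) : jap x ^ s = (1 + x ^ 2) ^ (s / 2) := by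
  rw [jap, ← Real.rpow_mul (by positivity), one_div_mul_eq_div]

lemma one_le_jap (x : ℝ) : 1 ≤ jap x :=
  Real.one_le_rpow (le_add_of_nonneg_right (sq_nonneg x)) one_half_pos.le

lemma jap_pos (x : ℝ) : 0 < jap x := one_pos.trans_le (one_le_jap x)

lemma jap_sq (x : ℝ) : jap x ^ 2 = 1 + x ^ 2 := by
  rw [jap, ← Real.sqrt_eq_rpow, Real.sq_sqrt (by positivity)]

lemma le_jap (x : ℝ) : x ≤ jap x :=
  le_of_sq_le_sq (by rw [jap_sq]; exact le_add_of_nonneg_left zero_le_one) (jap_pos x).le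

lemma jap_le_one_add {x : ℝ} (hx : 0 ≤ x) : jap x ≤ 1 + x := by
  refine le_of_sq_le_sq ?_ (by positivity)
  rw [jap_sq]
  linarith [add_sq 1 x]

end JapaneseBracket

section DyadicWeights

/-- The size `√μ 2ʲ` of `√μ |ξ|` on the `j`-th dyadic annulus. -/
def scaledFrequency (μ : ℝ) (j : ℕ) : ℝ := √μ * 2 ^ j

/-- The size `2^{js} ⟨√μ 2ʲ⟩^{1/2}` of the symbol of `J^s T_μ^{-1/2}` on the `j`-th dyadic
annulus. -/
def besselDyadicWeight (s μ : ℝ) (j : ℕ) : ℝ := ((2 : ℝ) ^ j) ^ s * √(1 + scaledFrequency μ j)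

/-- The size of the symbol of `T_μ^{-1/2} - 1` on the `j`-th dyadic annulus: `√μ 2ʲ` (a crude bound
for `(√μ 2ʲ)²`) at low and `(√μ 2ʲ)^{1/2}` at high frequency. -/
def remainderDyadicWeight (μ : ℝ) (j : ℕ) : ℝ := scaledFrequency μ j / √(1 + scaledFrequency μ j)

variable {s μ : ℝ} {j k : ℕ}

lemma scaledFrequency_zero (μ : ℝ) : scaledFrequency μ 0 = √μ := by
  rw [scaledFrequency, pow_zero, mul_one]

lemma scaledFrequency_nonneg (μ : ℝ) (j : ℕ) : 0 ≤ scaledFrequency μ j := by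
  unfold scaledFrequency
  positivity

lemma scaledFrequency_pos (hμ : 0 < μ) (j : ℕ) : 0 < scaledFrequency μ j := by
  unfold scaledFrequency
  positivity

lemma scaledFrequency_eq (μ : ℝ) (h : j ≤ k) :
    scaledFrequency μ j = (2 : ℝ)⁻¹ ^ (k - j) * scaledFrequency μ k := by
  obtain ⟨n, rfl⟩ := Nat.exists_eq_add_of_le h
  rw [Nat.add_sub_cancel_left, scaledFrequency, scaledFrequency, pow_add, inv_pow]
  field_simp

lemma scaledFrequency_le (μ : ℝ) (h : j ≤ k + 2) :
    scaledFrequency μ j ≤ 4 * scaledFrequency μ k :=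
  calc √μ * 2 ^ j ≤ √μ * 2 ^ (k + 2) := by gcongr; exact one_le_two
    _ = 4 * (√μ * 2 ^ k) := by ring

lemma scaledFrequency_mono (μ : ℝ) (h : j ≤ k) : scaledFrequency μ j ≤ scaledFrequency μ k := by
  unfold scaledFrequency
  gcongr
  exact one_le_two

lemma besselDyadicWeight_pos (s μ : ℝ) (j : ℕ) : 0 < besselDyadicWeight s μ j := by
  have := scaledFrequency_nonneg μ j
  unfold besselDyadicWeight
  positivity

lemma remainderDyadicWeight_pos (hμ : 0 < μ) (j : ℕ) : 0 < remainderDyadicWeight μ j := by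
  have := scaledFrequency_pos hμ j
  unfold remainderDyadicWeight
  positivity

lemma two_pow_rpow_le_besselDyadicWeight (s μ : ℝ) (j : ℕ) :
    ((2 : ℝ) ^ j) ^ s ≤ besselDyadicWeight s μ j :=
  le_mul_of_one_le_right (by positivity)
    (Real.one_le_sqrt.2 (le_add_of_nonneg_right (scaledFrequency_nonneg μ j)))

lemma two_pow_rpow_mul_sqrt_le_besselDyadicWeight (s μ : ℝ) (j : ℕ) :
    ((2 : ℝ) ^ j) ^ s * √(scaledFrequency μ j) ≤ besselDyadicWeight s μ j :=
  mul_le_mul_of_nonneg_left (Real.sqrt_le_sqrt (le_add_of_nonneg_left zero_le_one))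
    (by positivity)

lemma besselDyadicWeight_le_of_le_add_two (hs : 0 ≤ s) (μ : ℝ) (h : j ≤ k + 2) :
    besselDyadicWeight s μ j ≤ 2 * 4 ^ s * besselDyadicWeight s μ k := by
  have hfreq := scaledFrequency_nonneg μ k
  have hsqrt : √(1 + scaledFrequency μ j) ≤ 2 * √(1 + scaledFrequency μ k) := by
    refine Real.sqrt_le_iff.2 ⟨by positivity, ?_⟩
    rw [mul_pow, Real.sq_sqrt (by positivity)]
    linarith [scaledFrequency_le μ h]
  have hpow : ((2 : ℝ) ^ j) ^ s ≤ 4 ^ s * ((2 : ℝ) ^ k) ^ s := by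
    rw [← Real.mul_rpow (by norm_num) (by positivity)]
    refine Real.rpow_le_rpow (by positivity) ?_ hs
    calc (2 : ℝ) ^ j ≤ 2 ^ (k + 2) := pow_le_pow_right₀ one_le_two h
      _ = 4 * 2 ^ k := by ring
  rw [besselDyadicWeight, besselDyadicWeight]
  grw [hpow, hsqrt]
  exact le_of_eq (by ring)

lemma two_pow_rpow_eq (s : ℝ) (h : j ≤ k) :
    ((2 : ℝ) ^ j) ^ s = ((2 : ℝ) ^ (-s)) ^ (k - j) * ((2 : ℝ) ^ k) ^ s := by
  obtain ⟨n, rfl⟩ := Nat.exists_eq_add_of_le h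
  rw [Nat.add_sub_cancel_left, ← Real.rpow_natCast, ← Real.rpow_natCast, ← Real.rpow_natCast,
    ← Real.rpow_mul two_pos.le, ← Real.rpow_mul two_pos.le, ← Real.rpow_mul two_pos.le,
    ← Real.rpow_add two_pos]
  congr 1
  push_cast
  ring

lemma besselDyadicWeight_le_of_le (s μ : ℝ) (h : j ≤ k) :
    besselDyadicWeight s μ j ≤ ((2 : ℝ) ^ (-s)) ^ (k - j) * besselDyadicWeight s μ k := by
  rw [besselDyadicWeight, besselDyadicWeight, two_pow_rpow_eq s h, mul_assoc]
  grw [scaledFrequency_mono μ h]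

lemma isDyadicWeight_besselDyadicWeight (hs : 0 < s) (μ : ℝ) :
    IsDyadicWeight (besselDyadicWeight s μ) (2 * 4 ^ s) ((2 : ℝ) ^ (-s)) := by
  have hB : (1 : ℝ) ≤ 2 * 4 ^ s := by
    linarith [Real.one_le_rpow (by norm_num : (1 : ℝ) ≤ 4) hs.le]
  refine ⟨hB, by positivity, Real.rpow_lt_one_of_one_lt_of_neg one_lt_two (neg_neg_of_pos hs),
    besselDyadicWeight_pos s μ, fun j k => besselDyadicWeight_le_of_le_add_two hs.le μ,
    fun j k h => (besselDyadicWeight_le_of_le s μ h).trans ?_⟩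
  have := besselDyadicWeight_pos s μ k
  rw [mul_assoc]
  exact le_mul_of_one_le_left (by positivity) hB

lemma div_sqrt_one_add_le {x y c : ℝ} (hx : 0 ≤ x) (hy : 0 ≤ y) (hc : 0 ≤ c)
    (h : x ^ 2 * (1 + y) ≤ c ^ 2 * y ^ 2 * (1 + x)) : x / √(1 + x) ≤ c * (y / √(1 + y)) := by
  rw [← mul_div_assoc, div_le_div_iff₀ (by positivity) (by positivity)]
  refine le_of_sq_le_sq ?_ (by positivity)
  rwa [mul_pow, mul_pow, mul_pow, Real.sq_sqrt (by positivity), Real.sq_sqrt (by positivity)]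

lemma remainderDyadicWeight_le_of_le_add_two (μ : ℝ) (h : j ≤ k + 2) :
    remainderDyadicWeight μ j ≤ 4 * remainderDyadicWeight μ k := by
  have hle := scaledFrequency_le μ h
  have hj := scaledFrequency_nonneg μ j
  have hk := scaledFrequency_nonneg μ k
  refine div_sqrt_one_add_le hj hk (by norm_num) ?_
  have hsq : scaledFrequency μ j ^ 2 ≤ 4 ^ 2 * scaledFrequency μ k ^ 2 := by
    rw [← mul_pow]
    gcongr
  have hprod := mul_le_mul_of_nonneg_left hle (mul_nonneg hj hk)
  nlinarith [mul_nonneg hj (sq_nonneg (scaledFrequency μ k))]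

lemma remainderDyadicWeight_le_of_le (μ : ℝ) (h : j ≤ k) :
    remainderDyadicWeight μ j ≤ √(2⁻¹) ^ (k - j) * remainderDyadicWeight μ k := by
  have hk := scaledFrequency_nonneg μ k
  refine div_sqrt_one_add_le (scaledFrequency_nonneg μ j) hk (by positivity) ?_
  have ht : (2 : ℝ)⁻¹ ^ (k - j) ≤ 1 := pow_le_one₀ (by norm_num) (by norm_num)
  rw [← pow_mul, mul_comm (k - j), pow_mul, Real.sq_sqrt (by norm_num), scaledFrequency_eq μ h]
  have ht₀ : 0 < (2 : ℝ)⁻¹ ^ (k - j) := by positivity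
  generalize (2 : ℝ)⁻¹ ^ (k - j) = t at ht ht₀
  generalize scaledFrequency μ k = y at hk
  have hdiff : 0 ≤ t * y ^ 2 * (1 - t) := mul_nonneg (by positivity) (sub_nonneg.2 ht)
  linarith

lemma isDyadicWeight_remainderDyadicWeight (hμ : 0 < μ) :
    IsDyadicWeight (remainderDyadicWeight μ) 4 √(2⁻¹) := by
  refine ⟨by norm_num, by positivity, (Real.sqrt_lt' one_pos).2 (by norm_num),
    remainderDyadicWeight_pos hμ, fun j k => remainderDyadicWeight_le_of_le_add_two μ,
    fun j k h => (remainderDyadicWeight_le_of_le μ h).trans ?_⟩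
  have := remainderDyadicWeight_pos hμ k
  rw [mul_assoc]
  exact le_mul_of_one_le_left (by positivity) (by norm_num)

lemma sq_scaledFrequency_le (hlow : scaledFrequency μ j ≤ 1) :
    scaledFrequency μ j ^ 2 ≤ 2 * remainderDyadicWeight μ j := by
  have hj := scaledFrequency_nonneg μ j
  have hsqrt : √(1 + scaledFrequency μ j) ≤ 2 := Real.sqrt_le_iff.2 ⟨by norm_num, by linarith⟩
  rw [remainderDyadicWeight, ← mul_div_assoc, le_div_iff₀ (by positivity)]
  calc scaledFrequency μ j ^ 2 * √(1 + scaledFrequency μ j)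
      ≤ (scaledFrequency μ j * 1) * 2 := by rw [sq]; gcongr
    _ = 2 * scaledFrequency μ j := by ring

lemma sqrt_scaledFrequency_le (hhigh : 1 ≤ scaledFrequency μ j) :
    √(scaledFrequency μ j) ≤ 2 * remainderDyadicWeight μ j := by
  have hj := scaledFrequency_nonneg μ j
  have hsqrt : √(1 + scaledFrequency μ j) ≤ 2 * √(scaledFrequency μ j) := by
    refine Real.sqrt_le_iff.2 ⟨by positivity, ?_⟩
    rw [mul_pow, Real.sq_sqrt hj]
    linarith
  rw [remainderDyadicWeight, ← mul_div_assoc, le_div_iff₀ (by positivity)]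
  grw [hsqrt]
  rw [mul_left_comm, Real.mul_self_sqrt hj]

lemma remainderDyadicWeight_le (μ : ℝ) (k : ℕ) :
    remainderDyadicWeight μ k ≤ besselDyadicWeight 0 μ k := by
  have hk := scaledFrequency_nonneg μ k
  rw [remainderDyadicWeight, besselDyadicWeight, Real.rpow_zero, one_mul,
    div_le_iff₀ (by positivity), Real.mul_self_sqrt (by positivity)]
  exact le_add_of_nonneg_left zero_le_one

lemma inv_two_pow_mul_besselDyadicWeight (s μ : ℝ) (k : ℕ) :
    (2 : ℝ)⁻¹ ^ k * besselDyadicWeight s μ k = besselDyadicWeight (s - 1) μ k := by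
  rw [besselDyadicWeight, besselDyadicWeight, Real.rpow_sub_one (by positivity), inv_pow]
  field_simp

end DyadicWeights

section SymbolPieces

variable {V : Type*} [NormedAddCommGroup V] [InnerProductSpace ℝ V] {s μ : ℝ}

open scoped ContDiff

/-- The symbol `⟨ξ⟩^s T_μ(ξ)^{-1/2}`. -/
def besselCothSymbol (s μ : ℝ) (ξ : V) : ℝ := jap ‖ξ‖ ^ s * cothSymbol (μ * ‖ξ‖ ^ 2)

lemma jap_norm_rpow_eq (j : ℕ) (s : ℝ) (ξ : V) : jap ‖ξ‖ ^ s =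
    ((2 : ℝ) ^ j) ^ s * (((2 : ℝ)⁻¹ ^ j) ^ 2 + ‖(2 : ℝ)⁻¹ ^ j • ξ‖ ^ 2) ^ (s / 2) := by
  have hpow : ((2 : ℝ) ^ j) ^ s = (((2 : ℝ) ^ j) ^ 2) ^ (s / 2) := by
    rw [← Real.rpow_natCast _ 2, ← Real.rpow_mul (by positivity), Nat.cast_two,
      mul_div_cancel₀ s two_ne_zero]
  rw [jap_rpow, hpow, ← Real.mul_rpow (by positivity) (by positivity), norm_inv_two_pow_smul]
  congr 1
  rw [inv_pow]
  field_simp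

lemma mul_norm_sq_eq (hμ : 0 ≤ μ) (j : ℕ) (ξ : V) :
    μ * ‖ξ‖ ^ 2 = scaledFrequency μ j ^ 2 * ‖(2 : ℝ)⁻¹ ^ j • ξ‖ ^ 2 := by
  rw [norm_inv_two_pow_smul, scaledFrequency, mul_pow, Real.sq_sqrt hμ]
  field_simp

lemma cothSymbol_mul_norm_sq_eq (hμ : 0 < μ) (j : ℕ) {ξ : V} (hξ : ξ ≠ 0) :
    cothSymbol (μ * ‖ξ‖ ^ 2) = √(scaledFrequency μ j) *
      highProfile (scaledFrequency μ j)⁻¹ ‖(2 : ℝ)⁻¹ ^ j • ξ‖ := by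
  rw [mul_norm_sq_eq hμ.le j, cothSymbol_sq_mul_sq (scaledFrequency_pos hμ j)]
  exact norm_pos_iff.2 (smul_ne_zero (by positivity) hξ)

section Smoothness

variable {P : Type*} [NormedAddCommGroup P] [NormedSpace ℝ P]

lemma contDiffAt_norm_snd_sq (p : P × V) : ContDiffAt ℝ ∞ (fun p : P × V => ‖p.2‖ ^ 2) p :=
  ((contDiff_norm_sq ℝ).comp contDiff_snd).contDiffAt

lemma contDiffAt_norm_snd {p : P × V} (h : p.2 ≠ 0) :
    ContDiffAt ℝ ∞ (fun p : P × V => ‖p.2‖) p :=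
  (contDiffAt_norm ℝ h).comp p contDiff_snd.contDiffAt

lemma contDiffAt_comp_mul_norm_snd_sq {F : ℝ → ℝ} (hF : ∀ z, 0 ≤ z → ContDiffAt ℝ ∞ F z)
    {l : P × V → ℝ} {p : P × V} (hl : ContDiffAt ℝ ∞ l p) :
    ContDiffAt ℝ ∞ (fun p : P × V => F (l p ^ 2 * ‖p.2‖ ^ 2)) p :=
  (hF _ (by positivity)).comp p ((hl.pow 2).mul (contDiffAt_norm_snd_sq p))

lemma contDiffAt_add_norm_snd_sq_rpow {l : P × V → ℝ} {p : P × V} (hl : ContDiffAt ℝ ∞ l p)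
    (h : l p ^ 2 + ‖p.2‖ ^ 2 ≠ 0) (s : ℝ) :
    ContDiffAt ℝ ∞ (fun p : P × V => (l p ^ 2 + ‖p.2‖ ^ 2) ^ (s / 2)) p :=
  ((hl.pow 2).add (contDiffAt_norm_snd_sq p)).rpow_const_of_ne h

end Smoothness

variable [FiniteDimensional ℝ V] [MeasurableSpace V] [BorelSpace V]

lemma inv_two_pow_mem_Icc (j : ℕ) : (2 : ℝ)⁻¹ ^ j ∈ Set.Icc (0 : ℝ) 1 :=
  ⟨by positivity, pow_le_one₀ (by norm_num) (by norm_num)⟩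

variable (V) in
lemma exists_isPieceBounded_besselCothSymbol_zero (s : ℝ) : ∃ A : ℝ, 0 < A ∧ ∀ μ, 0 < μ → μ ≤ 1 →
    IsPieceBounded (besselCothSymbol (V := V) s μ) 0 A := by
  obtain ⟨A, hA, hker⟩ :=
    exists_forall_isKernelBounded_mul_lowPass (V := V) (K := Set.Icc (0 : ℝ) 1)
    (fun p => (1 ^ 2 + ‖p.2‖ ^ 2) ^ (s / 2) * cothSymbol (p.1 ^ 2 * ‖p.2‖ ^ 2)) isCompact_Icc
    fun p => (contDiffAt_add_norm_snd_sq_rpow contDiffAt_const (by positivity) s).mul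
      (contDiffAt_comp_mul_norm_snd_sq (fun _ => contDiffAt_cothSymbol) contDiffAt_fst)
  refine ⟨A, hA, fun μ hμ hμ1 => ?_⟩
  rw [← mul_one A]
  refine (hker (√μ) ⟨by positivity, Real.sqrt_le_one.2 hμ1⟩).isPieceBounded_zero zero_le_one
    fun ξ => ?_
  simp only
  rw [one_mul, Real.sq_sqrt hμ.le, one_pow, besselCothSymbol, jap_rpow]

variable (V) in
lemma exists_isPieceBounded_besselCothSymbol_of_le_one (s : ℝ) : ∃ A : ℝ, 0 < A ∧
    ∀ μ, 0 < μ → ∀ k, scaledFrequency μ (k + 1) ≤ 1 →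
      IsPieceBounded (besselCothSymbol (V := V) s μ) (k + 1) (A * ((2 : ℝ) ^ (k + 1)) ^ s) := by
  obtain ⟨A, hA, hker⟩ := exists_forall_isKernelBounded_mul_annularProfile (V := V)
    (K := Set.Icc (0 : ℝ) 1 ×ˢ Set.Icc (0 : ℝ) 1)
    (fun p => (p.1.1 ^ 2 + ‖p.2‖ ^ 2) ^ (s / 2) * cothSymbol (p.1.2 ^ 2 * ‖p.2‖ ^ 2))
    (isCompact_Icc.prod isCompact_Icc)
    fun p hp => (contDiffAt_add_norm_snd_sq_rpow (by fun_prop) (by positivity) s).mul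
      (contDiffAt_comp_mul_norm_snd_sq (fun _ => contDiffAt_cothSymbol) (by fun_prop))
  refine ⟨A, hA, fun μ hμ k hlow => ?_⟩
  refine (hker ((2 : ℝ)⁻¹ ^ (k + 1), scaledFrequency μ (k + 1)) ⟨inv_two_pow_mem_Icc _,
    scaledFrequency_nonneg μ _, hlow⟩).isPieceBounded_succ (by positivity) fun ξ _ => ?_
  rw [besselCothSymbol, jap_norm_rpow_eq (k + 1), mul_norm_sq_eq hμ.le (k + 1), mul_assoc]

variable (V) in
lemma exists_isPieceBounded_besselCothSymbol_of_one_le (s : ℝ) : ∃ A : ℝ, 0 < A ∧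
    ∀ μ, 0 < μ → ∀ k, 1 ≤ scaledFrequency μ (k + 1) →
      IsPieceBounded (besselCothSymbol (V := V) s μ) (k + 1)
        (A * (((2 : ℝ) ^ (k + 1)) ^ s * √(scaledFrequency μ (k + 1)))) := by
  obtain ⟨A, hA, hker⟩ := exists_forall_isKernelBounded_mul_annularProfile (V := V)
    (K := Set.Icc (0 : ℝ) 1 ×ˢ Set.Icc (0 : ℝ) 1)
    (fun p => (p.1.1 ^ 2 + ‖p.2‖ ^ 2) ^ (s / 2) * highProfile p.1.2 ‖p.2‖)
    (isCompact_Icc.prod isCompact_Icc)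
    fun p hp => (contDiffAt_add_norm_snd_sq_rpow (by fun_prop) (by positivity) s).mul
      (contDiffAt_highProfile (by fun_prop) (contDiffAt_norm_snd hp) (norm_pos_iff.2 hp))
  refine ⟨A, hA, fun μ hμ k hhigh => ?_⟩
  have := scaledFrequency_pos hμ (k + 1)
  refine (hker ((2 : ℝ)⁻¹ ^ (k + 1), (scaledFrequency μ (k + 1))⁻¹) ⟨inv_two_pow_mem_Icc _,
    by positivity, inv_le_one_of_one_le₀ hhigh⟩).isPieceBounded_succ (by positivity)
      fun ξ hξ => ?_
  rw [besselCothSymbol, jap_norm_rpow_eq (k + 1), cothSymbol_mul_norm_sq_eq hμ (k + 1) hξ]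
  ring

variable (V) in
lemma exists_hasDyadicKernels_besselCothSymbol (s : ℝ) : ∃ A : ℝ, ∀ μ, 0 < μ → μ ≤ 1 →
    ∃ b : ℕ → 𝓢(V, ℂ), (∀ j ξ, b j ξ = ((besselCothSymbol s μ ξ : ℝ) : ℂ) * dyadicPiece V j ξ) ∧
      HasDyadicKernels b (besselDyadicWeight s μ) A := by
  obtain ⟨A₀, hA₀, h₀⟩ := exists_isPieceBounded_besselCothSymbol_zero V s
  obtain ⟨A₁, hA₁, h₁⟩ := exists_isPieceBounded_besselCothSymbol_of_le_one V s
  obtain ⟨A₂, hA₂, h₂⟩ := exists_isPieceBounded_besselCothSymbol_of_one_le V s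
  refine ⟨A₀ + A₁ + A₂, fun μ hμ hμ1 => exists_hasDyadicKernels (by positivity) fun j => ?_⟩
  have hle := two_pow_rpow_le_besselDyadicWeight s μ j
  rcases j with _ | k
  · rw [pow_zero, Real.one_rpow] at hle
    refine (h₀ μ hμ hμ1).mono ?_
    calc A₀ ≤ (A₀ + A₁ + A₂) * 1 := by linarith
      _ ≤ _ := by gcongr
  · have hW := besselDyadicWeight_pos s μ (k + 1)
    rcases le_total (scaledFrequency μ (k + 1)) 1 with hlow | hhigh
    · refine (h₁ μ hμ k hlow).mono ?_
      gcongr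
      linarith
    · refine (h₂ μ hμ k hhigh).mono ?_
      grw [two_pow_rpow_mul_sqrt_le_besselDyadicWeight]
      gcongr
      linarith

variable (V) in
lemma exists_isPieceBounded_cothSymbol_sub_one_zero : ∃ A : ℝ, 0 < A ∧ ∀ μ, 0 < μ → μ ≤ 1 →
    IsPieceBounded (fun ξ : V => cothSymbol (μ * ‖ξ‖ ^ 2) - 1) 0
      (A * scaledFrequency μ 0 ^ 2) := by
  obtain ⟨A, hA, hker⟩ :=
    exists_forall_isKernelBounded_mul_lowPass (V := V) (K := Set.Icc (0 : ℝ) 1)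
    (fun p => ‖p.2‖ ^ 2 * cothSymbolSlope (p.1 ^ 2 * ‖p.2‖ ^ 2)) isCompact_Icc
    fun p => (contDiffAt_norm_snd_sq p).mul
      (contDiffAt_comp_mul_norm_snd_sq (fun _ => contDiffAt_cothSymbolSlope) contDiffAt_fst)
  refine ⟨A, hA, fun μ hμ hμ1 => ?_⟩
  refine (hker (√μ) ⟨by positivity, Real.sqrt_le_one.2 hμ1⟩).isPieceBounded_zero (by positivity)
    fun ξ => ?_
  simp only
  rw [cothSymbol_sub_one (by positivity), scaledFrequency_zero, Real.sq_sqrt hμ.le, mul_assoc]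

variable (V) in
lemma exists_isPieceBounded_cothSymbol_sub_one_of_le_one : ∃ A : ℝ, 0 < A ∧
    ∀ μ, 0 < μ → ∀ k, scaledFrequency μ (k + 1) ≤ 1 →
      IsPieceBounded (fun ξ : V => cothSymbol (μ * ‖ξ‖ ^ 2) - 1) (k + 1)
        (A * scaledFrequency μ (k + 1) ^ 2) := by
  obtain ⟨A, hA, hker⟩ := exists_forall_isKernelBounded_mul_annularProfile (V := V)
    (K := Set.Icc (0 : ℝ) 1) (fun p => ‖p.2‖ ^ 2 * cothSymbolSlope (p.1 ^ 2 * ‖p.2‖ ^ 2))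
    isCompact_Icc fun p _ => (contDiffAt_norm_snd_sq p).mul
      (contDiffAt_comp_mul_norm_snd_sq (fun _ => contDiffAt_cothSymbolSlope) contDiffAt_fst)
  refine ⟨A, hA, fun μ hμ k hlow => ?_⟩
  refine (hker (scaledFrequency μ (k + 1)) ⟨scaledFrequency_nonneg μ _,
    hlow⟩).isPieceBounded_succ (by positivity) fun ξ _ => ?_
  rw [cothSymbol_sub_one (by positivity), mul_norm_sq_eq hμ.le (k + 1), mul_assoc]

variable (V) in
lemma exists_isPieceBounded_cothSymbol_sub_one_of_one_le : ∃ A : ℝ, 0 < A ∧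
    ∀ μ, 0 < μ → ∀ k, 1 ≤ scaledFrequency μ (k + 1) →
      IsPieceBounded (fun ξ : V => cothSymbol (μ * ‖ξ‖ ^ 2) - 1) (k + 1)
        (A * √(scaledFrequency μ (k + 1))) := by
  obtain ⟨A, hA, hker⟩ := exists_forall_isKernelBounded_mul_annularProfile (V := V)
    (K := Set.Icc (0 : ℝ) 1 ×ˢ Set.Icc (0 : ℝ) 1)
    (fun p => highProfile p.1.2 ‖p.2‖ - p.1.1) (isCompact_Icc.prod isCompact_Icc)
    fun p hp => (contDiffAt_highProfile (by fun_prop) (contDiffAt_norm_snd hp)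
      (norm_pos_iff.2 hp)).sub (by fun_prop)
  refine ⟨A, hA, fun μ hμ k hhigh => ?_⟩
  have hfreq := scaledFrequency_pos hμ (k + 1)
  have hinv : (scaledFrequency μ (k + 1))⁻¹ ≤ 1 := inv_le_one_of_one_le₀ hhigh
  refine (hker (√(scaledFrequency μ (k + 1))⁻¹, (scaledFrequency μ (k + 1))⁻¹)
    ⟨⟨by positivity, Real.sqrt_le_one.2 hinv⟩, by positivity, hinv⟩).isPieceBounded_succ
      (by positivity) fun ξ hξ => ?_
  rw [cothSymbol_mul_norm_sq_eq hμ (k + 1) hξ, mul_sub, ← Real.sqrt_mul hfreq.le,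
    mul_inv_cancel₀ hfreq.ne', Real.sqrt_one]

variable (V) in
lemma exists_hasDyadicKernels_cothSymbol_sub_one : ∃ A : ℝ, ∀ μ, 0 < μ → μ ≤ 1 →
    ∃ b : ℕ → 𝓢(V, ℂ),
      (∀ j ξ, b j ξ = ((cothSymbol (μ * ‖ξ‖ ^ 2) - 1 : ℝ) : ℂ) * dyadicPiece V j ξ) ∧
      HasDyadicKernels b (remainderDyadicWeight μ) A := by
  obtain ⟨A₀, hA₀, h₀⟩ := exists_isPieceBounded_cothSymbol_sub_one_zero V
  obtain ⟨A₁, hA₁, h₁⟩ := exists_isPieceBounded_cothSymbol_sub_one_of_le_one V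
  obtain ⟨A₂, hA₂, h₂⟩ := exists_isPieceBounded_cothSymbol_sub_one_of_one_le V
  refine ⟨(A₀ + A₁ + A₂) * 2, fun μ hμ hμ1 =>
    exists_hasDyadicKernels (by positivity) fun j => ?_⟩
  have hW := remainderDyadicWeight_pos hμ j
  rw [mul_assoc]
  rcases j with _ | k
  · have hlow : scaledFrequency μ 0 ≤ 1 := by rwa [scaledFrequency_zero, Real.sqrt_le_one]
    refine (h₀ μ hμ hμ1).mono ?_
    grw [sq_scaledFrequency_le hlow]
    gcongr
    linarith
  · rcases le_total (scaledFrequency μ (k + 1)) 1 with hlow | hhigh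
    · refine (h₁ μ hμ k hlow).mono ?_
      grw [sq_scaledFrequency_le hlow]
      gcongr
      linarith
    · refine (h₂ μ hμ k hhigh).mono ?_
      grw [sqrt_scaledFrequency_le hhigh]
      gcongr
      linarith

end SymbolPieces

section DyadicEnergy

variable {V : Type*} [NormedAddCommGroup V] [InnerProductSpace ℝ V] [FiniteDimensional ℝ V]

lemma sum_sq_norm_dyadicPiece_le (N : ℕ) (ξ : V) :
    ∑ k ∈ Finset.range N, ‖dyadicPiece V k ξ‖ ^ 2 ≤ annulusConst 0 2 + 1 := by
  classical
  have hle (k : ℕ) : ‖dyadicPiece V k ξ‖ ^ 2 ≤ 1 :=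
    pow_le_one₀ (norm_nonneg _) (norm_dyadicPiece_le_one k ξ)
  calc ∑ k ∈ Finset.range N, ‖dyadicPiece V k ξ‖ ^ 2
      ≤ ∑ k ∈ Finset.range (N + 1), ‖dyadicPiece V k ξ‖ ^ 2 :=
        Finset.sum_le_sum_of_subset_of_nonneg (Finset.range_mono N.le_succ)
          fun _ _ _ => by positivity
    _ = ∑ k ∈ Finset.range N, ‖dyadicPiece V (k + 1) ξ‖ ^ 2 + ‖dyadicPiece V 0 ξ‖ ^ 2 :=
        Finset.sum_range_succ' _ N
    _ ≤ _ := add_le_add (le_trans (Finset.sum_le_sum fun k _ => ?_)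
        (sum_ite_annulus_le 0 2 (norm_nonneg ξ) N)) (hle 0)
  split_ifs with hann
  · exact hle (k + 1)
  · have hzero : dyadicPiece V (k + 1) ξ = 0 := not_imp_comm.1
      (fun h => ⟨le_norm_of_dyadicPiece_succ_ne_zero h, norm_le_of_dyadicPiece_ne_zero h⟩) hann
    rw [hzero, norm_zero, zero_pow two_ne_zero]

variable [MeasurableSpace V] [BorelSpace V]

lemma sum_sq_mul_l2Sq_dyadicPiece_le {h S : 𝓢(V, ℂ)} {c : ℕ → ℝ} (hc : ∀ k, 0 ≤ c k) {M : ℝ}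
    (hS : ∀ k ξ, dyadicPiece V k ξ ≠ 0 → c k * ‖𝓕 h ξ‖ ≤ M * ‖S ξ‖) (N : ℕ) :
    ∑ k ∈ Finset.range N, c k ^ 2 * l2Sq (multiplier (dyadicPiece V k) h) ≤
      M ^ 2 * (annulusConst 0 2 + 1) * l2Sq S := by
  have hint (k : ℕ) : Integrable fun ξ =>
      c k ^ 2 * ‖𝓕 (multiplier (dyadicPiece V k) h) ξ‖ ^ 2 := (integrable_norm_sq _).const_mul _
  have hterm (k : ℕ) : c k ^ 2 * l2Sq (multiplier (dyadicPiece V k) h) =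
      ∫ ξ, c k ^ 2 * ‖𝓕 (multiplier (dyadicPiece V k) h) ξ‖ ^ 2 := by
    rw [integral_const_mul, ← l2Sq_fourier, l2Sq]
  simp_rw [hterm]
  rw [← integral_finsetSum _ fun k _ => hint k, l2Sq, ← integral_const_mul]
  refine integral_mono (integrable_finsetSum _ fun k _ => hint k)
    ((integrable_norm_sq _).const_mul _) fun ξ => ?_
  calc ∑ k ∈ Finset.range N, c k ^ 2 * ‖𝓕 (multiplier (dyadicPiece V k) h) ξ‖ ^ 2
      ≤ ∑ k ∈ Finset.range N, (M * ‖S ξ‖) ^ 2 * ‖dyadicPiece V k ξ‖ ^ 2 := by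
        refine Finset.sum_le_sum fun k _ => ?_
        rw [fourier_multiplier_apply, norm_mul, ← mul_pow, ← mul_pow]
        by_cases hpiece : dyadicPiece V k ξ = 0
        · simp only [hpiece, norm_zero, zero_mul, mul_zero, le_refl]
        · have := hc k
          rw [mul_left_comm, mul_comm _ ‖dyadicPiece V k ξ‖]
          gcongr (‖dyadicPiece V k ξ‖ * ?_) ^ 2
          exact hS k ξ hpiece
    _ ≤ (M * ‖S ξ‖) ^ 2 * (annulusConst 0 2 + 1) := by
        rw [← Finset.mul_sum]
        gcongr
        exact sum_sq_norm_dyadicPiece_le N ξ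
    _ = M ^ 2 * (annulusConst 0 2 + 1) * ‖S ξ‖ ^ 2 := by ring

end DyadicEnergy

section BesselSymbol

variable {V : Type*} [NormedAddCommGroup V] {μ : ℝ}

/-- The symbol `⟨ξ⟩^a ⟨√μ ξ⟩^{1/2}` of `J^a J_μ^{1/2}`. -/
def besselSymbol (a μ : ℝ) (ξ : V) : ℝ := jap ‖ξ‖ ^ a * jap (√μ * ‖ξ‖) ^ ((1 : ℝ) / 2)

lemma besselSymbol_nonneg (a μ : ℝ) (ξ : V) : 0 ≤ besselSymbol a μ ξ := by
  have := jap_pos ‖ξ‖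
  have := jap_pos (√μ * ‖ξ‖)
  unfold besselSymbol
  positivity

variable [InnerProductSpace ℝ V]

lemma hasTemperateGrowth_besselSymbol (a μ : ℝ) :
    (besselSymbol a μ : V → ℝ).HasTemperateGrowth := by
  have hrpow : (besselSymbol a μ : V → ℝ) =
      fun ξ => (1 + ‖ξ‖ ^ 2) ^ (a / 2) * (1 + ‖√μ • ξ‖ ^ 2) ^ ((1 : ℝ) / 2 / 2) := by
    ext ξ
    rw [besselSymbol, jap_rpow, jap_rpow, norm_smul, Real.norm_of_nonneg (Real.sqrt_nonneg _)]
  rw [hrpow]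
  have hscale : (fun ξ : V => √μ • ξ).HasTemperateGrowth :=
    (√μ • ContinuousLinearMap.id ℝ V).hasTemperateGrowth
  exact (Function.hasTemperateGrowth_one_add_norm_sq_rpow V (a / 2)).mul
    ((Function.hasTemperateGrowth_one_add_norm_sq_rpow V (1 / 2 / 2)).comp hscale)

variable [FiniteDimensional ℝ V] {k : ℕ} {ξ : V}

lemma two_pow_le_of_dyadicPiece_ne_zero (h : dyadicPiece V k ξ ≠ 0) :
    k = 0 ∨ (2 : ℝ) ^ k ≤ 2 * ‖ξ‖ := by
  rcases k with _ | k
  · exact Or.inl rfl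
  · right
    rw [pow_succ']
    gcongr
    exact le_norm_of_dyadicPiece_succ_ne_zero h

lemma two_pow_le_jap_of_dyadicPiece_ne_zero (h : dyadicPiece V k ξ ≠ 0) :
    (2 : ℝ) ^ k ≤ 4 * jap ‖ξ‖ := by
  have hjap := one_le_jap ‖ξ‖
  rcases two_pow_le_of_dyadicPiece_ne_zero h with rfl | hk
  · rw [pow_zero]
    linarith
  · linarith [le_jap ‖ξ‖]

lemma jap_le_two_pow_of_dyadicPiece_ne_zero (h : dyadicPiece V k ξ ≠ 0) :
    jap ‖ξ‖ ≤ 4 * 2 ^ k := by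
  have hone : (1 : ℝ) ≤ 2 ^ k := one_le_pow₀ one_le_two
  have hnorm := norm_le_of_dyadicPiece_ne_zero h
  rw [pow_succ] at hnorm
  linarith [jap_le_one_add (norm_nonneg ξ)]

lemma two_pow_rpow_le_of_dyadicPiece_ne_zero (a : ℝ) (h : dyadicPiece V k ξ ≠ 0) :
    ((2 : ℝ) ^ k) ^ a ≤ 4 ^ |a| * jap ‖ξ‖ ^ a := by
  have hjap := jap_pos ‖ξ‖
  rcases le_total 0 a with ha | ha
  · rw [abs_of_nonneg ha, ← Real.mul_rpow four_pos.le hjap.le]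
    exact Real.rpow_le_rpow (by positivity) (two_pow_le_jap_of_dyadicPiece_ne_zero h) ha
  · rw [abs_of_nonpos ha, Real.rpow_neg four_pos.le, ← Real.inv_rpow four_pos.le,
      ← Real.mul_rpow (by positivity) hjap.le]
    refine Real.rpow_le_rpow_of_nonpos (by positivity) ?_ ha
    linarith [jap_le_two_pow_of_dyadicPiece_ne_zero h]

lemma sqrt_one_add_scaledFrequency_le (hμ : μ ≤ 1) (h : dyadicPiece V k ξ ≠ 0) :
    √(1 + scaledFrequency μ k) ≤ 2 * jap (√μ * ‖ξ‖) ^ ((1 : ℝ) / 2) := by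
  have hjap := one_le_jap (√μ * ‖ξ‖)
  have hfreq : 1 + scaledFrequency μ k ≤ 4 * jap (√μ * ‖ξ‖) := by
    rcases two_pow_le_of_dyadicPiece_ne_zero h with rfl | hk
    · linarith [Real.sqrt_le_one.2 hμ, scaledFrequency_zero μ]
    · have hle : scaledFrequency μ k ≤ √μ * (2 * ‖ξ‖) := by
        unfold scaledFrequency
        gcongr
      linarith [le_jap (√μ * ‖ξ‖)]
  rw [← Real.sqrt_eq_rpow]
  refine Real.sqrt_le_iff.2 ⟨by positivity, ?_⟩
  rwa [mul_pow, Real.sq_sqrt (by positivity), (by norm_num : (2 : ℝ) ^ 2 = 4)]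

lemma besselDyadicWeight_le_besselSymbol (hμ : μ ≤ 1) (a : ℝ) (h : dyadicPiece V k ξ ≠ 0) :
    besselDyadicWeight a μ k ≤ 2 * 4 ^ |a| * besselSymbol a μ ξ := by
  have hjap := jap_pos ‖ξ‖
  rw [besselDyadicWeight, besselSymbol]
  grw [two_pow_rpow_le_of_dyadicPiece_ne_zero a h, sqrt_one_add_scaledFrequency_le hμ h]
  exact le_of_eq (by ring)

variable [MeasurableSpace V] [BorelSpace V]

/-- The Fourier transform of `J^a J_μ^{1/2} h`. -/
def besselFourier (a μ : ℝ) (h : 𝓢(V, ℂ)) : 𝓢(V, ℂ) := smulLeftCLM ℂ (besselSymbol a μ) (𝓕 h)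

lemma besselFourier_apply (a μ : ℝ) (h : 𝓢(V, ℂ)) (ξ : V) :
    besselFourier a μ h ξ = (besselSymbol a μ ξ : ℂ) * 𝓕 h ξ := by
  rw [besselFourier, smulLeftCLM_apply_apply (hasTemperateGrowth_besselSymbol a μ),
    Complex.real_smul]

lemma norm_besselFourier (a μ : ℝ) (h : 𝓢(V, ℂ)) (ξ : V) :
    ‖besselFourier a μ h ξ‖ = besselSymbol a μ ξ * ‖𝓕 h ξ‖ := by
  rw [besselFourier_apply, norm_mul, Complex.norm_real,
    Real.norm_of_nonneg (besselSymbol_nonneg a μ ξ)]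

lemma eLpNorm_fourierInv_besselSymbol (a μ : ℝ) (h : 𝓢(V, ℂ)) :
    eLpNorm (𝓕⁻ (fun ξ => (besselSymbol a μ ξ : ℂ) * 𝓕 (⇑h) ξ)) 2 volume =
      ENNReal.ofReal √(l2Sq (besselFourier a μ h)) := by
  have hcoe : (fun ξ => (besselSymbol a μ ξ : ℂ) * 𝓕 (⇑h) ξ) = ⇑(besselFourier a μ h) := by
    ext ξ
    rw [besselFourier_apply, ← fourier_coe]
  rw [hcoe, ← fourierInv_coe, eLpNorm_two_eq, ← l2Sq_fourier,
    FourierTransform.fourier_fourierInv_eq]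

lemma sum_sq_mul_l2Sq_dyadicPiece_le_besselFourier (hμ : μ ≤ 1) {a : ℝ} {c : ℕ → ℝ}
    (hc : ∀ k, 0 ≤ c k) (hle : ∀ k, c k ≤ besselDyadicWeight a μ k) (h : 𝓢(V, ℂ)) (N : ℕ) :
    ∑ k ∈ Finset.range N, c k ^ 2 * l2Sq (multiplier (dyadicPiece V k) h) ≤
      (2 * 4 ^ |a|) ^ 2 * (annulusConst 0 2 + 1) * l2Sq (besselFourier a μ h) := by
  refine sum_sq_mul_l2Sq_dyadicPiece_le hc (fun k ξ hpiece => ?_) N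
  rw [norm_besselFourier, ← mul_assoc]
  gcongr
  exact (hle k).trans (besselDyadicWeight_le_besselSymbol hμ a hpiece)

end BesselSymbol

section SymbolGrowth

variable {V : Type*} [NormedAddCommGroup V] {s μ : ℝ}

lemma cothSymbol_mul_norm_sq_le (hμ : 0 ≤ μ) (hμ1 : μ ≤ 1) (ξ : V) :
    cothSymbol (μ * ‖ξ‖ ^ 2) ≤ (1 + ‖ξ‖) ^ 2 := by
  have hle : μ * ‖ξ‖ ^ 2 ≤ ‖ξ‖ ^ 2 := mul_le_of_le_one_left (by positivity) hμ1
  linarith [cothSymbol_le (mul_nonneg hμ (sq_nonneg ‖ξ‖)), norm_nonneg ξ, add_sq 1 ‖ξ‖]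

lemma norm_besselCothSymbol_le (hs : 0 ≤ s) (hμ : 0 ≤ μ) (hμ1 : μ ≤ 1) (ξ : V) :
    ‖(besselCothSymbol s μ ξ : ℂ)‖ ≤ 1 * (1 + ‖ξ‖) ^ (⌈s⌉₊ + 2) := by
  have hjap := jap_pos ‖ξ‖
  have hcoth := cothSymbol_nonneg (μ * ‖ξ‖ ^ 2)
  have hrpow : jap ‖ξ‖ ^ s ≤ (1 + ‖ξ‖) ^ ⌈s⌉₊ := by
    rw [← Real.rpow_natCast]
    grw [jap_le_one_add (norm_nonneg ξ)]
    exact Real.rpow_le_rpow_of_exponent_le (le_add_of_nonneg_right (norm_nonneg ξ)) (Nat.le_ceil s)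
  rw [besselCothSymbol, Complex.norm_real, Real.norm_of_nonneg (by positivity), one_mul, pow_add]
  grw [hrpow, cothSymbol_mul_norm_sq_le hμ hμ1 ξ]

lemma norm_cothSymbol_sub_one_le (hμ : 0 ≤ μ) (hμ1 : μ ≤ 1) (ξ : V) :
    ‖((cothSymbol (μ * ‖ξ‖ ^ 2) - 1 : ℝ) : ℂ)‖ ≤ 1 * (1 + ‖ξ‖) ^ 2 := by
  have hcoth := cothSymbol_nonneg (μ * ‖ξ‖ ^ 2)
  have hone : 1 ≤ (1 + ‖ξ‖) ^ 2 := one_le_pow₀ (le_add_of_nonneg_right (norm_nonneg ξ))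
  rw [Complex.norm_real, Real.norm_eq_abs, one_mul, abs_le]
  constructor <;> linarith [cothSymbol_mul_norm_sq_le hμ hμ1 ξ]

end SymbolGrowth

section SymbolCommutator

variable {V : Type*} [NormedAddCommGroup V] [InnerProductSpace ℝ V] [FiniteDimensional ℝ V]
  [MeasurableSpace V] [BorelSpace V] {b : ℕ → 𝓢(V, ℂ)} {w : V → ℂ} {W : ℕ → ℝ}
  {A B C q s μ U L : ℝ} {p : ℕ} {f g : 𝓢(V, ℂ)}

lemma sqrt_mul_sq_mul_add_le {a b : ℝ} (hL : 0 ≤ L) (hU : 0 ≤ U) (ha : 0 ≤ a) (hb : 0 ≤ b) :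
    √(L ^ 2 * a + U ^ 2 * b) ≤ L * √a + √b * U := by
  refine Real.sqrt_le_iff.2 ⟨by positivity, ?_⟩
  calc L ^ 2 * a + U ^ 2 * b = (L * √a) ^ 2 + (√b * U) ^ 2 := by
        rw [mul_pow, mul_pow, Real.sq_sqrt ha, Real.sq_sqrt hb, mul_comm b]
    _ ≤ (L * √a + √b * U) ^ 2 := by
        rw [add_sq]
        linarith [show 0 ≤ L * √a * (√b * U) by positivity]

/-- A common constant in the two dyadic energy bounds entering `eLpNorm_symbolCommutator_le`. -/
def besselEnergyConst (s : ℝ) : ℝ :=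
  ((2 * 4 ^ |s - 1|) ^ 2 + (2 * 4 ^ |s|) ^ 2) * (annulusConst 0 2 + 1)

lemma eLpNorm_symbolCommutator_le (hW : IsDyadicWeight W B q) (hK : HasDyadicKernels b W A)
    (hμ : μ ≤ 1) (hle : ∀ k, W k ≤ besselDyadicWeight s μ k)
    (hw : ∀ ξ, ‖w ξ‖ ≤ C * (1 + ‖ξ‖) ^ p) (hb : ∀ j ξ, b j ξ = w ξ * dyadicPiece V j ξ)
    (hU : 0 ≤ U) (hg : ∀ x, ‖g x‖ ≤ U) (hL : 0 ≤ L) (hf : ∀ x y, ‖f x - f y‖ ≤ L * ‖x - y‖) :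
    eLpNorm (symbolCommutator w f g) 2 volume ≤ ENNReal.ofReal
      (√(commutatorConst V (truncationConst V A) B q * besselEnergyConst s) *
        (L * √(l2Sq (besselFourier (s - 1) μ g)) + √(l2Sq (besselFourier s μ f)) * U)) := by
  have hconst : 0 ≤ commutatorConst V (truncationConst V A) B q :=
    commutatorConst_nonneg hW.ratio_lt_one.le
  have hann := annulusConst_nonneg 0 2
  have hf_nonneg := l2Sq_nonneg (besselFourier s μ f)
  have hg_nonneg := l2Sq_nonneg (besselFourier (s - 1) μ g)
  have henergy : 0 ≤ besselEnergyConst s := by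
    unfold besselEnergyConst
    positivity
  have hf_energy := sum_sq_mul_l2Sq_dyadicPiece_le_besselFourier hμ (fun k => (hW.pos k).le) hle f
  have hg_energy := sum_sq_mul_l2Sq_dyadicPiece_le_besselFourier hμ
    (c := fun k => (2 : ℝ)⁻¹ ^ k * W k) (a := s - 1)
    (fun k => mul_nonneg (by positivity) (hW.pos k).le)
    (fun k => by grw [hle k, inv_two_pow_mul_besselDyadicWeight]) g
  refine (eLpNorm_commutator_le hW hK hw hb hU hg hL hf hg_energy hf_energy).trans
    (ENNReal.ofReal_le_ofReal ?_)
  grw [← sqrt_mul_sq_mul_add_le hL hU hg_nonneg hf_nonneg, ← Real.sqrt_mul (by positivity),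
    mul_assoc (commutatorConst V _ B q), mul_add (besselEnergyConst s),
    mul_left_comm (besselEnergyConst s), mul_left_comm (besselEnergyConst s)]
  unfold besselEnergyConst
  gcongr
  · exact le_add_of_nonneg_right (sq_nonneg _)
  · exact le_add_of_nonneg_left (sq_nonneg _)

lemma fourierInv_sub_one_mul (hw : Integrable fun ξ => w ξ * 𝓕 (⇑g) ξ) (x : V) :
    𝓕⁻ (fun ξ => (w ξ - 1) * 𝓕 (⇑g) ξ) x = 𝓕⁻ (fun ξ => w ξ * 𝓕 (⇑g) ξ) x - g x := by
  have hg : Integrable (𝓕 (⇑g)) := by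
    rw [← fourier_coe]
    exact SchwartzMap.integrable _
  have hinv : 𝓕⁻ (𝓕 (⇑g)) x = g x := by
    rw [← fourier_coe, ← fourierInv_coe, FourierTransform.fourierInv_fourier_eq]
  rw [← hinv]
  simp only [Real.fourierInv_eq_fourier_neg, Real.fourier_eq, sub_mul, one_mul, smul_sub]
  exact integral_sub ((Real.fourierIntegral_convergent_iff _).2 hw)
    ((Real.fourierIntegral_convergent_iff _).2 hg)

lemma integrable_mul_fourier (hw_cont : Continuous w) (hw : ∀ ξ, ‖w ξ‖ ≤ C * (1 + ‖ξ‖) ^ p) :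
    Integrable fun ξ => w ξ * 𝓕 (⇑g) ξ := by
  rw [← fourier_coe]
  refine ((integrable_one_add_norm_pow_mul p (𝓕 g)).const_mul C).mono'
    (hw_cont.mul (SchwartzMap.continuous _)).aestronglyMeasurable (ae_of_all _ fun ξ => ?_)
  grw [norm_mul, hw, mul_assoc]

lemma symbolCommutator_sub_one (hw_cont : Continuous w)
    (hw : ∀ ξ, ‖w ξ‖ ≤ C * (1 + ‖ξ‖) ^ p) (f g : 𝓢(V, ℂ)) :
    symbolCommutator (fun ξ => w ξ - 1) f g = symbolCommutator w f g := by
  ext x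
  have hprod : (fun y => f y * g y) = ⇑(pmul f g) := rfl
  simp only [symbolCommutator, hprod]
  rw [fourierInv_sub_one_mul (integrable_mul_fourier hw_cont hw),
    fourierInv_sub_one_mul (integrable_mul_fourier hw_cont hw), pmul_apply]
  ring

omit [InnerProductSpace ℝ V] [FiniteDimensional ℝ V] [MeasurableSpace V] [BorelSpace V] in
lemma continuous_cothSymbol_mul_norm_sq (hμ : 0 ≤ μ) :
    Continuous fun ξ : V => ((cothSymbol (μ * ‖ξ‖ ^ 2) : ℝ) : ℂ) := by
  refine Complex.continuous_ofReal.comp (continuous_iff_continuousAt.2 fun ξ => ?_)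
  exact ContinuousAt.comp (f := fun ξ : V => μ * ‖ξ‖ ^ 2)
    (contDiffAt_cothSymbol (m := 0) (by positivity)).continuousAt (by fun_prop)

variable (V) in
lemma exists_eLpNorm_symbolCommutator_besselCothSymbol_le (hs : 0 ≤ s) :
    ∃ Q : ℝ, 0 ≤ Q ∧ ∀ μ, 0 < μ → μ ≤ 1 → ∀ (f g : 𝓢(V, ℂ)) (U L : ℝ), 0 ≤ U →
      (∀ x, ‖g x‖ ≤ U) → 0 ≤ L → (∀ x y, ‖f x - f y‖ ≤ L * ‖x - y‖) →
      eLpNorm (symbolCommutator (fun ξ => (besselCothSymbol s μ ξ : ℂ)) f g) 2 volume ≤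
        ENNReal.ofReal (Q * (L * √(l2Sq (besselFourier (s - 1) μ g)) +
          √(l2Sq (besselFourier s μ f)) * U)) := by
  rcases hs.eq_or_lt with rfl | hpos
  -- The dyadic weights of `T_μ^{-1/2}` have no uniform geometric growth, those of
  -- `T_μ^{-1/2} - 1` do.
  · obtain ⟨A, hA⟩ := exists_hasDyadicKernels_cothSymbol_sub_one V
    refine ⟨√(commutatorConst V (truncationConst V A) 4 √(2⁻¹) * besselEnergyConst 0),
      Real.sqrt_nonneg _, fun μ hμ hμ1 f g U L hU hg hL hf => ?_⟩
    obtain ⟨b, hb, hK⟩ := hA μ hμ hμ1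
    have hle := norm_besselCothSymbol_le (V := V) le_rfl hμ.le hμ1
    simp only [besselCothSymbol, Real.rpow_zero, one_mul] at hle ⊢
    rw [← symbolCommutator_sub_one (continuous_cothSymbol_mul_norm_sq hμ.le)
      fun ξ => (hle ξ).trans_eq (one_mul _).symm]
    simp only [← Complex.ofReal_one, ← Complex.ofReal_sub]
    exact eLpNorm_symbolCommutator_le (isDyadicWeight_remainderDyadicWeight hμ) hK hμ1
      (remainderDyadicWeight_le μ) (norm_cothSymbol_sub_one_le hμ.le hμ1) hb hU hg hL hf
  · obtain ⟨A, hA⟩ := exists_hasDyadicKernels_besselCothSymbol V s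
    refine ⟨√(commutatorConst V (truncationConst V A) (2 * 4 ^ s) ((2 : ℝ) ^ (-s)) *
      besselEnergyConst s), Real.sqrt_nonneg _, fun μ hμ hμ1 f g U L hU hg hL hf => ?_⟩
    obtain ⟨b, hb, hK⟩ := hA μ hμ hμ1
    exact eLpNorm_symbolCommutator_le (isDyadicWeight_besselDyadicWeight hpos μ) hK hμ1
      (fun _ => le_rfl) (norm_besselCothSymbol_le hs hμ.le hμ1) hb hU hg hL hf

end SymbolCommutator

section SupNorm

variable {E F : Type*} [NormedAddCommGroup F]

lemma norm_le_lpNorm_top [TopologicalSpace E] [MeasurableSpace E] [OpensMeasurableSpace E]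
    {ν : Measure E} [ν.IsOpenPosMeasure] {u : E → F} (hu : Continuous u) (hmem : MemLp u ⊤ ν)
    (x : E) : ‖u x‖ ≤ lpNorm u ⊤ ν := by
  have hdense : Dense {x | ‖u x‖ ≤ lpNorm u ⊤ ν} :=
    Measure.dense_of_ae (ae_le_lpNorm_exponent_top hmem)
  exact (isClosed_le hu.norm continuous_const).closure_subset (hdense x)

variable [NormedAddCommGroup E] [NormedSpace ℝ E] [NormedSpace ℝ F] [MeasurableSpace E]
  [BorelSpace E] [SecondCountableTopology E] {ν : Measure E}

lemma memLp_top_fderiv (f : 𝓢(E, F)) : MemLp (fderiv ℝ (⇑f)) ⊤ ν :=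
  (SchwartzMap.fderivCLM ℝ E F f).memLp_top ν

lemma norm_sub_le_lpNorm_fderiv_mul [ν.IsOpenPosMeasure] (f : 𝓢(E, F)) (x y : E) :
    ‖f x - f y‖ ≤ lpNorm (fderiv ℝ (⇑f)) ⊤ ν * ‖x - y‖ :=
  Convex.norm_image_sub_le_of_norm_fderiv_le (s := Set.univ) (fun _ _ => f.differentiableAt)
    (fun z _ =>
      norm_le_lpNorm_top (SchwartzMap.fderivCLM ℝ E F f).continuous (memLp_top_fderiv f) z)
    convex_univ (Set.mem_univ y) (Set.mem_univ x)

end SupNorm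

lemma JTinv_eq {d : ℕ} {μ : ℝ} (hμ : 0 < μ) (s : ℝ) (u : EuclideanSpace ℝ (Fin d) → ℂ) :
    JTinv d μ s u = 𝓕⁻ (fun ξ => (besselCothSymbol s μ ξ : ℂ) * 𝓕 u ξ) := by
  simp only [JTinv, fmulD, besselCothSymbol, Tsymb_rpow_neg_half hμ (norm_nonneg _)]

lemma eLpNorm_JJmu {d : ℕ} (μ a : ℝ) (h : 𝓢(EuclideanSpace ℝ (Fin d), ℂ)) :
    eLpNorm (JJmu d μ a ((1 : ℝ) / 2) (⇑h)) 2 volume =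
      ENNReal.ofReal √(l2Sq (besselFourier a μ h)) :=
  eLpNorm_fourierInv_besselSymbol a μ h

end KatoPonce

theorem commutator_JTinv_general (d : ℕ) (s : ℝ) (hs : 0 ≤ s) :
    ∃ C : ℝ, 0 < C ∧
      ∀ μ : ℝ, 0 < μ → μ ≤ 1 →
        ∀ f g : 𝓢(EuclideanSpace ℝ (Fin d), ℂ),
          eLpNorm
              (fun x => JTinv d μ s (fun y => f y * g y) x - f x * JTinv d μ s (⇑g) x)
              2 volume
            ≤ ENNReal.ofReal C *
              (eLpNorm (fun x => ‖fderiv ℝ (⇑f) x‖) ⊤ volume *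
                  eLpNorm (JJmu d μ (s - 1) ((1 : ℝ) / 2) (⇑g)) 2 volume +
                eLpNorm (JJmu d μ s ((1 : ℝ) / 2) (⇑f)) 2 volume *
                  eLpNorm (⇑g) ⊤ volume) := by
  obtain ⟨Q, hQ, hcomm⟩ :=
    KatoPonce.exists_eLpNorm_symbolCommutator_besselCothSymbol_le (EuclideanSpace ℝ (Fin d)) hs
  refine ⟨Q + 1, by positivity, fun μ hμ hμ1 f g => ?_⟩
  have hL : 0 ≤ lpNorm (fderiv ℝ f) ⊤ (volume : Measure (EuclideanSpace ℝ (Fin d))) := lpNorm_nonneg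
  have hU : 0 ≤ lpNorm g ⊤ (volume : Measure (EuclideanSpace ℝ (Fin d))) := lpNorm_nonneg
  have hbound := hcomm μ hμ hμ1 f g _ _ hU
    (KatoPonce.norm_le_lpNorm_top g.continuous (g.memLp_top volume)) hL
    (KatoPonce.norm_sub_le_lpNorm_fderiv_mul f)
  rw [KatoPonce.JTinv_eq hμ, KatoPonce.JTinv_eq hμ, KatoPonce.eLpNorm_JJmu,
    KatoPonce.eLpNorm_JJmu, eLpNorm_norm, ← ofReal_lpNorm (KatoPonce.memLp_top_fderiv f),
    ← ofReal_lpNorm (g.memLp_top volume), ← ENNReal.ofReal_mul hL,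
    ← ENNReal.ofReal_mul (Real.sqrt_nonneg _), ← ENNReal.ofReal_add (by positivity) (by positivity),
    ← ENNReal.ofReal_mul (by positivity)]
  exact hbound.trans (ENNReal.ofReal_le_ofReal (by gcongr; linarith))

/-- Commutator estimate (Lemma 5.6): for `d ∈ {1,2}`, `s ≥ 0`, there is
`C = C(s,d)`, independent of `μ ∈ (0,1]`, such that for Schwartz `f, g`,
`‖[J^s T_μ^{−1/2}(D), f] g‖_{L²} ≤ C (‖∇f‖_{L^∞} ‖J^{s−1} J_μ^{1/2} g‖_{L²}
+ ‖J^s J_μ^{1/2} f‖_{L²} ‖g‖_{L^∞})`. -/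
theorem commutator_JTinv (d : ℕ) (hd : d = 1 ∨ d = 2) (s : ℝ) (hs : 0 ≤ s) :
    ∃ C : ℝ, 0 < C ∧
      ∀ μ : ℝ, 0 < μ → μ ≤ 1 →
        ∀ f g : 𝓢(EuclideanSpace ℝ (Fin d), ℂ),
          eLpNorm
              (fun x => JTinv d μ s (fun y => f y * g y) x - f x * JTinv d μ s (⇑g) x)
              2 volume
            ≤ ENNReal.ofReal C *
              (eLpNorm (fun x => ‖fderiv ℝ (⇑f) x‖) ⊤ volume *
                  eLpNorm (JJmu d μ (s - 1) ((1 : ℝ) / 2) (⇑g)) 2 volume +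
                eLpNorm (JJmu d μ s ((1 : ℝ) / 2) (⇑f)) 2 volume *
                  eLpNorm (⇑g) ⊤ volume) :=
  commutator_JTinv_general d s hs
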